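/- arXiv:2506.08926 — 6 statements merged into one kernel-verified Lean document; each statement's English description precedes it below -/
import Mathlib

section
/- For every positive integer r there exists a positive integer k = k(r) such that the following holds: if G is a finite simple graph such that for every nonempty subset A ⊆ V(G) the number of distinct sets of the form N(v) ∩ A with v ∈ V(G) is at most r·|A|, then G admits a (not necessarily proper) vertex coloring with k colors such that every vertex with at least one neighbor has some color appearing an odd number of times on its open neighborhood; that is, χ_io(G) ≤ k. -/
/-- `G` has neighborhood complexity at most `r * m`: for every nonempty subset `A` of the
vertex set, the number of distinct sets of the form `N(v) ∩ A` is at most `r * |A|`. -/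
def NbhdComplexityLinear {V : Type} [Fintype V] [DecidableEq V]
    (G : SimpleGraph V) [DecidableRel G.Adj] (r : ℕ) : Prop :=
  ∀ A : Finset V, A.Nonempty →
    (Finset.univ.image (fun v => G.neighborFinset v ∩ A)).card ≤ r * A.card

open Finset in
/-- Density bound for the one-inclusion graph. -/
lemma edge_density {β : Type} [DecidableEq β] (U : Finset β) :
    ∀ (d : ℕ) (F : Finset (Finset β)), (∀ S ∈ F, S ⊆ U) →
      (∀ s, F.Shatters s → s.card ≤ d) →
      ∑ a ∈ U, (F.filter (fun S => a ∉ S ∧ insert a S ∈ F)).card ≤ d * F.card := by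
  induction U using Finset.induction_on with
  | empty => intro d F _ _; simp
  | insert a U haU ih =>
    intro d F hF hd
    set M := F.memberSubfamily a with hM
    set N := F.nonMemberSubfamily a with hN
    have hMU : ∀ S ∈ M, S ⊆ U := by
      intro S hS b hb
      rw [hM, mem_memberSubfamily] at hS
      have := hF _ hS.1 (mem_insert_of_mem hb)
      rw [mem_insert] at this
      rcases this with rfl | h
      · exact absurd hb hS.2
      · exact h
    have hNU : ∀ S ∈ N, S ⊆ U := by
      intro S hS b hb
      rw [hN, mem_nonMemberSubfamily] at hS
      have := hF _ hS.1 hb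
      rw [mem_insert] at this
      rcases this with rfl | h
      · exact absurd hb hS.2
      · exact h
    have hcard : M.card + N.card = F.card := card_memberSubfamily_add_card_nonMemberSubfamily a F
    have hui : (M ∪ N).card + (M ∩ N).card = M.card + N.card := card_union_add_card_inter M N
    have hshU : ∀ s, (M ∪ N).Shatters s → s.card ≤ d := by
      intro s hs
      have has : a ∉ s := by
        intro has
        obtain ⟨u, hu, hsu⟩ := hs (Subset.refl s)
        have : a ∈ u := by
          have : a ∈ s ∩ u := by rw [hsu]; exact has
          exact (mem_inter.1 this).2
        rcases mem_union.1 hu with h | h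
        · exact haU (hMU _ h this)
        · exact haU (hNU _ h this)
      apply hd
      intro t ht
      obtain ⟨u, hu, hsu⟩ := hs ht
      rcases mem_union.1 hu with h | h
      · rw [hM, mem_memberSubfamily] at h
        refine ⟨insert a u, h.1, ?_⟩
        rw [inter_insert_of_notMem has, hsu]
      · rw [hN, mem_nonMemberSubfamily] at h
        exact ⟨u, h.1, hsu⟩
    have hshI : ∀ s, (M ∩ N).Shatters s → s.card + 1 ≤ d := by
      intro s hs
      have has : a ∉ s := by
        intro has
        obtain ⟨u, hu, hsu⟩ := hs (Subset.refl s)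
        have : a ∈ u := by
          have : a ∈ s ∩ u := by rw [hsu]; exact has
          exact (mem_inter.1 this).2
        exact haU (hMU _ (mem_inter.1 hu).1 this)
      rw [← card_insert_of_notMem has]
      apply hd
      intro t ht
      have hte : t.erase a ⊆ s := by
        intro b hb
        rw [mem_erase] at hb
        exact (mem_insert.1 (ht hb.2)).resolve_left hb.1
      obtain ⟨u, hu, hsu⟩ := hs hte
      rw [mem_inter, hM, hN, mem_memberSubfamily, mem_nonMemberSubfamily] at hu
      by_cases hat : a ∈ t
      · refine ⟨insert a u, hu.1.1, ?_⟩
        rw [← insert_inter_distrib, hsu, insert_erase hat]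
      · refine ⟨u, hu.2.1, ?_⟩
        rw [insert_inter_of_notMem hu.1.2, hsu, erase_eq_of_notMem hat]
    have h1 := ih d (M ∪ N) (by
      intro S hS
      rcases mem_union.1 hS with h | h
      · exact hMU _ h
      · exact hNU _ h) hshU
    have h2 : ∑ b ∈ U, ((M ∩ N).filter (fun S => b ∉ S ∧ insert b S ∈ M ∩ N)).card
        + (M ∩ N).card ≤ d * (M ∩ N).card := by
      rcases (M ∩ N).eq_empty_or_nonempty with h | h
      · rw [h]; simp
      · have h0 : (M ∩ N).Shatters ∅ := by
          intro t ht
          obtain ⟨u, hu⟩ := h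
          exact ⟨u, hu, by rw [subset_empty.1 ht]; simp⟩
        have hd1 := hshI _ h0
        obtain ⟨e, rfl⟩ : ∃ e, d = e + 1 := ⟨d - 1, by simp at hd1; omega⟩
        have := ih e (M ∩ N) (fun S hS => hMU _ (mem_inter.1 hS).1)
          (fun s hs => by have := hshI s hs; omega)
        linarith
    rw [sum_insert haU]
    have h3 : (F.filter (fun S => a ∉ S ∧ insert a S ∈ F)).card = (M ∩ N).card := by
      congr 1
      ext S
      simp only [hM, hN, mem_filter, mem_inter, mem_memberSubfamily, mem_nonMemberSubfamily]
      tauto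
    have h4 : ∀ b ∈ U, (F.filter (fun S => b ∉ S ∧ insert b S ∈ F)).card ≤
        ((M ∪ N).filter (fun S => b ∉ S ∧ insert b S ∈ M ∪ N)).card +
        ((M ∩ N).filter (fun S => b ∉ S ∧ insert b S ∈ M ∩ N)).card := by
      intro b hb
      have hba : b ≠ a := fun h => haU (h ▸ hb)
      have e1 : (F.filter (fun S => b ∉ S ∧ insert b S ∈ F)).card =
          (M.filter (fun S => b ∉ S ∧ insert b S ∈ M)).card +
          (N.filter (fun S => b ∉ S ∧ insert b S ∈ N)).card := by
        rw [← card_memberSubfamily_add_card_nonMemberSubfamily a]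
        congr 2
        · ext S
          simp only [hM, mem_filter, mem_memberSubfamily, mem_insert, insert_comm b a,
            hba, hba.symm, false_or]
          tauto
        · ext S
          simp only [hN, mem_filter, mem_nonMemberSubfamily, mem_insert,
            hba, hba.symm, false_or]
          tauto
      rw [e1, ← card_union_add_card_inter]
      apply Nat.add_le_add <;> apply card_le_card
      · intro S; simp only [mem_union, mem_filter]; tauto
      · intro S; simp only [mem_inter, mem_filter]; tauto
    have h5 := sum_le_sum h4
    rw [sum_add_distrib] at h5
    rw [h3, ← hcard, ← hui, mul_add]
    linarith

lemma sum_range_ite_lt (n K : ℕ) (h : n ≤ K) :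
    ∑ t ∈ Finset.range K, (if t < n then 1 else 0) = n := by
  rw [← Finset.card_filter]
  have : (Finset.range K).filter (fun t => t < n) = Finset.range n := by
    ext t; simp; omega
  rw [this, Finset.card_range]

open Finset in
lemma weighted_density {β : Type} [DecidableEq β] (U : Finset β) (d : ℕ)
    (w : Finset β → ℕ)
    (hd : ∀ s, (U.powerset.filter (fun S => 0 < w S)).Shatters s → s.card ≤ d) :
    ∑ a ∈ U, ∑ S ∈ (U.erase a).powerset, min (w S) (w (insert a S)) ≤
      d * ∑ S ∈ U.powerset, w S := by
  set K := ∑ S ∈ U.powerset, w S with hK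
  have hwK : ∀ S ∈ U.powerset, w S ≤ K := fun S hS =>
    single_le_sum (f := w) (fun _ _ => Nat.zero_le _) hS
  let F : ℕ → Finset (Finset β) := fun t => U.powerset.filter (fun S => t < w S)
  have key : ∀ t ∈ range K, ∑ a ∈ U, ((F t).filter (fun S => a ∉ S ∧ insert a S ∈ F t)).card
      ≤ d * (F t).card := by
    intro t _
    apply edge_density
    · intro S hS
      exact mem_powerset.1 (mem_filter.1 hS).1
    · intro s hs
      apply hd
      apply hs.mono_left
      intro S hS
      simp only [F, mem_filter] at hS ⊢
      exact ⟨hS.1, by omega⟩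
  have h := sum_le_sum key
  rw [← mul_sum] at h
  have e1 : ∑ t ∈ range K, (F t).card = K := by
    simp only [F, card_filter]
    rw [sum_comm]
    conv_rhs => rw [hK]
    apply sum_congr rfl
    intro S hS
    exact sum_range_ite_lt _ _ (hwK S hS)
  rw [e1] at h
  refine le_trans (le_of_eq ?_) h
  rw [sum_comm]
  apply sum_congr rfl
  intro a ha
  have e2 : ∀ t, (F t).filter (fun S => a ∉ S ∧ insert a S ∈ F t) =
      (U.erase a).powerset.filter (fun S => t < min (w S) (w (insert a S))) := by
    intro t
    ext S
    simp only [F, mem_filter, mem_powerset, subset_erase, lt_min_iff, insert_subset_iff]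
    tauto
  simp only [e2, card_filter]
  rw [sum_comm]
  apply sum_congr rfl
  intro S hS
  rw [sum_range_ite_lt]
  refine le_trans (min_le_left _ _) (hwK S ?_)
  rw [mem_powerset] at hS ⊢
  exact hS.trans (erase_subset _ _)

open Finset in
/-- Loss function in the packing argument. -/
def lossFn {α β : Type} [DecidableEq β] (A : Finset α) (N : α → Finset β)
    (B : Finset β) (y : β) : ℕ :=
  ∑ T ∈ B.powerset, min (A.filter (fun x => N x ∩ B = T ∧ y ∉ N x)).card
    (A.filter (fun x => N x ∩ B = T ∧ y ∈ N x)).card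

open Finset in
lemma loss_upper {α β : Type} [DecidableEq β] (A : Finset α) (N : α → Finset β)
    (U : Finset β) (r : ℕ)
    (hsh : ∀ B ⊆ U, B.Nonempty → (A.image (fun x => N x ∩ B)).card ≤ r * B.card) :
    ∑ y ∈ U, lossFn A N (U.erase y) y ≤ 2 * r * A.card := by
  let w : Finset β → ℕ := fun T => (A.filter (fun x => N x ∩ U = T)).card
  have hw : ∑ S ∈ U.powerset, w S = A.card := by
    rw [card_eq_sum_card_fiberwise (f := fun x => N x ∩ U) (t := U.powerset)]
    intro x _
    simp
  rw [← hw]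
  refine le_trans (le_of_eq ?_) (weighted_density U (2 * r) w ?_)
  · apply sum_congr rfl
    intro y hy
    unfold lossFn
    apply sum_congr rfl
    intro T hT
    rw [mem_powerset, subset_erase] at hT
    simp only [w]
    congr 2
    · apply filter_congr
      intro x _
      constructor
      · rintro ⟨rfl, h⟩
        ext b; simp only [mem_inter, mem_erase]
        constructor
        · rintro ⟨h1, h2⟩; exact ⟨h1, fun e => h (e ▸ h1), h2⟩
        · tauto
      · intro h
        have hy' : y ∉ N x := fun h' => hT.2 (h ▸ mem_inter.2 ⟨h', hy⟩)
        refine ⟨?_, hy'⟩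
        rw [← h]
        ext b; simp only [mem_inter, mem_erase]
        constructor
        · tauto
        · rintro ⟨h1, h2⟩; exact ⟨h1, fun e => hy' (e ▸ h1), h2⟩
    · apply filter_congr
      intro x _
      constructor
      · rintro ⟨h, hx⟩
        rw [← h, ← inter_insert_of_mem hx, insert_erase hy]
      · intro h
        have hx : y ∈ N x := by
          have : y ∈ N x ∩ U := by rw [h]; exact mem_insert_self _ _
          exact (mem_inter.1 this).1
        refine ⟨?_, hx⟩
        rw [inter_erase, h, erase_insert hT.2]
  · intro s hs
    rcases s.eq_empty_or_nonempty with rfl | hne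
    · simp
    have hsU : s ⊆ U := by
      obtain ⟨u, hu, hsu⟩ := hs (Subset.refl s)
      have h1 := mem_powerset.1 (mem_filter.1 hu).1
      exact (inter_eq_left.1 hsu).trans h1
    have h1 := hsh s hsU hne
    have h2 : s.powerset ⊆ A.image (fun x => N x ∩ s) := by
      intro t ht
      obtain ⟨u, hu, hsu⟩ := hs (mem_powerset.1 ht)
      have h3 := (mem_filter.1 hu).2
      obtain ⟨x, hx⟩ := card_pos.1 h3
      rw [mem_filter] at hx
      refine mem_image.2 ⟨x, hx.1, ?_⟩
      rw [← hsu, ← hx.2]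
      ext b; simp only [mem_inter]
      constructor
      · rintro ⟨h, h'⟩; exact ⟨h', h, hsU h'⟩
      · tauto
    have h4 := card_le_card h2
    rw [card_powerset] at h4
    by_contra hcon
    push Not at hcon
    have h5 : s.card.choose 2 < 2 ^ s.card := by
      have h6 := Nat.sum_range_choose s.card
      have h7 : ∑ m ∈ ({0, 2} : Finset ℕ), s.card.choose m ≤
          ∑ m ∈ range (s.card + 1), s.card.choose m := by
        apply sum_le_sum_of_subset
        have := card_pos.2 hne
        intro m hm
        simp at hm ⊢
        rcases hm with rfl | rfl
        · omega
        · by_contra h'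
          have : s.card = 1 := by omega
          have : r = 0 := by omega
          subst this
          simp at h1
          exact hne.ne_empty (by
            have := h1
            have h8 := h2
            rw [this] at h8
            have := h8 (empty_mem_powerset s)
            simp at this)
      simp at h7
      rw [← h6]; omega
    rw [Nat.choose_two_right] at h5
    have h8 : r * s.card ≤ s.card * (s.card - 1) / 2 := by
      rw [Nat.le_div_iff_mul_le (by norm_num)]
      have : 2 * r ≤ s.card - 1 := by omega
      calc r * s.card * 2 = s.card * (2 * r) := by ring
        _ ≤ _ := Nat.mul_le_mul_left _ this
    omega

open Finset in
lemma class_lower {α β : Type} [DecidableEq α] [DecidableEq β] (P : Finset α) (N : α → Finset β)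
    (Q : Finset β) (δ : ℕ) (hP : P.Nonempty)
    (hsep : ∀ x ∈ P, ∀ x' ∈ P, x ≠ x' → δ ≤ (symmDiff (N x) (N x') ∩ Q).card) :
    δ * P.card ≤ 2 * ∑ y ∈ Q, min (P.filter (fun x => y ∉ N x)).card
      (P.filter (fun x => y ∈ N x)).card + δ := by
  have hpos := card_pos.2 hP
  have low : P.card * ((P.card - 1) * δ) ≤
      ∑ x ∈ P, ∑ x' ∈ P, (symmDiff (N x) (N x') ∩ Q).card := by
    rw [← smul_eq_mul]
    apply card_nsmul_le_sum
    intro x hx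
    rw [← card_erase_of_mem hx, ← smul_eq_mul]
    refine le_trans (card_nsmul_le_sum _ (fun x' => (symmDiff (N x) (N x') ∩ Q).card) _ ?_)
      (sum_le_sum_of_subset (erase_subset x P))
    intro x' hx'
    rw [mem_erase] at hx'
    exact hsep x hx x' hx'.2 hx'.1.symm
  have up : ∑ x ∈ P, ∑ x' ∈ P, (symmDiff (N x) (N x') ∩ Q).card ≤
      ∑ y ∈ Q, 2 * (min (P.filter (fun x => y ∉ N x)).card
        (P.filter (fun x => y ∈ N x)).card * P.card) := by
    have e : ∀ x x', (symmDiff (N x) (N x') ∩ Q).card =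
        ∑ y ∈ Q, if y ∈ symmDiff (N x) (N x') then 1 else 0 := by
      intro x x'
      rw [← card_filter, inter_comm, filter_mem_eq_inter]
    simp only [e]
    have e' : ∀ x, ∑ x' ∈ P, ∑ y ∈ Q, (if y ∈ symmDiff (N x) (N x') then 1 else 0) =
        ∑ y ∈ Q, ∑ x' ∈ P, (if y ∈ symmDiff (N x) (N x') then 1 else 0) := fun x => sum_comm
    simp only [e']
    rw [sum_comm]
    apply sum_le_sum
    intro y _
    have e2 : ∑ x ∈ P, ∑ x' ∈ P, (if y ∈ symmDiff (N x) (N x') then 1 else 0) =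
        ∑ x ∈ P, (if y ∈ N x then (P.filter (fun x => y ∉ N x)).card
          else (P.filter (fun x => y ∈ N x)).card) := by
      apply sum_congr rfl
      intro x _
      rw [← card_filter]
      split_ifs with h
      · congr 1; apply filter_congr; intro x' _; rw [mem_symmDiff]; tauto
      · congr 1; apply filter_congr; intro x' _; rw [mem_symmDiff]; tauto
    rw [e2, sum_ite, sum_const, sum_const, smul_eq_mul, smul_eq_mul]
    have e3 := card_filter_add_card_filter_not (s := P) (fun x => y ∈ N x)
    set p := (P.filter (fun x => y ∈ N x)).card
    set q := (P.filter (fun x => y ∉ N x)).card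
    rw [← e3]
    rcases le_total q p with h | h
    · rw [min_eq_left h]; nlinarith [Nat.zero_le (q * q)]
    · rw [min_eq_right h]; nlinarith [Nat.zero_le (p * p)]
  have h := low.trans up
  rw [← mul_sum, ← sum_mul] at h
  set X := ∑ y ∈ Q, min (P.filter (fun x => y ∉ N x)).card (P.filter (fun x => y ∈ N x)).card
  obtain ⟨w, hw⟩ : ∃ w, P.card = w + 1 := ⟨P.card - 1, by omega⟩
  rw [hw] at h ⊢
  simp only [Nat.add_sub_cancel] at h
  have : w * δ ≤ 2 * X := by
    apply Nat.le_of_mul_le_mul_left _ (Nat.succ_pos w)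
    calc _ ≤ _ := h
      _ = _ := by simp only [Nat.succ_eq_add_one]; ring
  linarith

open Finset in
lemma loss_lower {α β : Type} [DecidableEq α] [DecidableEq β] (A : Finset α) (N : α → Finset β)
    (R B : Finset β) (δ : ℕ)
    (hsep : ∀ x ∈ A, ∀ x' ∈ A, x ≠ x' → δ ≤ (symmDiff (N x) (N x') ∩ R).card) :
    δ * A.card ≤ 2 * ∑ y ∈ R \ B, lossFn A N B y + δ * (A.image (fun x => N x ∩ B)).card := by
  set I := A.image (fun x => N x ∩ B) with hI
  have hIB : I ⊆ B.powerset := by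
    intro T hT
    obtain ⟨x, _, rfl⟩ := mem_image.1 hT
    simp
  have e1 : A.card = ∑ T ∈ I, (A.filter (fun x => N x ∩ B = T)).card :=
    card_eq_sum_card_fiberwise (fun x hx => mem_image_of_mem _ hx)
  have h1 : ∑ T ∈ I, ∑ y ∈ R \ B, min (A.filter (fun x => N x ∩ B = T ∧ y ∉ N x)).card
      (A.filter (fun x => N x ∩ B = T ∧ y ∈ N x)).card ≤ ∑ y ∈ R \ B, lossFn A N B y := by
    rw [sum_comm]
    apply sum_le_sum
    intro y _
    exact sum_le_sum_of_subset hIB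
  have h2 : ∀ T ∈ I, δ * (A.filter (fun x => N x ∩ B = T)).card ≤
      2 * ∑ y ∈ R \ B, min (A.filter (fun x => N x ∩ B = T ∧ y ∉ N x)).card
      (A.filter (fun x => N x ∩ B = T ∧ y ∈ N x)).card + δ := by
    intro T hT
    simp only [← filter_filter]
    apply class_lower
    · obtain ⟨x, hx, rfl⟩ := mem_image.1 hT
      exact ⟨x, mem_filter.2 ⟨hx, rfl⟩⟩
    · intro x hx x' hx' hne
      rw [mem_filter] at hx hx'
      refine le_trans (hsep x hx.1 x' hx'.1 hne) (card_le_card ?_)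
      intro y hy
      rw [mem_inter] at hy ⊢
      refine ⟨hy.1, mem_sdiff.2 ⟨hy.2, fun hyB => ?_⟩⟩
      have : y ∈ N x ∩ B ↔ y ∈ N x' ∩ B := by rw [hx.2, hx'.2]
      rw [mem_inter, mem_inter] at this
      have h3 := hy.1
      rw [mem_symmDiff] at h3
      tauto
  have h3 := sum_le_sum h2
  rw [← mul_sum, ← e1, sum_add_distrib, ← mul_sum, sum_const, smul_eq_mul] at h3
  rw [mul_comm δ I.card]
  omega

open Finset in
lemma double_count {β : Type} [DecidableEq β] (R : Finset β) (s : ℕ)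
    (g : Finset β → β → ℕ) :
    ∑ B ∈ R.powersetCard s, ∑ y ∈ R \ B, g B y =
      ∑ U ∈ R.powersetCard (s + 1), ∑ y ∈ U, g (U.erase y) y := by
  rw [sum_sigma', sum_sigma']
  refine sum_bij' (fun p _ => ⟨insert p.2 p.1, p.2⟩) (fun p _ => ⟨p.1.erase p.2, p.2⟩) ?_ ?_ ?_ ?_ ?_
  · rintro ⟨B, y⟩ h
    simp only [mem_sigma, mem_powersetCard, mem_sdiff] at h ⊢
    refine ⟨⟨insert_subset h.2.1 h.1.1, ?_⟩, mem_insert_self _ _⟩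
    rw [card_insert_of_notMem h.2.2, h.1.2]
  · rintro ⟨U, y⟩ h
    simp only [mem_sigma, mem_powersetCard, mem_sdiff] at h ⊢
    refine ⟨⟨(erase_subset _ _).trans h.1.1, ?_⟩, h.1.1 h.2, notMem_erase _ _⟩
    rw [card_erase_of_mem h.2, h.1.2, Nat.add_sub_cancel]
  · rintro ⟨B, y⟩ h
    simp only [mem_sigma, mem_powersetCard, mem_sdiff] at h
    simp [erase_insert h.2.2]
  · rintro ⟨U, y⟩ h
    simp only [mem_sigma, mem_powersetCard] at h
    simp [insert_erase h.2]
  · rintro ⟨B, y⟩ h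
    simp only [mem_sigma, mem_powersetCard, mem_sdiff] at h
    simp [erase_insert h.2.2]

open Finset in
lemma near_twins {α β : Type} [DecidableEq α] [DecidableEq β] (A : Finset α) (N : α → Finset β)
    (R : Finset β) (r : ℕ) (hr : 0 < r) (hm : R.card ≤ r * A.card) (h2 : 2 ≤ A.card)
    (hsh : ∀ B ⊆ R, B.Nonempty → (A.image (fun x => N x ∩ B)).card ≤ r * B.card) :
    ∃ x ∈ A, ∃ y ∈ A, x ≠ y ∧ (symmDiff (N x) (N y) ∩ R).card ≤ 16 * r ^ 3 := by
  by_contra hcon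
  push Not at hcon
  have hsep : ∀ x ∈ A, ∀ x' ∈ A, x ≠ x' →
      16 * r ^ 3 + 1 ≤ (symmDiff (N x) (N x') ∩ R).card := hcon
  set δ := 16 * r ^ 3 + 1 with hδ
  obtain ⟨a, ha, b, hb, hab⟩ := one_lt_card.1 h2
  have hab' := hsep a ha b hb hab
  have hδR : δ ≤ R.card := hab'.trans (card_le_card inter_subset_right)
  have hRne : R.Nonempty := card_pos.1 (by omega)
  set n := A.card with hn
  set m := R.card with hmdef
  have hbig : 2 * r ≤ n := by
    by_contra h
    push Not at h
    have h1 : m ≤ r * (2 * r) := hm.trans (Nat.mul_le_mul_left _ h.le)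
    have h3 : r ^ 2 ≤ r ^ 3 := Nat.pow_le_pow_right hr (by norm_num)
    nlinarith
  have hnm : n ≤ r * m := by
    have := hsh R (Subset.refl _) hRne
    rwa [card_image_of_injOn] at this
    intro x hx x' hx' he
    by_contra hne
    have h1 := hsep x hx x' hx' hne
    have h3 : symmDiff (N x) (N x') ∩ R = ∅ := by
      ext y
      have : y ∈ N x ∩ R ↔ y ∈ N x' ∩ R := by
        simp only at he
        rw [he]
      simp only [mem_inter] at this
      simp only [mem_inter, mem_symmDiff, notMem_empty, iff_false]
      tauto
    rw [h3] at h1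
    simp at h1
  obtain ⟨s, hs⟩ : ∃ s, s = n / (2 * r) := ⟨_, rfl⟩
  have hs1 : 1 ≤ s := by
    rw [hs, Nat.one_le_div_iff (by omega)]; exact hbig
  have hs2 : 2 * r * s ≤ n := by rw [hs]; exact Nat.mul_div_le _ _
  have hs3 : n < 2 * r * (s + 1) := by
    rw [hs]; exact Nat.lt_mul_div_succ n (by omega)
  have hsm : s ≤ m := by
    have : r * s ≤ r * m := by nlinarith
    exact Nat.le_of_mul_le_mul_left this hr
  have up : ∑ U ∈ R.powersetCard (s + 1), ∑ y ∈ U, lossFn A N (U.erase y) y ≤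
      m.choose (s + 1) * (2 * r * n) := by
    rw [← card_powersetCard, ← smul_eq_mul]
    apply sum_le_card_nsmul
    intro U hU
    apply loss_upper
    intro B hB hne
    exact hsh B (hB.trans (mem_powersetCard.1 hU).1) hne
  have low : m.choose s * (δ * n) ≤
      2 * ∑ B ∈ R.powersetCard s, ∑ y ∈ R \ B, lossFn A N B y + m.choose s * (δ * (r * s)) := by
    have h : ∀ B ∈ R.powersetCard s, δ * n ≤
        2 * ∑ y ∈ R \ B, lossFn A N B y + δ * (r * s) := by
      intro B hB
      rw [mem_powersetCard] at hB
      have h1 := loss_lower A N R B δ hsep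
      have h3 := hsh B hB.1 (card_pos.1 (by omega))
      rw [hB.2] at h3
      have := Nat.mul_le_mul_left δ h3
      rw [← hn] at h1
      linarith
    have h' := sum_le_sum h
    rw [sum_const, sum_add_distrib, sum_const, ← mul_sum, card_powersetCard,
      smul_eq_mul, smul_eq_mul] at h'
    exact h'
  rw [double_count] at low
  have hch := Nat.choose_succ_right_eq m s
  have hc : 0 < m.choose s := Nat.choose_pos hsm
  set c := m.choose s
  have h4 : c * (δ * n) ≤ 2 * (m.choose (s + 1) * (2 * r * n)) + c * (δ * (r * s)) := by omega
  have h5 : (s + 1) * (δ * n) ≤ 4 * r * n * (m - s) + (s + 1) * (δ * (r * s)) := by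
    apply Nat.le_of_mul_le_mul_left _ hc
    calc c * ((s + 1) * (δ * n)) = (s + 1) * (c * (δ * n)) := by ring
      _ ≤ (s + 1) * (2 * (m.choose (s + 1) * (2 * r * n)) + c * (δ * (r * s))) :=
        Nat.mul_le_mul_left _ h4
      _ = 4 * r * n * (m.choose (s + 1) * (s + 1)) + c * ((s + 1) * (δ * (r * s))) := by ring
      _ = _ := by rw [hch]; ring
  have h6 : 4 * r * n * (m - s) ≤ 4 * r * n * (r * n) :=
    Nat.mul_le_mul_left _ ((Nat.sub_le _ _).trans hm)
  have h7 : (s + 1) * δ * n ≤ 8 * r * n * (r * n) := by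
    have : (s + 1) * δ * (2 * r * s) ≤ (s + 1) * δ * n := Nat.mul_le_mul_left _ hs2
    nlinarith
  have hnpos : 0 < n := by omega
  have h8 : (s + 1) * δ ≤ 8 * r ^ 2 * n := by
    apply Nat.le_of_mul_le_mul_right _ hnpos
    calc _ ≤ _ := h7
      _ = _ := by ring
  have h9 : n * δ ≤ n * (16 * r ^ 3) := by
    calc n * δ ≤ 2 * r * (s + 1) * δ := Nat.mul_le_mul_right _ hs3.le
      _ = 2 * r * ((s + 1) * δ) := by ring
      _ ≤ 2 * r * (8 * r ^ 2 * n) := Nat.mul_le_mul_left _ h8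
      _ = _ := by ring
  have := Nat.le_of_mul_le_mul_left h9 hnpos
  omega

open Finset in
lemma exists_labels {V : Type} [Fintype V] [DecidableEq V] (G : SimpleGraph V)
    [DecidableRel G.Adj] (r : ℕ) (hr : 0 < r) (hG : NbhdComplexityLinear G r)
    {W : Type} [AddCommGroup W] [Fintype W] [DecidableEq W] (hW : ∀ z : W, z + z = 0)
    (hcard : 16 * r ^ 3 < Fintype.card W) :
    ∀ (n : ℕ) (A : Finset V), A.card = n → ∃ f : V → W, ∀ v : V,
      (G.neighborFinset v ∩ A).Nonempty → ∑ u ∈ G.neighborFinset v ∩ A, f u ≠ 0 := by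
  intro n
  induction n with
  | zero =>
    intro A hA
    refine ⟨fun _ => 0, fun v hv => ?_⟩
    rw [card_eq_zero.1 hA] at hv
    simp at hv
  | succ n ih =>
    intro A hA
    rcases Nat.eq_zero_or_pos n with rfl | hn
    · have h1 : 1 < Fintype.card W := by
        have : 0 < r ^ 3 := by positivity
        omega
      haveI : Nontrivial W := Fintype.one_lt_card_iff_nontrivial.1 h1
      obtain ⟨z, hz⟩ := exists_ne (0 : W)
      obtain ⟨a, rfl⟩ := card_eq_one.1 hA
      refine ⟨fun _ => z, fun v hv => ?_⟩
      have : G.neighborFinset v ∩ {a} = {a} := by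
        obtain ⟨b, hb⟩ := hv
        rw [mem_inter, mem_singleton] at hb
        rw [inter_eq_right, singleton_subset_iff]
        exact hb.2 ▸ hb.1
      rw [this]; simpa using hz
    · set I := univ.image (fun v => G.neighborFinset v ∩ A) with hI
      have hIc : I.card ≤ r * A.card := hG A (card_pos.1 (by omega))
      have hrep : ∀ T : Finset V, ∃ v, T ∈ I → G.neighborFinset v ∩ A = T := by
        intro T
        by_cases hT : T ∈ I
        · obtain ⟨v, _, hv⟩ := mem_image.1 hT
          exact ⟨v, fun _ => hv⟩
        · obtain ⟨a, _⟩ := card_pos.1 (show 0 < A.card by omega)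
          exact ⟨a, fun h => absurd h hT⟩
      choose rep hrep using hrep
      set R := I.image rep with hR
      obtain ⟨x, hx, y, hy, hxy, hd⟩ := near_twins A (fun x => G.neighborFinset x) R r hr
        (card_image_le.trans hIc) (by omega) (by
          intro B _ hB
          exact (card_le_card (image_subset_image (subset_univ A))).trans (hG B hB))
      obtain ⟨f, hf⟩ := ih (A.erase y) (by rw [card_erase_of_mem hy, hA]; simp)
      set D := symmDiff (G.neighborFinset x) (G.neighborFinset y) ∩ R with hD
      obtain ⟨z, hz⟩ : ∃ z : W, z ∉ D.image
          (fun v => ∑ u ∈ G.neighborFinset v ∩ A.erase y, f u) := by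
        by_contra hcon
        push Not at hcon
        have h1 : (univ : Finset W) ⊆ _ := fun z _ => hcon z
        have h2 := (card_le_card h1).trans card_image_le
        rw [card_univ] at h2
        omega
      let g : V → W := fun u => if u = y then z else if u = x then f x + z else f u
      have hg : ∀ v, ∑ u ∈ G.neighborFinset v ∩ A, g u =
          ∑ u ∈ G.neighborFinset v ∩ A.erase y, f u +
          ((if x ∈ G.neighborFinset v then z else 0) + (if y ∈ G.neighborFinset v then z else 0)) := by
        intro v
        have e1 : ∑ u ∈ G.neighborFinset v ∩ A.erase y, g u =
            ∑ u ∈ G.neighborFinset v ∩ A.erase y, f u +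
              (if x ∈ G.neighborFinset v then z else 0) := by
          have : ∀ u ∈ G.neighborFinset v ∩ A.erase y, g u = f u + if u = x then z else 0 := by
            intro u hu
            have huy : u ≠ y := (mem_erase.1 (mem_inter.1 hu).2).1
            simp only [g, if_neg huy]
            split_ifs with h
            · rw [h]
            · simp
          rw [sum_congr rfl this, sum_add_distrib, sum_ite_eq']
          congr 1
          simp only [mem_inter, mem_erase]
          simp [hxy, hx]
        rw [← add_assoc, ← e1]
        by_cases hyv : y ∈ G.neighborFinset v
        · rw [if_pos hyv, inter_erase, ← sum_erase_add _ _ (mem_inter.2 ⟨hyv, hy⟩)]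
          simp [g]
        · rw [if_neg hyv, inter_erase, erase_eq_of_notMem, add_zero]
          exact fun h => hyv (mem_inter.1 h).1
      refine ⟨g, fun v hv => ?_⟩
      have hvI : G.neighborFinset v ∩ A ∈ I := mem_image_of_mem _ (mem_univ v)
      have hv' := hrep _ hvI
      have hvR : rep (G.neighborFinset v ∩ A) ∈ R := mem_image_of_mem _ hvI
      revert hvR hv'
      generalize rep (G.neighborFinset v ∩ A) = v'
      intro hv' hvR
      rw [← hv'] at hv ⊢
      rw [hg]
      by_cases hx' : x ∈ G.neighborFinset v' <;> by_cases hy' : y ∈ G.neighborFinset v'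
      · rw [if_pos hx', if_pos hy', hW, add_zero]
        exact hf v' ⟨x, mem_inter.2 ⟨hx', mem_erase.2 ⟨hxy, hx⟩⟩⟩
      · rw [if_pos hx', if_neg hy', add_zero]
        intro h0
        apply hz
        refine mem_image.2 ⟨v', ?_, ?_⟩
        · rw [hD, mem_inter, mem_symmDiff]
          simp only [SimpleGraph.mem_neighborFinset] at hx' hy' ⊢
          exact ⟨Or.inl ⟨hx'.symm, fun h => hy' h.symm⟩, hvR⟩
        · exact add_right_cancel (h0.trans (hW z).symm)
      · rw [if_neg hx', if_pos hy', zero_add]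
        intro h0
        apply hz
        refine mem_image.2 ⟨v', ?_, ?_⟩
        · rw [hD, mem_inter, mem_symmDiff]
          simp only [SimpleGraph.mem_neighborFinset] at hx' hy' ⊢
          exact ⟨Or.inr ⟨hy'.symm, fun h => hx' h.symm⟩, hvR⟩
        · exact add_right_cancel (h0.trans (hW z).symm)
      · rw [if_neg hx', if_neg hy', add_zero, add_zero]
        apply hf
        rw [inter_erase, erase_eq_of_notMem (fun h => hy' (mem_inter.1 h).1)]
        exact hv

/-- Any graph with linear neighborhood complexity has bounded improper odd chromatic number. -/
theorem improper_odd_coloring_of_linear_neighborhood_complexity :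
    ∀ r : ℕ, 0 < r → ∃ k : ℕ, 0 < k ∧
      ∀ (V : Type) [Fintype V] [DecidableEq V] (G : SimpleGraph V) [DecidableRel G.Adj],
        NbhdComplexityLinear G r →
        ∃ c : V → Fin k, ∀ v : V, (G.neighborFinset v).Nonempty →
          ∃ i : Fin k, Odd ((G.neighborFinset v).filter (fun u => c u = i)).card := by
  intro r hr
  let W := Fin (16 * r ^ 3) → ZMod 2
  have hc : 16 * r ^ 3 < Fintype.card W := by
    simp only [W, Fintype.card_fun, ZMod.card, Fintype.card_fin]
    exact Nat.lt_two_pow_self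
  have hW : ∀ z : W, z + z = 0 := fun z => by
    funext i
    exact CharTwo.add_self_eq_zero (z i)
  refine ⟨Fintype.card W, by omega, ?_⟩
  intro V _ _ G _ hG
  obtain ⟨f, hf⟩ := exists_labels G r hr hG hW hc _ Finset.univ rfl
  let e := Fintype.equivFin W
  refine ⟨fun v => e (f v), fun v hv => ?_⟩
  by_contra hcon
  push Not at hcon
  apply hf v (by simpa using hv)
  rw [Finset.inter_univ, ← Finset.sum_fiberwise (s := G.neighborFinset v) (g := fun u => e (f u))]
  apply Finset.sum_eq_zero
  intro i _
  have h1 : ∀ u ∈ (G.neighborFinset v).filter (fun u => e (f u) = i), f u = e.symm i := by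
    intro u hu
    rw [← (Finset.mem_filter.1 hu).2, Equiv.symm_apply_apply]
  rw [Finset.sum_congr rfl h1, Finset.sum_const]
  obtain ⟨j, hj⟩ := Nat.not_odd_iff_even.1 (hcon i)
  rw [hj, add_nsmul]
  exact hW _
end

section
/- For every positive integer r there exists a positive integer k = k(r) such that the following holds: if G is a finite simple graph with a bipartition (X,Y) such that for every nonempty subset A ⊆ V(G) the number of distinct sets of the form N(v) ∩ A with v ∈ V(G) is at most r·|A|, then there is a coloring c : Y → {1,…,k} such that every vertex x ∈ X with at least one neighbor has some color appearing an odd number of times among its neighbors (all of which lie in Y). -/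
open Module in
/-- Rado's theorem on independent transversals, for vectors. -/
theorem rado_aux {K W ι κ : Type} [Field K] [AddCommGroup W] [Module K W] [FiniteDimensional K W]
    [Fintype ι] [DecidableEq ι] [DecidableEq κ] (w : ι → κ → W) (n : ℕ) :
    ∀ L : ι → Finset κ, ∑ i, (L i).card = n →
    (∀ J : Finset ι, J.card ≤
      finrank K (Submodule.span K {x | ∃ i ∈ J, ∃ j ∈ L i, x = w i j})) →
    ∃ f : ι → κ, LinearIndependent K (fun i => w i (f i)) := by
  induction n using Nat.strong_induction_on with
  | _ n ih =>
  intro L hn hL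
  by_cases hbig : ∃ i0, ∃ a ∈ L i0, ∃ b ∈ L i0, a ≠ b
  · obtain ⟨i0, a, ha, b, hb, hab⟩ := hbig
    have key : ∀ a ∈ L i0, (∃ f : ι → κ, LinearIndependent K (fun i => w i (f i))) ∨
        ∃ J : Finset ι, i0 ∈ J ∧
          finrank K (Submodule.span K
            {x | ∃ i ∈ J, ∃ j ∈ Function.update L i0 ((L i0).erase a) i, x = w i j}) < J.card := by
      intro a ha
      by_cases hok : ∀ J : Finset ι, J.card ≤ finrank K (Submodule.span K
            {x | ∃ i ∈ J, ∃ j ∈ Function.update L i0 ((L i0).erase a) i, x = w i j})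
      · left
        refine ih _ ?_ _ rfl hok
        rw [← hn]
        apply Finset.sum_lt_sum
        · intro i _
          by_cases h : i = i0
          · subst h
            simpa using Finset.card_le_card (Finset.erase_subset _ _)
          · simp [h]
        · exact ⟨i0, Finset.mem_univ _, by simpa using Finset.card_erase_lt_of_mem ha⟩
      · right
        push Not at hok
        obtain ⟨J, hJ⟩ := hok
        refine ⟨J, ?_, hJ⟩
        by_contra hi
        have h1 := hL J
        have : {x | ∃ i ∈ J, ∃ j ∈ Function.update L i0 ((L i0).erase a) i, x = w i j}
            = {x | ∃ i ∈ J, ∃ j ∈ L i, x = w i j} := by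
          ext x
          apply exists_congr
          intro i
          apply and_congr_right
          intro hiJ
          have : i ≠ i0 := fun h => hi (h ▸ hiJ)
          simp [this]
        rw [this] at hJ
        omega
    rcases key a ha with h | ⟨J1, hi1, h1⟩
    · exact h
    rcases key b hb with h | ⟨J2, hi2, h2⟩
    · exact h
    exfalso
    set S1 := Submodule.span K
            {x | ∃ i ∈ J1, ∃ j ∈ Function.update L i0 ((L i0).erase a) i, x = w i j}
    set S2 := Submodule.span K
            {x | ∃ i ∈ J2, ∃ j ∈ Function.update L i0 ((L i0).erase b) i, x = w i j}
    have m1 : ∀ i ∈ J1, ∀ j ∈ L i, (i = i0 → j ≠ a) → w i j ∈ S1 := by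
      intro i hi j hj hne
      refine Submodule.subset_span ⟨i, hi, j, ?_, rfl⟩
      by_cases h : i = i0
      · subst h
        simpa using ⟨hne rfl, hj⟩
      · simpa [h] using hj
    have m2 : ∀ i ∈ J2, ∀ j ∈ L i, (i = i0 → j ≠ b) → w i j ∈ S2 := by
      intro i hi j hj hne
      refine Submodule.subset_span ⟨i, hi, j, ?_, rfl⟩
      by_cases h : i = i0
      · subst h
        simpa using ⟨hne rfl, hj⟩
      · simpa [h] using hj
    have hsup : Submodule.span K {x | ∃ i ∈ J1 ∪ J2, ∃ j ∈ L i, x = w i j} ≤ S1 ⊔ S2 := by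
      rw [Submodule.span_le]
      rintro x ⟨i, hi, j, hj, rfl⟩
      by_cases h : i = i0
      · subst h
        by_cases hja : j = a
        · exact Submodule.mem_sup_right (m2 _ hi2 _ hj (fun _ => hja ▸ hab))
        · exact Submodule.mem_sup_left (m1 _ hi1 _ hj (fun _ => hja))
      · rcases Finset.mem_union.1 hi with h' | h'
        · exact Submodule.mem_sup_left (m1 _ h' _ hj (fun e => absurd e h))
        · exact Submodule.mem_sup_right (m2 _ h' _ hj (fun e => absurd e h))
    have hinf : Submodule.span K {x | ∃ i ∈ (J1 ∩ J2).erase i0, ∃ j ∈ L i, x = w i j}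
        ≤ S1 ⊓ S2 := by
      rw [Submodule.span_le]
      rintro x ⟨i, hi, j, hj, rfl⟩
      simp only [Finset.mem_erase, Finset.mem_inter] at hi
      exact ⟨m1 _ hi.2.1 _ hj (fun e => absurd e hi.1), m2 _ hi.2.2 _ hj (fun e => absurd e hi.1)⟩
    have e1 := Submodule.finrank_mono hsup
    have e2 := Submodule.finrank_mono hinf
    have e3 := hL (J1 ∪ J2)
    have e4 := hL ((J1 ∩ J2).erase i0)
    have e5 := Submodule.finrank_sup_add_finrank_inf_eq S1 S2
    have e6 := Finset.card_union_add_card_inter J1 J2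
    have e7 := Finset.card_erase_add_one (Finset.mem_inter.2 ⟨hi1, hi2⟩)
    omega
  · push Not at hbig
    have hne : ∀ i, ∃ j, j ∈ L i := by
      intro i
      by_contra h
      push Not at h
      have := hL {i}
      have he : {x | ∃ i' ∈ ({i} : Finset ι), ∃ j ∈ L i', x = w i' j} = ∅ := by
        ext x; simp [h]
      rw [he] at this
      simp at this
    choose f hf using hne
    refine ⟨f, ?_⟩
    rw [linearIndependent_iff_card_le_finrank_span]
    have := hL Finset.univ
    rw [Finset.card_univ] at this
    refine this.trans (Submodule.finrank_mono (Submodule.span_mono ?_))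
    rintro x ⟨i, -, j, hj, rfl⟩
    exact ⟨i, by simp only [hbig i _ (hf i) _ hj]⟩

open Module in
theorem rado_horn_functionals {K W ι : Type} [Field K] [AddCommGroup W] [Module K W]
    [FiniteDimensional K W] [Fintype ι] [DecidableEq ι] (v : ι → W) (r : ℕ)
    (h : ∀ J : Finset ι, J.card ≤ r * finrank K (Submodule.span K (v '' J))) :
    ∃ ψ : Fin r → (W →ₗ[K] K), ∀ i, ∃ j, ψ j (v i) = 1 := by
  obtain ⟨f, hf⟩ := rado_aux (K := K) (fun (i : ι) (j : Fin r) => (Pi.single j (v i) : Fin r → W)) _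
    (fun _ => Finset.univ) rfl (by
      intro J
      refine (h J).trans ?_
      set U := Submodule.span K (v '' J)
      set S := Submodule.span K {x | ∃ i ∈ J, ∃ j ∈ (Finset.univ : Finset (Fin r)),
        x = (Pi.single j (v i) : Fin r → W)}
      have hU : ∀ j : Fin r, U ≤ S.comap (LinearMap.single K (fun _ : Fin r => W) j) := by
        intro j
        rw [Submodule.span_le]
        rintro x ⟨i, hi, rfl⟩
        exact Submodule.subset_span ⟨i, hi, j, Finset.mem_univ _, rfl⟩
      have hr : LinearMap.range (LinearMap.compLeft U.subtype (Fin r)) ≤ S := by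
        rintro _ ⟨g, rfl⟩
        rw [← Finset.univ_sum_single (LinearMap.compLeft U.subtype (Fin r) g)]
        exact Submodule.sum_mem _ fun j _ => hU j (g j).2
      have hinj : Function.Injective (LinearMap.compLeft U.subtype (Fin r)) := by
        intro g g' hg
        ext j
        exact congrFun hg j
      have := Submodule.finrank_mono hr
      rw [LinearMap.finrank_range_of_inj hinj] at this
      simpa [Module.finrank_pi_fintype] using this)
  obtain ⟨φ, hφ⟩ := LinearMap.exists_extend
    ((Finsupp.linearCombination K (fun _ : ι => (1 : K))).comp hf.repr)
  refine ⟨fun j => φ.comp (LinearMap.single K (fun _ : Fin r => W) j), fun i => ⟨f i, ?_⟩⟩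
  have := LinearMap.congr_fun hφ ⟨Pi.single (f i) (v i), Submodule.subset_span ⟨i, rfl⟩⟩
  simp only [LinearMap.comp_apply, Submodule.subtype_apply] at this ⊢
  rw [hf.repr_eq_single i _ rfl] at this
  simpa using this

open Module in
/-- A subspace of a coordinate space is determined by few coordinates. -/
theorem exists_coords {K V : Type} [Field K] [Fintype V] [DecidableEq V]
    (U : Submodule K (V → K)) :
    ∃ A : Finset V, A.card ≤ finrank K U ∧ ∀ x ∈ U, (∀ a ∈ A, x a = 0) → x = 0 := by
  obtain ⟨κ, a, ha, hsp, hli⟩ := exists_linearIndependent' K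
    (fun u : V => ((LinearMap.proj u : (V → K) →ₗ[K] K).comp U.subtype : Dual K U))
  have : Finite κ := Finite.of_injective a ha
  have : Fintype κ := Fintype.ofFinite κ
  refine ⟨Finset.univ.image a, ?_, ?_⟩
  · refine Finset.card_image_le.trans ?_
    have := hli.fintype_card_le_finrank
    rwa [Subspace.dual_finrank_eq] at this
  · intro x hx h0
    have : ∀ g ∈ Submodule.span K (Set.range
        (fun u : V => ((LinearMap.proj u : (V → K) →ₗ[K] K).comp U.subtype : Dual K U))),
        g ⟨x, hx⟩ = 0 := by
      rw [← hsp]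
      intro g hg
      induction hg using Submodule.span_induction with
      | mem g hg =>
        obtain ⟨k, rfl⟩ := hg
        exact h0 _ (Finset.mem_image_of_mem _ (Finset.mem_univ k))
      | zero => rfl
      | add g g' _ _ h h' => simp [h, h']
      | smul c g _ h => simp [h]
    ext u
    exact this _ (Submodule.subset_span ⟨u, rfl⟩)

/-- Characteristic vector over `ZMod 2`. -/
def charVec {V : Type} [DecidableEq V] (s : Finset V) : V → ZMod 2 :=
  fun u => if u ∈ s then 1 else 0

theorem charVec_eq_sum {V : Type} [DecidableEq V] (s : Finset V) :
    charVec s = ∑ u ∈ s, (Pi.single u 1 : V → ZMod 2) := by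
  ext u
  simp [charVec, Finset.sum_apply, Pi.single_apply]

theorem charVec_agree {V : Type} [DecidableEq V] {s t : Finset V} {u : V}
    (h : charVec s u = charVec t u) : u ∈ s ↔ u ∈ t := by
  unfold charVec at h
  by_cases h1 : u ∈ s <;> by_cases h2 : u ∈ t <;> simp_all

/-- One-sided odd coloring for bipartite graphs of linear neighborhood complexity:
one can color `Y` with boundedly many colors so that every non-isolated vertex of `X`
sees some color an odd number of times. -/
theorem one_sided_odd_coloring_of_linear_neighborhood_complexity :
    ∀ r : ℕ, 0 < r → ∃ k : ℕ, 0 < k ∧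
      ∀ (V : Type) [Fintype V] [DecidableEq V] (G : SimpleGraph V) [DecidableRel G.Adj]
        (X Y : Finset V), Disjoint X Y → X ∪ Y = Finset.univ →
        (∀ u v : V, G.Adj u v → (u ∈ X ∧ v ∈ Y) ∨ (u ∈ Y ∧ v ∈ X)) →
        NbhdComplexityLinear G r →
        ∃ c : V → Fin k, ∀ x ∈ X, (G.neighborFinset x).Nonempty →
          ∃ i : Fin k, Odd ((G.neighborFinset x).filter (fun u => c u = i)).card := by
  intro r hr
  refine ⟨Fintype.card (Fin r → ZMod 2), Fintype.card_pos, ?_⟩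
  intro V _ _ G _ X Y _ _ _ hG
  let S : Finset (Finset V) := (Finset.univ.image fun v => G.neighborFinset v).erase ∅
  obtain ⟨ψ, hψ⟩ := rado_horn_functionals (K := ZMod 2) (fun s : S => charVec s.1) r (by
    intro J
    rcases J.eq_empty_or_nonempty with rfl | ⟨s0, hs0⟩
    · simp
    obtain ⟨A, hA, hsep⟩ := exists_coords
      (Submodule.span (ZMod 2) ((fun s : S => charVec s.1) '' (J : Set S)))
    have hmem : ∀ s ∈ J, charVec s.1 ∈
        Submodule.span (ZMod 2) ((fun s : S => charVec s.1) '' (J : Set S)) :=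
      fun s hs => Submodule.subset_span ⟨s, hs, rfl⟩
    have hAne : A.Nonempty := by
      rw [Finset.nonempty_iff_ne_empty]
      rintro rfl
      have h0 := hsep _ (hmem s0 hs0) (by simp)
      have hne := (Finset.mem_erase.1 s0.2).1
      obtain ⟨u, hu⟩ := Finset.nonempty_iff_ne_empty.2 hne
      have := congrFun h0 u
      simp [charVec, hu] at this
    refine le_trans ?_ ((hG A hAne).trans (Nat.mul_le_mul_left r hA))
    refine Finset.card_le_card_of_injOn (fun s => s.1 ∩ A) ?_ ?_
    · intro s _
      obtain ⟨v, -, hv⟩ := Finset.mem_image.1 (Finset.mem_erase.1 s.2).2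
      exact Finset.mem_coe.2 (Finset.mem_image.2 ⟨v, Finset.mem_univ _, by simp only [hv]⟩)
    · intro s hs t ht hst
      have h0 := hsep _ (Submodule.sub_mem _ (hmem s hs) (hmem t ht)) (by
        intro a ha
        have : a ∈ s.1 ∩ A ↔ a ∈ t.1 ∩ A := by
          simp only at hst
          rw [hst]
        simp only [Finset.mem_inter, ha, and_true] at this
        simp [charVec, this])
      apply Subtype.ext
      ext u
      exact charVec_agree (congrFun (sub_eq_zero.1 h0) u))
  let e := Fintype.equivFin (Fin r → ZMod 2)
  let g : V → Fin r → ZMod 2 := fun u j => ψ j (Pi.single u 1)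
  refine ⟨fun u => e (g u), ?_⟩
  intro x _ hne
  by_contra hcon
  push Not at hcon
  obtain ⟨j, hj⟩ := hψ ⟨G.neighborFinset x, Finset.mem_erase.2
    ⟨Finset.nonempty_iff_ne_empty.1 hne, Finset.mem_image_of_mem _ (Finset.mem_univ x)⟩⟩
  simp only [charVec_eq_sum, map_sum] at hj
  have : ∑ u ∈ G.neighborFinset x, ψ j (Pi.single u 1) = 0 := by
    rw [← Finset.sum_fiberwise (G.neighborFinset x) (fun u => e (g u))]
    apply Finset.sum_eq_zero
    intro i _
    have hc : ∀ u ∈ (G.neighborFinset x).filter (fun u => e (g u) = i),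
        ψ j (Pi.single u 1) = e.symm i j := by
      intro u hu
      rw [← (Finset.mem_filter.1 hu).2, Equiv.symm_apply_apply]
    rw [Finset.sum_congr rfl hc, Finset.sum_const, nsmul_eq_mul]
    have hev := Nat.not_odd_iff_even.1 (hcon i)
    rw [(ZMod.natCast_eq_zero_iff_even).2 hev, zero_mul]
  rw [this] at hj
  exact zero_ne_one hj
end

section
/- Let r be a positive integer and let G be a finite simple graph with a bipartition (X,Y) such that for every nonempty subset A ⊆ V(G) the number of distinct sets of the form N(v) ∩ A with v ∈ V(G) is at most r·|A|. Then there exists a subset Y' ⊆ Y with |Y'| ≥ |Y|/(2r+1) such that no vertex of X of degree exactly 2 has both of its neighbors in Y'. -/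
theorem indep_aux {V : Type} [DecidableEq V] (r : ℕ) (E : Finset (Finset V))
    (h2 : ∀ e ∈ E, e.card = 2)
    (hE : ∀ A : Finset V, A.Nonempty → (E.filter (fun e => e ⊆ A)).card ≤ r * A.card) (A : Finset V) :
    ∃ B ⊆ A, A.card ≤ (2 * r + 1) * B.card ∧ ∀ e ∈ E, ¬ e ⊆ B := by
  induction A using Finset.strongInduction with
  | H A ih =>
  rcases A.eq_empty_or_nonempty with rfl | hA
  · refine ⟨∅, by simp, by simp, fun e he hs => ?_⟩
    have := h2 e he
    have h0 : e = ∅ := Finset.subset_empty.mp hs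
    simp [h0] at this
  have hdeg : ∃ a ∈ A, ((E.filter (fun e => e ⊆ A)).filter (fun e => a ∈ e)).card ≤ 2 * r := by
    by_contra! hcon
    have h1 : A.card * (2 * r + 1) ≤
        ∑ a ∈ A, ((E.filter (fun e => e ⊆ A)).filter (fun e => a ∈ e)).card := by
      rw [← smul_eq_mul]
      exact Finset.card_nsmul_le_sum _ _ _ (fun a ha => hcon a ha)
    have h3 : ∑ a ∈ A, ((E.filter (fun e => e ⊆ A)).filter (fun e => a ∈ e)).card
        = ∑ e ∈ E.filter (fun e => e ⊆ A), (A.filter (fun a => a ∈ e)).card :=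
      Finset.sum_card_bipartiteAbove_eq_sum_card_bipartiteBelow (fun a e => a ∈ e)
    have h4 : ∑ e ∈ E.filter (fun e => e ⊆ A), (A.filter (fun a => a ∈ e)).card
        = (E.filter (fun e => e ⊆ A)).card * 2 := by
      apply Finset.sum_const_nat
      intro e he
      rw [Finset.mem_filter] at he
      rw [Finset.filter_mem_eq_inter, Finset.inter_eq_right.mpr he.2, h2 e he.1]
    have h5 := hE A hA
    have h6 := hA.card_pos
    rw [h3, h4] at h1
    nlinarith
  obtain ⟨a, ha, hd⟩ := hdeg
  set D := (E.filter (fun e => e ⊆ A)).filter (fun e => a ∈ e) with hD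
  set R := insert a (D.biUnion (fun e => e.erase a)) with hR
  have hRc : R.card ≤ 2 * r + 1 := by
    refine (Finset.card_insert_le _ _).trans ?_
    have : (D.biUnion (fun e => e.erase a)).card ≤ D.card * 1 := by
      refine Finset.card_biUnion_le_card_mul _ _ _ (fun e he => ?_)
      simp only [hD, Finset.mem_filter] at he
      rw [Finset.card_erase_of_mem he.2, h2 e he.1.1]
    omega
  have hss : A \ R ⊂ A := by
    refine Finset.ssubset_iff_of_subset Finset.sdiff_subset |>.mpr ⟨a, ha, ?_⟩
    simp [hR]
  obtain ⟨B, hBA, hBc, hB⟩ := ih _ hss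
  have haB : a ∉ B := fun h => by
    have := hBA h
    simp [hR] at this
  refine ⟨insert a B, ?_, ?_, ?_⟩
  · exact Finset.insert_subset ha (hBA.trans Finset.sdiff_subset)
  · rw [Finset.card_insert_of_notMem haB]
    have := Finset.le_card_sdiff R A
    rw [mul_add]
    omega
  · intro e he hs
    by_cases hae : a ∈ e
    · have hcard : (e.erase a).card = 1 := by
        rw [Finset.card_erase_of_mem hae, h2 e he]
      obtain ⟨b, hb⟩ := Finset.card_pos.mp (by omega : 0 < (e.erase a).card)
      have hbe := Finset.mem_erase.mp hb
      have hbB : b ∈ B := (Finset.mem_insert.mp (hs hbe.2)).resolve_left hbe.1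
      have heA : e ⊆ A :=
        hs.trans (Finset.insert_subset ha (hBA.trans Finset.sdiff_subset))
      have hbR : b ∈ R := by
        refine Finset.mem_insert_of_mem (Finset.mem_biUnion.mpr ⟨e, ?_, hb⟩)
        simp [hD, he, heA, hae]
      exact (Finset.mem_sdiff.mp (hBA hbB)).2 hbR
    · exact hB e he ((Finset.subset_insert_iff_of_notMem hae).mp hs)

/-- In a bipartite graph of linear neighborhood complexity there is a subset `Y'` of `Y` of
size at least `|Y|/(2r+1)` such that no degree-2 vertex of `X` has both neighbors in `Y'`. -/
theorem large_subset_avoiding_degree_two_neighbors {V : Type} [Fintype V] [DecidableEq V]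
    (r : ℕ) (hr : 0 < r) (G : SimpleGraph V) [DecidableRel G.Adj]
    (X Y : Finset V) (hdisj : Disjoint X Y) (hcover : X ∪ Y = Finset.univ)
    (hbip : ∀ u v : V, G.Adj u v → (u ∈ X ∧ v ∈ Y) ∨ (u ∈ Y ∧ v ∈ X))
    (hnc : NbhdComplexityLinear G r) :
    ∃ Y' ⊆ Y, Y.card ≤ (2 * r + 1) * Y'.card ∧
      ∀ x ∈ X, G.degree x = 2 → ¬ G.neighborFinset x ⊆ Y' := by
  obtain ⟨B, hBY, hc, hB⟩ := indep_aux r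
    ((Finset.univ.filter (fun x => G.degree x = 2)).image (fun x => G.neighborFinset x))
    (by
      intro e he
      obtain ⟨x, hx, rfl⟩ := Finset.mem_image.mp he
      exact (Finset.mem_filter.mp hx).2)
    (by
      intro A hA
      refine le_trans (Finset.card_le_card ?_) (hnc A hA)
      intro e he
      obtain ⟨he, heA⟩ := Finset.mem_filter.mp he
      obtain ⟨x, hx, rfl⟩ := Finset.mem_image.mp he
      exact Finset.mem_image.mpr ⟨x, Finset.mem_univ _, Finset.inter_eq_left.mpr heA⟩) Y
  refine ⟨B, hBY, hc, fun x _ hd => hB _ ?_⟩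
  exact Finset.mem_image.mpr ⟨x, by simp [hd], rfl⟩
end

section
/- Let t ≥ 3 and ℓ ≥ 1 be integers and suppose that every finite graph with no K_{t−1} minor has star-arboricity at most ℓ. Then for every finite graph G with no K_t minor and every spanning forest T of G, there exists a coloring φ : E(G) \ E(T) → {1,…,16ℓ+1} such that for every edge f ∈ E(T) that is not a bridge of G, there exists a color i ∈ {1,…,16ℓ+1} occurring an odd number of times on C*(T,f) \ {f}. -/
/-- `T` is a spanning forest of `G`. -/
def IsSpanningForest {V : Type} (G T : SimpleGraph V) : Prop :=
  T ≤ G ∧ T.IsAcyclic ∧ ∀ u v : V, G.Reachable u v ↔ T.Reachable u v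

/-- The fundamental cut `C*(T, f)`: the set of edges of `G` whose endpoints lie in different
connected components of `T - f`. -/
def fundCut {V : Type} (G T : SimpleGraph V) (f : Sym2 V) : Set (Sym2 V) :=
  {e | e ∈ G.edgeSet ∧ ∃ u v : V, e = s(u, v) ∧ ¬ (T.deleteEdges {f}).Reachable u v}

/-- `G` has a `K_t` minor: there are `t` pairwise disjoint nonempty branch sets, each
inducing a connected subgraph, with an edge between any two of them. -/
def HasCliqueMinor {V : Type} (G : SimpleGraph V) (t : ℕ) : Prop :=
  ∃ S : Fin t → Set V, (∀ i, (S i).Nonempty) ∧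
    (Pairwise fun i j => Disjoint (S i) (S j)) ∧
    (∀ i, (G.induce (S i)).Connected) ∧
    (∀ i j, i ≠ j → ∃ u ∈ S i, ∃ v ∈ S j, G.Adj u v)

/-- A star forest: an acyclic graph in which every connected component has a vertex
adjacent to all other vertices of that component. -/
def IsStarForest {V : Type} (H : SimpleGraph V) : Prop :=
  H.IsAcyclic ∧ ∀ u : V, ∃ c : V, H.Reachable u c ∧
    ∀ w : V, H.Reachable c w → w ≠ c → H.Adj c w

/-- The star-arboricity of `H` is at most `ℓ`: its edge set can be decomposed into `ℓ`
star forests. -/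
def StarArboricityLE {V : Type} (H : SimpleGraph V) (ℓ : ℕ) : Prop :=
  ∃ φ : Sym2 V → Fin ℓ, ∀ i : Fin ℓ,
    IsStarForest (SimpleGraph.fromEdgeSet {e | e ∈ H.edgeSet ∧ φ e = i})


def Lam {α : Type} (A : Finset (Finset α)) : Prop :=
  ∀ S ∈ A, ∀ S' ∈ A, S ⊆ S' ∨ S' ⊆ S ∨ Disjoint S S'

theorem pairInv {α : Type} [DecidableEq α] (n : ℕ) : ∀ U : Finset α, U.card = n →
    ∃ p : α → α, (∀ x, p (p x) = x) ∧ (∀ x, p x ≠ x → x ∈ U) ∧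
      (∀ x ∈ U, ∀ y ∈ U, p x = x → p y = y → x = y) := by
  induction n using Nat.strong_induction_on with
  | _ n ih =>
    intro U hU
    by_cases h : U.card ≤ 1
    · refine ⟨id, by simp, by simp, ?_⟩
      intro x hx y hy _ _
      exact Finset.card_le_one.1 h x hx y hy
    · push Not at h
      obtain ⟨a, ha, b, hb, hab⟩ := Finset.one_lt_card.1 h
      obtain ⟨p, h1, h2, h3⟩ := ih ((U.erase a).erase b).card (by
        rw [← hU]
        apply Finset.card_lt_card
        refine Finset.ssubset_of_subset_of_ssubset (Finset.erase_subset _ _) (Finset.erase_ssubset ha)) _ rfl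
      have pa : p a = a := by by_contra hh; have := h2 _ hh; simp at this
      have pb : p b = b := by by_contra hh; have := h2 _ hh; simp at this
      refine ⟨fun x => if x = a then b else if x = b then a else p x, ?_, ?_, ?_⟩
      · intro x; grind
      · intro x; grind
      · intro x hx y hy; have := h3 x; have := h3 y; grind

theorem lamMatch {α : Type} [DecidableEq α] (n : ℕ) : ∀ A : Finset (Finset α), A.card = n → Lam A →
    ∃ M : α → α, (∀ x, M (M x) = x) ∧ (∀ x, M x ≠ x → ∃ S ∈ A, x ∈ S ∧ M x ∈ S) ∧
      ∀ S ∈ A, ∀ x ∈ S, ∀ y ∈ S, (M x ∉ S ∨ M x = x) → (M y ∉ S ∨ M y = y) → x = y := by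
  induction n with
  | zero =>
    intro A hA _
    rw [Finset.card_eq_zero] at hA
    subst hA
    exact ⟨id, by simp, by simp, by simp⟩
  | succ n ih =>
    intro A hA hl
    have hne : A.Nonempty := by rw [← Finset.card_pos]; omega
    obtain ⟨S, hS, hmax⟩ := Finset.exists_max_image A Finset.card hne
    obtain ⟨M, h1, h2, h3⟩ := ih (A.erase S) (by rw [Finset.card_erase_of_mem hS]; omega)
      (fun X hX Y hY => hl X (Finset.mem_of_mem_erase hX) Y (Finset.mem_of_mem_erase hY))
    have key : ∀ X ∈ A, X ⊆ S ∨ Disjoint X S := by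
      intro X hX
      rcases hl X hX S hS with h | h | h
      · exact Or.inl h
      · exact Or.inl (Finset.eq_of_subset_of_card_le h (hmax X hX)).symm.subset
      · exact Or.inr h
    have cl : ∀ x ∈ S, M x ∈ S := by
      intro x hx
      by_cases hm : M x = x
      · rw [hm]; exact hx
      · obtain ⟨X, hX, hxX, hmX⟩ := h2 x hm
        rcases key X (Finset.mem_of_mem_erase hX) with h | h
        · exact h hmX
        · exact absurd hx (Finset.disjoint_left.1 h hxX)
    obtain ⟨p, p1, p2, p3⟩ := pairInv _ (S.filter (fun x => M x = x)) rfl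
    have p4 : ∀ x, p x ≠ x → p x ∈ S.filter (fun x => M x = x) := by
      intro x hx; apply p2; rw [p1]; exact hx.symm
    simp only [Finset.mem_filter] at p2 p3 p4
    refine ⟨fun x => if p x = x then M x else p x, ?_, ?_, ?_⟩
    · intro x
      have := p1 x; have := p2 x; have := p4 x; have := p2 (M x); have := h1 x
      have := p4 (M x)
      grind
    · intro x hx
      by_cases hp : p x = x
      · simp only [hp, if_true] at hx ⊢
        obtain ⟨X, hX, h⟩ := h2 x hx
        exact ⟨X, Finset.mem_of_mem_erase hX, h⟩
      · simp only [hp, if_false]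
        exact ⟨S, hS, (p2 x hp).1, (p4 x hp).1⟩
    · intro X hX x hx y hy
      by_cases hXS : X = S
      · subst hXS
        have := p3 x; have := p3 y; have := cl x hx; have := cl y hy
        have := p2 x; have := p4 x; have := p2 y; have := p4 y
        grind
      · have := h3 X (Finset.mem_erase.2 ⟨hXS, hX⟩) x hx y hy
        have := p2 x; have := p4 x; have := p2 y; have := p4 y
        grind

set_option maxHeartbeats 4000000 in
theorem twoInv {α : Type} [Fintype α] [DecidableEq α] (n : ℕ) : ∀ a b : α → α,
    (∀ x, a (a x) = x) → (∀ x, b (b x) = x) → (Finset.univ.filter (fun x => a x ≠ x)).card = n →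
    ∃ s : α → Bool, (∀ x, a x ≠ x → s (a x) = !s x) ∧ (∀ x, b x ≠ x → s (b x) = !s x) := by
  induction n using Nat.strong_induction_on with
  | _ n ih =>
    intro a b ha hb hn
    by_cases hx : ∃ x, a x ≠ x
    · obtain ⟨x, hx⟩ := hx
      set y := a x with hy
      have hay : a y = x := ha x
      obtain ⟨s, s1, s2⟩ := ih (Finset.univ.filter (fun z => (if z = x ∨ z = y then z else a z) ≠ z)).card
        (by
          rw [← hn]
          apply Finset.card_lt_card
          rw [Finset.ssubset_iff_of_subset]
          · refine ⟨x, by simp [← hy, hx], by simp⟩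
          · intro z; simp only [Finset.mem_filter]; grind)
        (fun z => if z = x ∨ z = y then z else a z)
        (fun z => if z = x ∨ z = y then z else if z = b x then (if b y = y then z else b y) else
          if z = b y then (if b x = x then z else b x) else b z)
        (by intro z; have := ha z; grind) (by intro z; have := hb z; have := hb x; have := hb y; grind) rfl
      have hbx := hb x
      have hby := hb y
      by_cases c1 : b x = y
      · refine ⟨fun z => if z = x then true else if z = y then false else s z, ?_, ?_⟩
        · intro z; have h2 := s1 z; have h3 := ha z; clear s1 s2 hb hn ih ha; grind
        · intro z; have h2 := s2 z; have h3 := hb z; clear s1 s2 ha hn ih hb; grind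
      · by_cases c2 : b x = x
        · refine ⟨fun z => if z = x then (if b y = y then true else s (b y)) else if z = y then !(if b y = y then true else s (b y)) else s z, ?_, ?_⟩
          · intro z; have h2 := s1 z; have h3 := ha z; clear s1 s2 hb hn ih ha; grind
          · intro z; have h2 := s2 z; have h3 := hb z; clear s1 s2 ha hn ih hb; grind
        · refine ⟨fun z => if z = x then !(s (b x)) else if z = y then (s (b x)) else s z, ?_, ?_⟩
          · intro z; have h2 := s1 z; have h3 := ha z; clear s1 s2 hb hn ih ha; grind
          · intro z; have h2 := s2 z; have h3 := hb z; have := s2 (b x); clear s1 s2 ha hn ih hb; grind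
    · push Not at hx
      have e := (Fintype.equivFin α)
      refine ⟨fun x => decide (e x < e (b x)), fun x h => absurd (hx x) h, ?_⟩
      intro x hbx
      have : e (b x) ≠ e x := fun h => hbx (e.injective h)
      simp only [hb]
      rcases lt_or_gt_of_ne this with h | h
      · simp [h, h.le]
      · simp [h, h.le]

theorem balanced {α : Type} [DecidableEq α] (S : Finset α) (M : α → α) (s : α → Bool)
    (hM : ∀ x, M (M x) = x) (hs : ∀ x, M x ≠ x → s (M x) = !s x)
    (h : ∀ x ∈ S, ∀ y ∈ S, (M x ∉ S ∨ M x = x) → (M y ∉ S ∨ M y = y) → x = y)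
    (he : Even S.card) :
    (S.filter (fun x => s x = true)).card = (S.filter (fun x => s x = false)).card := by
  have hb : (S.filter (fun x => (M x ∉ S ∨ M x = x))).card ≤ 1 := by
    rw [Finset.card_le_one]
    intro x hx y hy
    simp only [Finset.mem_filter] at hx hy
    exact h x hx.1 y hy.1 hx.2 hy.2
  set G := S.filter (fun x => ¬ (M x ∉ S ∨ M x = x)) with hG
  have hc : (S.filter (fun x => (M x ∉ S ∨ M x = x))).card + G.card = S.card :=
    Finset.card_filter_add_card_filter_not (s := S) (fun x => (M x ∉ S ∨ M x = x))
  have hGc : (G.filter (fun x => s x = true)).card = (G.filter (fun x => ¬ s x = true)).card := by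
    apply Finset.card_bij' (fun x _ => M x) (fun x _ => M x)
    · intro x hx; simp only [hG, Finset.mem_filter] at hx ⊢; have := hs x; have := hM x; grind
    · intro x hx; simp only [hG, Finset.mem_filter] at hx ⊢; have := hs x; have := hM x; grind
    · intro x hx; exact hM x
    · intro x hx; exact hM x
  have hG2 := Finset.card_filter_add_card_filter_not (s := G) (fun x => s x = true)
  have h0 : (S.filter (fun x => (M x ∉ S ∨ M x = x))).card = 0 := by
    obtain ⟨k, hk⟩ := he
    omega
  have hle : S.card ≤ G.card := by omega
  have hGS : G = S := Finset.eq_of_subset_of_card_le (Finset.filter_subset _ _) hle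
  rw [hGS] at hGc
  simpa using hGc

abbrev K4 := ZMod 2 × ZMod 2

def vv {α : Type} (s : α → Bool) (a : α → ZMod 2) (x : α) : K4 :=
  if s x then (a x, 0) else (0, a x)

theorem sumK {β : Type} [DecidableEq β] (K : Finset β) (hK : K.Nonempty) :
    ∀ g : K4, g ≠ 0 → ∃ τ : β → K4, (∀ x, τ x ≠ 0) ∧ ∑ x ∈ K, τ x = g := by
  induction hK using Finset.Nonempty.cons_induction with
  | singleton a => intro g hg; exact ⟨fun _ => g, fun _ => hg, by simp⟩
  | cons a s ha hs ih =>
    intro g hg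
    obtain ⟨h, h0, h1⟩ : ∃ h : K4, h ≠ 0 ∧ g - h ≠ 0 := by
      revert g; decide
    obtain ⟨τ, t1, t2⟩ := ih (g - h) h1
    refine ⟨fun x => if x = a then h else τ x, ?_, ?_⟩
    · intro x; dsimp only; split_ifs
      · exact h0
      · exact t1 x
    · rw [Finset.sum_cons, if_pos rfl]
      have : ∑ x ∈ s, (if x = a then h else τ x) = ∑ x ∈ s, τ x := by
        apply Finset.sum_congr rfl
        intro x hx
        rw [if_neg]; rintro rfl; exact ha hx
      rw [this, t2]; abel

theorem target {α : Type} [DecidableEq α] (s : α → Bool) (n : ℕ) : ∀ A : Finset (Finset α),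
    A.card = n → Lam A →
    (∀ S ∈ A, S.Nonempty ∧
      (S.filter (fun x => s x = true)).card = (S.filter (fun x => s x = false)).card) →
    ∀ τ : Finset α → K4, (∀ S, τ S ≠ 0) →
    ∃ a : α → ZMod 2, (∀ S ∈ A, ∑ x ∈ S, vv s a x ≠ 0) ∧
      ∀ S ∈ A, (∀ S' ∈ A, S ⊆ S' → S = S') → ∑ x ∈ S, vv s a x = τ S := by
  induction n with
  | zero =>
    intro A hA _ _ _ _
    rw [Finset.card_eq_zero] at hA
    subst hA
    exact ⟨0, by simp, by simp⟩
  | succ n ih =>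
    intro A hA hl hbal τ hτ
    have hne : A.Nonempty := by rw [← Finset.card_pos]; omega
    obtain ⟨S, hS, hmax⟩ := Finset.exists_max_image A Finset.card hne
    have key : ∀ X ∈ A, X ⊆ S ∨ Disjoint X S := by
      intro X hX
      rcases hl X hX S hS with h | h | h
      · exact Or.inl h
      · exact Or.inl (Finset.eq_of_subset_of_card_le h (hmax X hX)).symm.subset
      · exact Or.inr h
    have hlA : Lam (A.erase S) :=
      fun X hX Y hY => hl X (Finset.mem_of_mem_erase hX) Y (Finset.mem_of_mem_erase hY)
    have hcA : (A.erase S).card = n := by rw [Finset.card_erase_of_mem hS]; omega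
    have hbA : ∀ S' ∈ A.erase S, S'.Nonempty ∧
      (S'.filter (fun x => s x = true)).card = (S'.filter (fun x => s x = false)).card :=
      fun X hX => hbal X (Finset.mem_of_mem_erase hX)
    -- kids
    set K := (A.erase S).filter (fun X => X ⊆ S ∧ ∀ Y ∈ A.erase S, X ⊆ Y → X = Y) with hK
    have kid : ∀ X ∈ A.erase S, X ⊆ S → ∃ Y ∈ K, X ⊆ Y := by
      intro X hX hXS
      obtain ⟨Y, hY, hYm⟩ := Finset.exists_max_image ((A.erase S).filter (fun Y => X ⊆ Y ∧ Y ⊆ S))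
        Finset.card ⟨X, by simp [hXS, Finset.mem_erase.1 hX]⟩
      rw [Finset.mem_filter] at hY
      refine ⟨Y, ?_, hY.2.1⟩
      rw [hK, Finset.mem_filter]
      refine ⟨hY.1, hY.2.2, ?_⟩
      intro Z hZ hYZ
      have hZS : Z ⊆ S := by
        rcases key Z (Finset.mem_of_mem_erase hZ) with h | h
        · exact h
        · exfalso
          obtain ⟨x, hx⟩ := (hbA X hX).1
          exact Finset.disjoint_left.1 h (hYZ (hY.2.1 hx)) (hXS hx)
      exact Finset.eq_of_subset_of_card_le hYZ
        (hYm Z (Finset.mem_filter.2 ⟨hZ, hY.2.1.trans hYZ, hZS⟩))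
    have Kdisj : (K : Set (Finset α)).PairwiseDisjoint id := by
      intro X hX Y hY hXY
      simp only [hK, Finset.coe_filter, Set.mem_ofPred_eq] at hX hY
      rcases hlA X hX.1 Y hY.1 with h | h | h
      · exact absurd (hX.2.2 Y hY.1 h) hXY
      · exact absurd (hY.2.2 X hX.1 h).symm hXY
      · exact h
    set R := S \ K.biUnion id with hR
    have hKS : K.biUnion id ⊆ S := by
      intro x hx
      simp only [Finset.mem_biUnion, id] at hx
      obtain ⟨X, hX, hxX⟩ := hx
      exact (Finset.mem_filter.1 hX).2.1 hxX
    have hSeq : ∀ f : α → K4, ∑ x ∈ S, f x = ∑ x ∈ R, f x + ∑ X ∈ K, ∑ x ∈ X, f x := by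
      intro f
      rw [← Finset.sum_sdiff hKS, Finset.sum_biUnion Kdisj]
      rfl
    have maxA : ∀ X ∈ A.erase S, ¬ X ⊆ S → (∀ Y ∈ A, X ⊆ Y → X = Y) →
      ∀ Y ∈ A.erase S, X ⊆ Y → X = Y := fun X hX _ h Y hY hXY =>
        h Y (Finset.mem_of_mem_erase hY) hXY
    have notsub : ∀ X ∈ A.erase S, (∀ Y ∈ A, X ⊆ Y → X = Y) → ¬ X ⊆ S := by
      intro X hX h hXS
      exact (Finset.mem_erase.1 hX).1 (h S hS hXS)
    by_cases hRe : R = ∅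
    · have hKne : K.Nonempty := by
        rw [Finset.nonempty_iff_ne_empty]
        intro h0
        obtain ⟨x, hx⟩ := (hbal S hS).1
        rw [h0] at hR
        simp only [Finset.biUnion_empty, Finset.sdiff_empty] at hR
        rw [← hR, hRe] at hx
        simp at hx
      obtain ⟨σ, s1, s2⟩ := sumK K hKne (τ S) (hτ S)
      obtain ⟨a, a1, a2⟩ := ih (A.erase S) hcA hlA hbA (fun X => if X ∈ K then σ X else τ X) (by
        intro X; split_ifs
        · exact s1 X
        · exact hτ X)
      have hsum : ∑ x ∈ S, vv s a x = τ S := by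
        rw [hSeq, hRe, Finset.sum_empty, zero_add, ← s2]
        apply Finset.sum_congr rfl
        intro X hX
        have := a2 X (Finset.mem_filter.1 hX).1 (Finset.mem_filter.1 hX).2.2
        rw [this, if_pos hX]
      refine ⟨a, ?_, ?_⟩
      · intro X hX
        by_cases hXS : X = S
        · rw [hXS, hsum]; exact hτ S
        · exact a1 X (Finset.mem_erase.2 ⟨hXS, hX⟩)
      · intro X hX hm
        by_cases hXS : X = S
        · rw [hXS, hsum]
        · have hX' := Finset.mem_erase.2 ⟨hXS, hX⟩
          have hn := notsub X hX' hm
          rw [a2 X hX' (maxA X hX' hn hm), if_neg]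
          intro h; exact hn (Finset.mem_filter.1 h).2.1
    · obtain ⟨a, a1, a2⟩ := ih (A.erase S) hcA hlA hbA τ hτ
      -- R is balanced
      have cnt : ∀ b : Bool, (S.filter (fun x => s x = b)).card =
          (R.filter (fun x => s x = b)).card + ∑ X ∈ K, (X.filter (fun x => s x = b)).card := by
        intro b
        simp only [Finset.card_filter]
        rw [← Finset.sum_sdiff hKS, Finset.sum_biUnion Kdisj]
        rfl
      have hRb : (R.filter (fun x => s x = true)).card = (R.filter (fun x => s x = false)).card := by
        have h1 := cnt true
        have h2 := cnt false
        have h3 := (hbal S hS).2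
        have h4 : ∑ X ∈ K, (X.filter (fun x => s x = true)).card =
          ∑ X ∈ K, (X.filter (fun x => s x = false)).card :=
          Finset.sum_congr rfl (fun X hX => (hbA X (Finset.mem_filter.1 hX).1).2)
        omega
      have hRc : (R.filter (fun x => s x = true)).card + (R.filter (fun x => s x = false)).card
          = R.card := by
        have := Finset.card_filter_add_card_filter_not (s := R) (fun x => s x = true)
        simpa using this
      have hRpos : 0 < R.card := Finset.card_pos.2 (Finset.nonempty_iff_ne_empty.2 hRe)
      obtain ⟨p, hp⟩ := Finset.card_pos.1 (show 0 < (R.filter (fun x => s x = true)).card by omega)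
      obtain ⟨q, hq⟩ := Finset.card_pos.1 (show 0 < (R.filter (fun x => s x = false)).card by omega)
      rw [Finset.mem_filter] at hp hq
      have hpq : p ≠ q := by rintro rfl; simp [hp.2] at hq
      set d : K4 := τ S - ∑ x ∈ S, vv s a x with hd
      set a' : α → ZMod 2 := fun x => a x + if x = p then d.1 else if x = q then d.2 else 0 with ha'
      have hvv : ∀ x, vv s a' x = vv s a x + ((if x = p then (d.1, 0) else 0) + if x = q then (0, d.2) else 0) := by
        intro x
        by_cases h1 : x = p
        · subst h1
          simp [vv, ha', hp.2, hpq]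
        · by_cases h2 : x = q
          · subst h2
            simp [vv, ha', hq.2, h1]
          · simp [vv, ha', h1, h2]
      have hold : ∀ X ∈ A.erase S, ∑ x ∈ X, vv s a' x = ∑ x ∈ X, vv s a x := by
        intro X hX
        have hXR : ∀ x ∈ X, x ∉ R := by
          intro x hx hxR
          rw [hR, Finset.mem_sdiff] at hxR
          rcases key X (Finset.mem_of_mem_erase hX) with h | h
          · obtain ⟨Y, hY, hXY⟩ := kid X hX h
            exact hxR.2 (Finset.mem_biUnion.2 ⟨Y, hY, hXY hx⟩)
          · exact Finset.disjoint_left.1 h hx hxR.1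
        apply Finset.sum_congr rfl
        intro x hx
        rw [hvv, if_neg, if_neg]
        · simp
        · rintro rfl; exact hXR _ hx hq.1
        · rintro rfl; exact hXR _ hx hp.1
      have hpS : p ∈ S := (Finset.mem_sdiff.1 hp.1).1
      have hqS : q ∈ S := (Finset.mem_sdiff.1 hq.1).1
      have hsum : ∑ x ∈ S, vv s a' x = τ S := by
        simp only [hvv, Finset.sum_add_distrib, Finset.sum_ite_eq', hpS, hqS, if_true]
        have : ((d.1, 0) + (0, d.2) : K4) = d := by ext <;> simp
        rw [this, hd]; abel
      refine ⟨a', ?_, ?_⟩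
      · intro X hX
        by_cases hXS : X = S
        · rw [hXS, hsum]; exact hτ S
        · have hX' := Finset.mem_erase.2 ⟨hXS, hX⟩
          rw [hold X hX']; exact a1 X hX'
      · intro X hX hm
        by_cases hXS : X = S
        · rw [hXS, hsum]
        · have hX' := Finset.mem_erase.2 ⟨hXS, hX⟩
          have hn := notsub X hX' hm
          rw [hold X hX', a2 X hX' (maxA X hX' hn hm)]

theorem colA {α : Type} [DecidableEq α] (s : α → Bool) (A : Finset (Finset α)) (hl : Lam A)
    (hb : ∀ S ∈ A, Even S.card →
      (S.filter (fun x => s x = true)).card = (S.filter (fun x => s x = false)).card) :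
    ∃ a : α → ZMod 2, ∀ S ∈ A, S.Nonempty →
      ∃ i j, Odd (S.filter (fun x => s x = i ∧ a x = j)).card := by
  obtain ⟨a, h1, -⟩ := target s _ (A.filter (fun S => S.Nonempty ∧ Even S.card)) rfl
    (fun X hX Y hY => hl X (Finset.mem_filter.1 hX).1 Y (Finset.mem_filter.1 hY).1)
    (fun X hX => ⟨(Finset.mem_filter.1 hX).2.1, hb X (Finset.mem_filter.1 hX).1 (Finset.mem_filter.1 hX).2.2⟩)
    (fun _ => (1, 1)) (fun _ => by decide)
  refine ⟨a, fun S hS hne => ?_⟩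
  by_contra hcon
  push Not at hcon
  simp only [Nat.not_odd_iff_even] at hcon
  have z2 : ∀ z : ZMod 2, z = 0 ∨ z = 1 := by decide
  -- classes even
  have hcl : ∀ i, Even (S.filter (fun x => s x = i)).card := by
    intro i
    have := Finset.card_filter_add_card_filter_not (s := S.filter (fun x => s x = i)) (fun x => a x = 0)
    rw [← this, Finset.filter_filter, Finset.filter_filter]
    refine Even.add (hcon i 0) ?_
    have : (S.filter (fun x => s x = i ∧ ¬ a x = 0)) = S.filter (fun x => s x = i ∧ a x = 1) := by
      apply Finset.filter_congr
      intro x _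
      rcases z2 (a x) with h | h <;> simp [h]
    rw [this]; exact hcon i 1
  have hev : Even S.card := by
    have := Finset.card_filter_add_card_filter_not (s := S) (fun x => s x = true)
    rw [← this]
    refine Even.add (hcl true) ?_
    simpa using hcl false
  refine h1 S (Finset.mem_filter.2 ⟨hS, hne, hev⟩) ?_
  have sumz : ∀ i, ∑ x ∈ S, (if s x = i then a x else 0) = 0 := by
    intro i
    have : ∀ x ∈ S, (if s x = i then a x else 0) = if (s x = i ∧ a x = 1) then (1 : ZMod 2) else 0 := by
      intro x _
      rcases z2 (a x) with h | h <;> simp [h]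
    rw [Finset.sum_congr rfl this, Finset.sum_boole]
    exact (ZMod.natCast_eq_zero_iff_even).2 (hcon i 1)
  ext
  · rw [Prod.fst_sum]
    refine Eq.trans ?_ (sumz true)
    apply Finset.sum_congr rfl
    intro x _
    cases h : s x <;> simp [vv, h]
  · rw [Prod.snd_sum]
    refine Eq.trans ?_ (sumz false)
    apply Finset.sum_congr rfl
    intro x _
    cases h : s x <;> simp [vv, h]

theorem core {α : Type} [Fintype α] [DecidableEq α] (A B : Finset (Finset α)) (hA : Lam A)
    (hB : Lam B) :
    ∃ c : α → Bool × ZMod 2 × ZMod 2, ∀ S, (S ∈ A ∨ S ∈ B) → S.Nonempty →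
      ∃ k, Odd (S.filter (fun x => c x = k)).card := by
  obtain ⟨M, m1, -, m3⟩ := lamMatch _ A rfl hA
  obtain ⟨N, n1, -, n3⟩ := lamMatch _ B rfl hB
  obtain ⟨s, s1, s2⟩ := twoInv _ M N m1 n1 rfl
  obtain ⟨a, ha⟩ := colA s A hA (fun S hS he => balanced S M s m1 s1 (m3 S hS) he)
  obtain ⟨b, hb⟩ := colA s B hB (fun S hS he => balanced S N s n1 s2 (n3 S hS) he)
  have z2 : ∀ z : ZMod 2, z = 0 ∨ z = 1 := by decide
  refine ⟨fun x => (s x, a x, b x), ?_⟩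
  rintro S (hS | hS) hne
  · obtain ⟨i, j, hij⟩ := ha S hS hne
    by_contra hcon
    push Not at hcon
    simp only [Nat.not_odd_iff_even] at hcon
    rw [← Nat.not_even_iff_odd] at hij
    apply hij
    rw [← Finset.card_filter_add_card_filter_not (fun x => b x = 0), Finset.filter_filter, Finset.filter_filter]
    refine Even.add ?_ ?_
    · refine (congrArg (fun F : Finset α => Even F.card) (Finset.filter_congr ?_)).mpr (hcon (i, j, 0))
      intro x _
      rcases z2 (a x) with h | h <;> rcases z2 (b x) with h' | h' <;> simp [Prod.ext_iff, h, h']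
    · refine (congrArg (fun F : Finset α => Even F.card) (Finset.filter_congr ?_)).mpr (hcon (i, j, 1))
      intro x _
      rcases z2 (a x) with h | h <;> rcases z2 (b x) with h' | h' <;> simp [Prod.ext_iff, h, h']
  · obtain ⟨i, j, hij⟩ := hb S hS hne
    by_contra hcon
    push Not at hcon
    simp only [Nat.not_odd_iff_even] at hcon
    rw [← Nat.not_even_iff_odd] at hij
    apply hij
    rw [← Finset.card_filter_add_card_filter_not (fun x => a x = 0), Finset.filter_filter, Finset.filter_filter]
    refine Even.add ?_ ?_
    · refine (congrArg (fun F : Finset α => Even F.card) (Finset.filter_congr ?_)).mpr (hcon (i, 0, j))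
      intro x _
      rcases z2 (a x) with h | h <;> rcases z2 (b x) with h' | h' <;> simp [Prod.ext_iff, h, h']
    · refine (congrArg (fun F : Finset α => Even F.card) (Finset.filter_congr ?_)).mpr (hcon (i, 1, j))
      intro x _
      rcases z2 (a x) with h | h <;> rcases z2 (b x) with h' | h' <;> simp [Prod.ext_iff, h, h']

def cr {V : Type} (e : Sym2 V) (S : Set V) : Prop := ∃ x y, e = s(x, y) ∧ x ∈ S ∧ y ∉ S

theorem cr_mk {V : Type} (x y : V) (S : Set V) :
    cr s(x, y) S ↔ (x ∈ S ∧ y ∉ S) ∨ (y ∈ S ∧ x ∉ S) := by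
  constructor
  · rintro ⟨a, b, h, ha, hb⟩
    rw [Sym2.eq_iff] at h
    rcases h with ⟨rfl, rfl⟩ | ⟨rfl, rfl⟩
    · exact Or.inl ⟨ha, hb⟩
    · exact Or.inr ⟨ha, hb⟩
  · rintro (⟨h1, h2⟩ | ⟨h1, h2⟩)
    · exact ⟨x, y, rfl, h1, h2⟩
    · exact ⟨y, x, Sym2.eq_swap, h1, h2⟩

structure TD {V : Type} (G T : SimpleGraph V) (D : T.edgeSet → Set V) : Prop where
  cut : ∀ (f : T.edgeSet) (e : Sym2 V), e ∈ G.edgeSet → (e ∈ fundCut G T f.1 ↔ cr e (D f))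
  tree : ∀ f g : T.edgeSet, cr g.1 (D f) → g = f
  self : ∀ f : T.edgeSet, cr f.1 (D f)
  conn : ∀ f : T.edgeSet, (T.induce (D f)).Connected
  root : ∀ x0 : V, ∃ r, T.Reachable x0 r ∧ (∀ f, r ∉ D f) ∧ ∀ w, T.Reachable x0 w →
    ∃ p : T.Walk r w, ∀ z ∈ p.support, ∀ f, z ∈ D f → w ∈ D f

theorem split_reach {V : Type} (T : SimpleGraph V) (a b u v : V) (h : T.Reachable u v) :
    (T.deleteEdges {s(a, b)}).Reachable u v ∨
      (((T.deleteEdges {s(a, b)}).Reachable u a ∨ (T.deleteEdges {s(a, b)}).Reachable u b) ∧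
       ((T.deleteEdges {s(a, b)}).Reachable v a ∨ (T.deleteEdges {s(a, b)}).Reachable v b)) := by
  obtain ⟨p⟩ := h
  induction p with
  | nil => exact Or.inl (SimpleGraph.Reachable.refl _)
  | @cons u w v hadj p ih =>
    by_cases he : s(u, w) = s(a, b)
    · right
      rw [Sym2.eq_iff] at he
      rcases he with ⟨rfl, rfl⟩ | ⟨rfl, rfl⟩
      · refine ⟨Or.inl (SimpleGraph.Reachable.refl _), ?_⟩
        rcases ih with h | h
        · exact Or.inr h.symm
        · exact h.2
      · refine ⟨Or.inr (SimpleGraph.Reachable.refl _), ?_⟩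
        rcases ih with h | h
        · exact Or.inl h.symm
        · exact h.2
    · have h1 : (T.deleteEdges {s(a, b)}).Reachable u w := by
        apply SimpleGraph.Adj.reachable
        rw [SimpleGraph.deleteEdges_adj]
        exact ⟨hadj, he⟩
      rcases ih with h | ⟨h2, h3⟩
      · exact Or.inl (h1.trans h)
      · right
        refine ⟨?_, h3⟩
        rcases h2 with h | h
        · exact Or.inl (h1.trans h)
        · exact Or.inr (h1.trans h)

theorem reach_of_walk {V : Type} (T : SimpleGraph V) (f : Sym2 V) {u v : V} (p : T.Walk u v)
    (hp : f ∉ p.edges) : (T.deleteEdges {f}).Reachable u v :=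
  ⟨p.toDeleteEdge f hp⟩

theorem exists_TD {V : Type} (G T : SimpleGraph V) (h : IsSpanningForest G T) :
    ∃ D : T.edgeSet → Set V, TD G T D := by
  classical
  obtain ⟨hle, hac, hre⟩ := h
  set rt : V → V := fun w => (Quot.out (T.connectedComponentMk w)) with hrt
  have rt_reach : ∀ w, T.Reachable (rt w) w := by
    intro w
    exact SimpleGraph.ConnectedComponent.exact (Quot.out_eq (T.connectedComponentMk w))
  have rt_eq : ∀ u v, T.Reachable u v → rt u = rt v := by
    intro u v huv
    simp only [hrt]
    rw [SimpleGraph.ConnectedComponent.sound huv]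
  set D : T.edgeSet → Set V := fun f => {w | ¬ (T.deleteEdges {f.1}).Reachable (rt w) w} with hD
  have mono : ∀ (f : Sym2 V) u v, (T.deleteEdges {f}).Reachable u v → T.Reachable u v :=
    fun f u v h => h.mono (SimpleGraph.deleteEdges_le _)
  -- main description
  have desc : ∀ f : T.edgeSet, ∃ a b, f.1 = s(a, b) ∧ a ∈ D f ∧ b ∉ D f ∧
      ∀ w, w ∈ D f ↔ (T.deleteEdges {f.1}).Reachable a w := by
    rintro ⟨f, hf⟩
    induction f using Sym2.ind with
    | _ a b =>
    have hadj : T.Adj a b := hf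
    have hbr : ¬ (T.deleteEdges {s(a, b)}).Reachable a b := by
      have := SimpleGraph.isAcyclic_iff_forall_edge_isBridge.1 hac hf
      exact this
    have hrab := rt_eq a b hadj.reachable
    have main : ∀ a b : V, T.Adj a b → ¬ (T.deleteEdges {s(a, b)}).Reachable a b →
        (T.deleteEdges {s(a, b)}).Reachable (rt b) b → rt a = rt b → ∀ w,
        (¬ (T.deleteEdges {s(a, b)}).Reachable (rt w) w) ↔ (T.deleteEdges {s(a, b)}).Reachable a w := by
      intro a b hadj hbr hb hrab w
      constructor
      · intro hw
        rcases split_reach T a b _ _ (rt_reach w) with h | ⟨h1, h2⟩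
        · exact absurd h hw
        · have hwb : rt w = rt b := by
            rcases h2 with h | h
            · rw [rt_eq _ _ (mono _ _ _ h), hrab]
            · exact rt_eq _ _ (mono _ _ _ h)
          rcases h2 with h | h
          · exact h.symm
          · exact absurd ((hwb ▸ hb).trans h.symm) hw
      · intro haw hw
        have : rt w = rt b := by rw [← hrab]; exact (rt_eq _ _ (mono _ _ _ haw)).symm
        rw [this] at hw
        exact hbr (haw.trans (hw.symm.trans hb))
    by_cases hb : (T.deleteEdges {s(a, b)}).Reachable (rt b) b
    · refine ⟨a, b, rfl, ?_, ?_, ?_⟩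
      · exact (main a b hadj hbr hb hrab a).2 (SimpleGraph.Reachable.refl _)
      · simpa [hD] using hb
      · exact main a b hadj hbr hb hrab
    · have ha : (T.deleteEdges {s(a, b)}).Reachable (rt a) a := by
        rcases split_reach T a b _ _ (rt_reach b) with h | ⟨h1, h2⟩
        · exact absurd h hb
        · rcases h1 with h | h
          · rw [hrab]; exact h
          · exact absurd h hb
      have hsw : s(a, b) = s(b, a) := Sym2.eq_swap
      refine ⟨b, a, hsw, ?_, ?_, ?_⟩
      · simpa [hD] using hb
      · simpa [hD] using ha
      · intro w
        have := main b a hadj.symm (by rw [← hsw]; exact fun h => hbr h.symm)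
          (by rw [← hsw]; exact ha) hrab.symm w
        rw [← hsw] at this
        exact this
  have cut : ∀ (f : T.edgeSet) (e : Sym2 V), e ∈ G.edgeSet → (e ∈ fundCut G T f.1 ↔ cr e (D f)) := by
    intro f e he
    have huv : ∀ u v, e = s(u, v) → rt u = rt v := by
      rintro u v rfl
      exact rt_eq u v ((hre u v).1 (SimpleGraph.Adj.reachable he))
    obtain ⟨a, b, -, -, -, hdesc⟩ := desc f
    constructor
    · rintro ⟨-, u, v, rfl, hn⟩
      rw [cr_mk]
      by_contra hc
      by_cases hu : u ∈ D f
      · by_cases hv : v ∈ D f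
        · exact hn (((hdesc u).1 hu).symm.trans ((hdesc v).1 hv))
        · exact hc (Or.inl ⟨hu, hv⟩)
      · by_cases hv : v ∈ D f
        · exact hc (Or.inr ⟨hv, hu⟩)
        · simp only [hD, Set.mem_ofPred_eq, not_not] at hu hv
          rw [huv u v rfl] at hu
          exact hn (hu.symm.trans hv)
    · rintro ⟨x, y, rfl, hx, hy⟩
      refine ⟨he, x, y, rfl, fun hxy => hy ?_⟩
      rw [hdesc] at hx ⊢
      exact hx.trans hxy
  refine ⟨D, cut, ?_, ?_, ?_, ?_⟩
  · rintro f ⟨g, hg⟩ hcr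
    obtain ⟨a, b, -, -, -, hdesc⟩ := desc f
    obtain ⟨x, y, hxy, hx, hy⟩ := hcr
    simp only at hxy
    subst hxy
    by_contra hne
    apply hy
    rw [hdesc] at hx ⊢
    refine hx.trans (SimpleGraph.Adj.reachable ?_)
    rw [SimpleGraph.deleteEdges_adj]
    refine ⟨hg, fun h => hne ?_⟩
    exact Subtype.ext h
  · intro f
    obtain ⟨a, b, h, ha, hb, -⟩ := desc f
    exact ⟨a, b, h, ha, hb⟩
  · intro f
    obtain ⟨a, b, h, ha, hb, hdesc⟩ := desc f
    apply SimpleGraph.induce_connected_of_patches a ha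
    intro v hv
    obtain ⟨p⟩ := (hdesc v).1 hv
    set q := p.mapLe (SimpleGraph.deleteEdges_le (G := T) {f.1}) with hq
    refine ⟨{x | x ∈ q.support}, ?_, q.start_mem_support, q.end_mem_support, ?_⟩
    · intro x hx
      rw [hdesc]
      have hx' : x ∈ p.support := by
        have : x ∈ q.support := hx
        rw [hq, SimpleGraph.Walk.support_mapLe_eq_support] at this
        exact this
      exact ⟨p.takeUntil x hx'⟩
    · exact q.connected_induce_support.preconnected _ _
  · intro x0
    refine ⟨rt x0, (rt_reach x0).symm, ?_, ?_⟩
    · intro f hf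
      have : rt (rt x0) = rt x0 := rt_eq _ _ (rt_reach x0)
      simp only [hD, Set.mem_ofPred_eq] at hf
      rw [this] at hf
      exact hf (SimpleGraph.Reachable.refl _)
    · intro w hw
      obtain ⟨p0⟩ := (rt_reach x0).trans hw
      set p := p0.toPath with hp
      refine ⟨p.1, ?_⟩
      intro z hz f hzf
      by_contra hwf
      simp only [hD, Set.mem_ofPred_eq, not_not] at hzf hwf
      rw [← rt_eq _ _ hw] at hwf
      obtain ⟨q⟩ := hwf
      set q' := (q.mapLe (SimpleGraph.deleteEdges_le (G := T) {f.1})) with hq'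
      have hfq : f.1 ∉ q'.edges := by
        rw [hq', SimpleGraph.Walk.edges_mapLe_eq_edges]
        intro hh
        have := q.edges_subset_edgeSet hh
        simp at this
      have : q'.toPath = p := hac.path_unique _ _
      have hfp : f.1 ∉ p.1.edges := by
        rw [← this]
        exact fun hh => hfq (q'.edges_toPath_subset hh)
      apply hzf
      have hz0 : rt z = rt x0 := (rt_eq _ _ ((rt_reach x0).symm.trans ⟨p.1.takeUntil z hz⟩)).symm
      rw [hz0]
      apply reach_of_walk T f.1 (p.1.takeUntil z hz)
      exact fun hh => hfp (p.1.edges_takeUntil_subset hz hh)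

theorem TD.lam {V : Type} {G T : SimpleGraph V} {D : T.edgeSet → Set V} (td : TD G T D)
    (f g : T.edgeSet) : D f ⊆ D g ∨ D g ⊆ D f ∨ Disjoint (D f) (D g) := by
  by_contra hcon
  push Not at hcon
  obtain ⟨h1, h2, h3⟩ := hcon
  obtain ⟨y, hyf, hyg⟩ := Set.not_subset.1 h1
  obtain ⟨z, hzg, hzf⟩ := Set.not_subset.1 h2
  obtain ⟨x, hxf, hxg⟩ := Set.not_disjoint_iff.1 h3
  obtain ⟨p⟩ := (td.conn f).preconnected ⟨x, hxf⟩ ⟨y, hyf⟩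
  obtain ⟨d, -, hd1, hd2⟩ := p.exists_boundary_dart {w | w.1 ∈ D g} hxg hyg
  have hadj : T.Adj d.fst.1 d.snd.1 := d.adj
  have e1 := td.tree g ⟨s(d.fst.1, d.snd.1), hadj⟩ ⟨_, _, rfl, hd1, hd2⟩
  obtain ⟨r, hr1, hr2, hr3⟩ := td.root z
  obtain ⟨q, hq⟩ := hr3 z (SimpleGraph.Reachable.refl _)
  obtain ⟨d', hd', hd1', hd2'⟩ := q.exists_boundary_dart {w | w ∉ D g} (hr2 g) (by simpa using hzg)
  have hd2'' : d'.snd ∈ D g := by simpa using hd2'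
  have e2 := td.tree g ⟨s(d'.fst, d'.snd), d'.adj⟩ ⟨_, _, Sym2.eq_swap, hd2'', hd1'⟩
  have : s(d.fst.1, d.snd.1) = s(d'.fst, d'.snd) := by
    rw [← e2] at e1; exact congrArg Subtype.val e1
  have hm : d'.fst ∈ D f := by
    rw [Sym2.eq_iff] at this
    rcases this with ⟨h, -⟩ | ⟨-, h⟩
    · rw [← h]; exact d.fst.2
    · rw [← h]; exact d.snd.2
  exact hzf (hq d'.fst (q.dart_fst_mem_support_of_mem_darts hd') f hm)

theorem TD.inj {V : Type} {G T : SimpleGraph V} {D : T.edgeSet → Set V} (td : TD G T D)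
    {f g : T.edgeSet} (h : D f = D g) : f = g :=
  td.tree g f (h ▸ td.self f)

/-- a non-tree edge crossing both -/
def exits {V : Type} (G T : SimpleGraph V) (D : T.edgeSet → Set V) (f g : T.edgeSet) : Prop :=
  ∃ e, e ∈ G.edgeSet ∧ e ∉ T.edgeSet ∧ cr e (D f) ∧ cr e (D g)

def IsLd {V : Type} (G T : SimpleGraph V) (D : T.edgeSet → Set V) (Ld : T.edgeSet → Prop) : Prop :=
  ∀ f, Ld f ↔ ∀ g, D f ⊂ D g → Ld g → ¬ exits G T D f g

theorem exists_Ld {V : Type} [Fintype V] (G T : SimpleGraph V) (D : T.edgeSet → Set V) :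
    ∃ Ld, IsLd G T D Ld := by
  have wf : WellFounded (InvImage (fun a b : Set V => a > b) D) :=
    InvImage.wf D (wellFounded_gt)
  refine ⟨wf.fix (fun f ih => ∀ g, ∀ (h : D f ⊂ D g), ih g h → ¬ exits G T D f g), ?_⟩
  intro f
  rw [wf.fix_eq]

def HG {V : Type} (G T : SimpleGraph V) (D : T.edgeSet → Set V) (Ld : T.edgeSet → Prop) :
    SimpleGraph T.edgeSet where
  Adj g h := Ld g ∧ Ld h ∧ Disjoint (D g) (D h) ∧ ∃ x ∈ D g, ∃ y ∈ D h, G.Adj x y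
  symm := ⟨fun g h ⟨h1, h2, h3, x, hx, y, hy, hxy⟩ => ⟨h2, h1, h3.symm, y, hy, x, hx, hxy.symm⟩⟩
  loopless := ⟨fun g ⟨_, _, h3, x, hx, _⟩ => Set.disjoint_left.1 h3 hx hx⟩

section
variable {V : Type} {G T : SimpleGraph V} {D : T.edgeSet → Set V} {Ld : T.edgeSet → Prop}

theorem ld_disj (td : TD G T D) (hLd : IsLd G T D Ld) {g h : T.edgeSet} (hg : Ld g) (hh : Ld h)
    (hgh : g ≠ h) {e : Sym2 V} (he : e ∈ G.edgeSet) (heT : e ∉ T.edgeSet) (h1 : cr e (D g))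
    (h2 : cr e (D h)) : Disjoint (D g) (D h) := by
  have hne : D g ≠ D h := fun h => hgh (td.inj h)
  rcases td.lam g h with h | h | h
  · exact absurd ⟨e, he, heT, h1, h2⟩ ((hLd g).1 hg _ (h.ssubset_of_ne hne) hh)
  · exact absurd ⟨e, he, heT, h2, h1⟩ ((hLd _).1 hh g (h.ssubset_of_ne hne.symm) hg)
  · exact h

theorem above (td : TD G T D) (hLd : IsLd G T D Ld) {g h : T.edgeSet}
    (hadj : (HG G T D Ld).Adj g h) (k : T.edgeSet) (hk : Ld k) (hgk : D g ⊂ D k) : D h ⊂ D k := by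
  obtain ⟨hg, hh, hd, x, hx, y, hy, hxy⟩ := hadj
  have hyg : y ∉ D g := fun h' => Set.disjoint_left.1 hd h' hy
  have hxh : x ∉ D h := fun h' => Set.disjoint_left.1 hd hx h'
  have c1 : cr s(x, y) (D g) := ⟨x, y, rfl, hx, hyg⟩
  have c2 : cr s(x, y) (D h) := ⟨y, x, Sym2.eq_swap, hy, hxh⟩
  have hT : s(x, y) ∉ T.edgeSet := by
    intro hT
    have e1 := td.tree g ⟨_, hT⟩ c1
    have e2 := td.tree h ⟨_, hT⟩ c2
    have : g = h := e1.symm.trans e2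
    subst this
    exact hxh hx
  have hyk : y ∈ D k := by
    by_contra hyk
    exact (hLd g).1 hg k hgk hk ⟨s(x, y), hxy, hT, c1, ⟨x, y, rfl, hgk.1 hx, hyk⟩⟩
  rcases td.lam h k with h' | h' | h'
  · exact ⟨h', fun hk' => hxh (hk' (hgk.1 hx))⟩
  · exact absurd (h' (hgk.1 hx)) hxh
  · exact absurd hyk (Set.disjoint_left.1 h' hy)

theorem noMinor (td : TD G T D) (hle : T ≤ G)
    (hre : ∀ u v : V, G.Reachable u v ↔ T.Reachable u v) (hLd : IsLd G T D Ld) (n : ℕ)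
    (hn : 2 ≤ n) (hm : HasCliqueMinor (HG G T D Ld) n) : HasCliqueMinor G (n + 1) := by
  obtain ⟨S, hS1, hS2, hS3, hS4⟩ := hm
  set U : Set T.edgeSet := ⋃ i, S i with hU
  have memU : ∀ i, ∀ g ∈ S i, g ∈ U := fun i g hg => Set.mem_iUnion.2 ⟨i, hg⟩
  -- reachability within U
  have reach : ∀ g ∈ U, ∀ h ∈ U, (HG G T D Ld).Reachable g h := by
    have r1 : ∀ i, ∀ g ∈ S i, ∀ h ∈ S i, (HG G T D Ld).Reachable g h := by
      intro i g hg h hh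
      exact ((hS3 i).preconnected ⟨g, hg⟩ ⟨h, hh⟩).map (SimpleGraph.Embedding.induce (S i)).toHom
    intro g hg h hh
    obtain ⟨i, hi⟩ := Set.mem_iUnion.1 hg
    obtain ⟨j, hj⟩ := Set.mem_iUnion.1 hh
    by_cases hij : i = j
    · subst hij; exact r1 i g hi h hj
    · obtain ⟨u, hu, v, hv, huv⟩ := hS4 i j hij
      exact (r1 i g hi u hu).trans (huv.reachable.trans (r1 j v hv h hj))
  have ldU : ∀ g ∈ U, Ld g := by
    intro g hg
    obtain ⟨i, hi⟩ := Set.mem_iUnion.1 hg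
    obtain ⟨j, hj⟩ : ∃ j, j ≠ i := by
      haveI : Nontrivial (Fin n) := Fin.nontrivial_iff_two_le.2 hn
      exact exists_ne i
    obtain ⟨h, hh⟩ := hS1 j
    have hne : g ≠ h := by
      rintro rfl
      exact Set.disjoint_left.1 (hS2 hj) hh hi
    obtain ⟨p⟩ := reach g hg h (memU j h hh)
    cases p with
    | nil => exact absurd rfl hne
    | cons hadj _ => exact hadj.1
  have aboveU : ∀ g h, (HG G T D Ld).Reachable g h → ∀ k, Ld k → D g ⊂ D k → D h ⊂ D k := by
    rintro g h ⟨p⟩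
    induction p with
    | nil => exact fun k _ h => h
    | cons hadj _ ih => exact fun k hk h => ih k hk (above td hLd hadj k hk h)
  have disjU : ∀ g ∈ U, ∀ h ∈ U, g ≠ h → Disjoint (D g) (D h) := by
    intro g hg h hh hgh
    have hne : D g ≠ D h := fun h => hgh (td.inj h)
    rcases td.lam g h with h' | h' | h'
    · exact absurd (aboveU g h (reach g hg h hh) h (ldU h hh) (h'.ssubset_of_ne hne)) (ssubset_irrefl _)
    · exact absurd (aboveU h g (reach h hh g hg) g (ldU g hg) (h'.ssubset_of_ne hne.symm)) (ssubset_irrefl _)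
    · exact h'
  have Dreach : ∀ g, ∀ x ∈ D g, ∀ y ∈ D g, T.Reachable x y := by
    intro g x hx y hy
    exact ((td.conn g).preconnected ⟨x, hx⟩ ⟨y, hy⟩).map (SimpleGraph.Embedding.induce (D g)).toHom
  have compU : ∀ g h, (HG G T D Ld).Reachable g h → ∀ x ∈ D g, ∀ y ∈ D h, T.Reachable x y := by
    rintro g h ⟨p⟩
    induction p with
    | nil => exact Dreach _
    | cons hadj _ ih =>
      intro x hx y hy
      obtain ⟨_, _, _, a, ha, b, hb, hab⟩ := hadj
      exact (Dreach _ x hx a ha).trans (((hre a b).1 hab.reachable).trans (ih b hb y hy))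
  obtain ⟨g0, hg0⟩ := hS1 ⟨0, by omega⟩
  have hg0U := memU _ g0 hg0
  obtain ⟨x0, y0, -, hx0, -⟩ := td.self g0
  obtain ⟨r, hr1, hr2, hr3⟩ := td.root x0
  set B : Set V := {w | T.Reachable x0 w ∧ ∀ g ∈ U, w ∉ D g} with hB
  have hrB : r ∈ B := ⟨hr1, fun g _ => hr2 g⟩
  have hBconn : (G.induce B).Connected := by
    apply SimpleGraph.induce_connected_of_patches r hrB
    intro w hw
    obtain ⟨p, hp⟩ := hr3 w hw.1
    set q := p.mapLe hle with hq
    have hqs : q.support = p.support := SimpleGraph.Walk.support_mapLe_eq_support _ _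
    refine ⟨{x | x ∈ q.support}, ?_, q.start_mem_support, q.end_mem_support, ?_⟩
    · intro x hx
      have hx' : x ∈ p.support := by rw [← hqs]; exact hx
      classical
      exact ⟨hr1.trans ⟨p.takeUntil x hx'⟩, fun g hg hxg => hw.2 g hg (hp x hx' g hxg)⟩
    · exact q.connected_induce_support.preconnected _ _
  have DconnG : ∀ g, (G.induce (D g)).Connected := by
    intro g
    exact (td.conn g).mono (fun a b hab => hle hab)
  set S' : Fin n → Set V := fun i => {x | ∃ g ∈ S i, x ∈ D g} with hS'
  have S'conn : ∀ i, (G.induce (S' i)).Connected := by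
    intro i
    obtain ⟨g, hg⟩ := hS1 i
    obtain ⟨x, y, -, hx, -⟩ := td.self g
    have step : ∀ (a b : S i), ((HG G T D Ld).induce (S i)).Reachable a b →
        ∀ x, ∀ hx : x ∈ D a.1, ∀ y, ∀ hy : y ∈ D b.1,
        (G.induce (S' i)).Reachable ⟨x, a.1, a.2, hx⟩ ⟨y, b.1, b.2, hy⟩ := by
      have inner : ∀ (a : S i), ∀ x, ∀ hx : x ∈ D a.1, ∀ y, ∀ hy : y ∈ D a.1,
        (G.induce (S' i)).Reachable ⟨x, a.1, a.2, hx⟩ ⟨y, a.1, a.2, hy⟩ := by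
        intro a x hx y hy
        exact ((DconnG a.1).preconnected ⟨x, hx⟩ ⟨y, hy⟩).map
          (SimpleGraph.induceHomOfLE G (s := D a.1) (s' := S' i) (fun z hz => ⟨a.1, a.2, hz⟩)).toHom
      rintro a b ⟨p⟩
      induction p with
      | nil => exact inner _
      | @cons a c b hadj _ ih =>
        intro x hx y hy
        obtain ⟨_, _, _, u, hu, v, hv, huv⟩ := hadj
        refine (inner a x hx u hu).trans (SimpleGraph.Reachable.trans ?_ (ih v hv y hy))
        apply SimpleGraph.Adj.reachable
        exact huv
    haveI : Nonempty (S' i) := ⟨⟨x, g, hg, hx⟩⟩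
    refine ⟨?_⟩
    rintro ⟨u, a, ha, hu⟩ ⟨v, b, hb, hv⟩
    exact step ⟨a, ha⟩ ⟨b, hb⟩ ((hS3 i).preconnected _ _) u hu v hv
  have S'B : ∀ i, Disjoint B (S' i) := by
    intro i
    rw [Set.disjoint_left]
    rintro x hx ⟨g, hg, hxg⟩
    exact hx.2 g (memU i g hg) hxg
  have S'adj : ∀ i, ∃ u ∈ B, ∃ v ∈ S' i, G.Adj u v := by
    intro i
    obtain ⟨g, hg⟩ := hS1 i
    obtain ⟨a, b, hab, ha, hb⟩ := td.self g
    have hT : T.Adj a b := by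
      have := g.2; rw [hab] at this; exact this
    refine ⟨b, ⟨?_, ?_⟩, a, ⟨g, hg, ha⟩, (hle hT).symm⟩
    · exact (compU g0 g (reach g0 hg0U g (memU i g hg)) x0 hx0 a ha).trans hT.reachable
    · intro h hh hbh
      by_cases hgh : g = h
      · subst hgh; exact hb hbh
      · have hdis := disjU g (memU i g hg) h hh hgh
        apply hgh
        apply td.tree h g
        exact ⟨b, a, by rw [hab, Sym2.eq_swap], hbh, fun h' => Set.disjoint_left.1 hdis ha h'⟩
  refine ⟨Fin.cons B S', ?_, ?_, ?_, ?_⟩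
  · intro i
    refine Fin.cases ?_ ?_ i
    · exact ⟨r, hrB⟩
    · intro i
      obtain ⟨g, hg⟩ := hS1 i
      obtain ⟨x, y, -, hx, -⟩ := td.self g
      exact ⟨x, g, hg, hx⟩
  · intro i j
    refine Fin.cases ?_ ?_ i
    · refine Fin.cases ?_ ?_ j
      · intro h; exact absurd rfl h
      · intro j _; exact S'B j
    · intro i
      refine Fin.cases ?_ ?_ j
      · intro _; exact (S'B i).symm
      · intro j hij
        have hij' : i ≠ j := fun h => hij (by rw [h])
        show Disjoint (S' i) (S' j)
        rw [Set.disjoint_left]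
        rintro x ⟨g, hg, hxg⟩ ⟨h, hh, hxh⟩
        have hgh : g ≠ h := by
          rintro rfl
          exact Set.disjoint_left.1 (hS2 hij') hg hh
        exact Set.disjoint_left.1 (disjU g (memU i g hg) h (memU j h hh) hgh) hxg hxh
  · intro i
    refine Fin.cases ?_ ?_ i
    · exact hBconn
    · exact S'conn
  · intro i j
    refine Fin.cases ?_ ?_ i
    · refine Fin.cases ?_ ?_ j
      · intro h; exact absurd rfl h
      · intro j _; exact S'adj j
    · intro i
      refine Fin.cases ?_ ?_ j
      · intro _
        obtain ⟨u, hu, v, hv, huv⟩ := S'adj i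
        exact ⟨v, hv, u, hu, huv.symm⟩
      · intro j hij
        have hij' : i ≠ j := fun h => hij (by rw [h])
        obtain ⟨g, hg, h, hh, _, _, _, x, hx, y, hy, hxy⟩ := hS4 i j hij'
        exact ⟨x, ⟨g, hg, hx⟩, y, ⟨h, hh, hy⟩, hxy⟩

end

section
variable {V : Type} {G T : SimpleGraph V} {D : T.edgeSet → Set V} {Ld : T.edgeSet → Prop}

noncomputable def lev (D : T.edgeSet → Set V) (Ld : T.edgeSet → Prop) (f : T.edgeSet) : ℕ :=
  {g | Ld g ∧ D f ⊆ D g}.ncard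

noncomputable def levE (D : T.edgeSet → Set V) (Ld : T.edgeSet → Prop) (e : Sym2 V) : ℕ :=
  {g | Ld g ∧ ∀ z ∈ e, z ∈ D g}.ncard

theorem lev_cases [Finite V] (td : TD G T D) (hLd : IsLd G T D Ld) {f : T.edgeSet} {e : Sym2 V}
    (he : e ∈ G.edgeSet) (heT : e ∉ T.edgeSet) (hcr : cr e (D f)) :
    (lev D Ld f = levE D Ld e) ∨
    (lev D Ld f = levE D Ld e + 1) ∧ (∃ g, Ld g ∧ D f ⊆ D g ∧ cr e (D g)) := by
  obtain ⟨x, y, rfl, hx, hy⟩ := hcr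
  have sub : ∀ g, Ld g → (∀ z ∈ s(x, y), z ∈ D g) → D f ⊆ D g := by
    intro g _ hz
    have hxg := hz x (by simp)
    have hyg := hz y (by simp)
    rcases td.lam f g with h | h | h
    · exact h
    · exact absurd (h hyg) hy
    · exact absurd hxg (Set.disjoint_left.1 h hx)
  by_cases hex : ∃ g, Ld g ∧ D f ⊆ D g ∧ cr s(x, y) (D g)
  · right
    refine ⟨?_, hex⟩
    obtain ⟨g, hg, hfg, hc⟩ := hex
    have hyg : y ∉ D g := by
      rw [cr_mk] at hc
      rcases hc with h | h
      · exact h.2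
      · exact absurd (hfg hx) h.2
    have hset : {k | Ld k ∧ D f ⊆ D k} = insert g {k | Ld k ∧ ∀ z ∈ s(x, y), z ∈ D k} := by
      ext k
      simp only [Set.mem_insert_iff, Set.mem_ofPred_eq]
      constructor
      · rintro ⟨hk, hfk⟩
        by_cases hyk : y ∈ D k
        · right
          refine ⟨hk, ?_⟩
          intro z hz
          rcases Sym2.mem_iff.1 hz with rfl | rfl
          · exact hfk hx
          · exact hyk
        · left
          by_contra hne
          have := ld_disj td hLd hk hg hne he heT ⟨x, y, rfl, hfk hx, hyk⟩ hc
          exact Set.disjoint_left.1 this (hfk hx) (hfg hx)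
      · rintro (rfl | ⟨hk, hz⟩)
        · exact ⟨hg, hfg⟩
        · exact ⟨hk, sub k hk hz⟩
    rw [lev, hset, Set.ncard_insert_of_notMem, levE]
    · rintro ⟨-, h⟩
      exact hyg (h y (by simp))
  · left
    rw [lev, levE]
    congr 1
    ext k
    simp only [Set.mem_ofPred_eq]
    constructor
    · rintro ⟨hk, hfk⟩
      refine ⟨hk, ?_⟩
      intro z hz
      rcases Sym2.mem_iff.1 hz with rfl | rfl
      · exact hfk hx
      · by_contra hyk
        exact hex ⟨k, hk, hfk, x, _, rfl, hfk hx, hyk⟩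
    · rintro ⟨hk, hz⟩
      exact ⟨hk, sub k hk hz⟩

theorem lev_of_ld [Finite V] (td : TD G T D) (hLd : IsLd G T D Ld) {f g : T.edgeSet} {e : Sym2 V}
    (he : e ∈ G.edgeSet) (heT : e ∉ T.edgeSet) (hcr : cr e (D f)) (hg : Ld g) (hfg : D f ⊆ D g)
    (hc : cr e (D g)) : lev D Ld f = levE D Ld e + 1 := by
  obtain ⟨x, y, rfl, hx, hy⟩ := hcr
  have hyg : y ∉ D g := by
    rw [cr_mk] at hc
    rcases hc with h | h
    · exact h.2
    · exact absurd (hfg hx) h.2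
  rcases lev_cases td hLd he heT ⟨x, y, rfl, hx, hy⟩ with h | h
  · exfalso
    have : levE D Ld s(x, y) < lev D Ld f := by
      rw [lev, levE]
      apply Set.ncard_lt_ncard _ (Set.toFinite _)
      rw [Set.ssubset_iff_of_subset]
      · refine ⟨g, ⟨hg, hfg⟩, ?_⟩
        rintro ⟨-, h⟩
        exact hyg (h y (by simp))
      · rintro k ⟨hk, hz⟩
        refine ⟨hk, ?_⟩
        have hxg := hz x (by simp)
        have hyg := hz y (by simp)
        rcases td.lam f k with h | h | h
        · exact h
        · exact absurd (h hyg) hy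
        · exact absurd hxg (Set.disjoint_left.1 h hx)
    omega
  · exact h.1

/-- at most one crossed leader above `f` -/
theorem ld_unique (td : TD G T D) (hLd : IsLd G T D Ld) {f g g' : T.edgeSet} {e e' : Sym2 V}
    (he : e ∈ G.edgeSet) (heT : e ∉ T.edgeSet) (he' : e' ∈ G.edgeSet) (heT' : e' ∉ T.edgeSet)
    (hf : cr e (D f)) (hf' : cr e' (D f)) (hg : Ld g) (hg' : Ld g') (hfg : D f ⊆ D g)
    (hfg' : D f ⊆ D g') (hc : cr e (D g)) (hc' : cr e' (D g')) : g = g' := by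
  have aux : ∀ (g g' : T.edgeSet) (e : Sym2 V), e ∈ G.edgeSet → e ∉ T.edgeSet → cr e (D f) →
      Ld g → Ld g' → D f ⊆ D g → cr e (D g') → D g ⊆ D g' → g = g' := by
    intro g g' e he heT hf hg hg' hfg hc' hgg'
    by_contra hne
    refine (hLd g).1 hg g' (hgg'.ssubset_of_ne (fun h => hne (td.inj h))) hg' ⟨e, he, heT, ?_, hc'⟩
    obtain ⟨x, y, rfl, hx, hy⟩ := hf
    refine ⟨x, y, rfl, hfg hx, fun hyg => ?_⟩
    rw [cr_mk] at hc'
    rcases hc' with h | h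
    · exact h.2 (hgg' hyg)
    · exact h.2 (hgg' (hfg hx))
  rcases td.lam g g' with h | h | h
  · exact aux g g' e' he' heT' hf' hg hg' hfg hc' h
  · exact (aux g' g e he heT hf hg' hg hfg' hc h).symm
  · obtain ⟨x, y, -, hx, -⟩ := hf
    exact absurd (hfg' hx) (Set.disjoint_left.1 h (hfg hx))

theorem hg_adj (td : TD G T D) (hLd : IsLd G T D Ld) {g h : T.edgeSet} (hg : Ld g) (hh : Ld h)
    (hgh : g ≠ h) {e : Sym2 V} (he : e ∈ G.edgeSet) (heT : e ∉ T.edgeSet) (h1 : cr e (D g))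
    (h2 : cr e (D h)) : (HG G T D Ld).Adj g h := by
  have hd := ld_disj td hLd hg hh hgh he heT h1 h2
  refine ⟨hg, hh, hd, ?_⟩
  obtain ⟨x, y, rfl, hx, hy⟩ := h1
  rw [cr_mk] at h2
  rcases h2 with h | h
  · exact absurd h.1 (Set.disjoint_left.1 hd hx)
  · exact ⟨x, hx, y, h.1, he⟩

theorem pair_unique (td : TD G T D) (hLd : IsLd G T D Ld) {g h g' h' : T.edgeSet} (hg : Ld g)
    (hh : Ld h) (hg' : Ld g') (hh' : Ld h') (hgh : g ≠ h) (hgh' : g' ≠ h')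
    {e : Sym2 V} (he : e ∈ G.edgeSet) (heT : e ∉ T.edgeSet) (h1 : cr e (D g)) (h2 : cr e (D h))
    (h3 : cr e (D g')) (h4 : cr e (D h')) : s(g, h) = s(g', h') := by
  have hd : ∀ a b, Ld a → Ld b → cr e (D a) → cr e (D b) → a ≠ b → Disjoint (D a) (D b) :=
    fun a b ha hb h1 h2 hab => ld_disj td hLd ha hb hab he heT h1 h2
  have three : ∀ a b c, Ld a → Ld b → Ld c → cr e (D a) → cr e (D b) → cr e (D c) → a ≠ b →
      c = a ∨ c = b := by
    intro a b c ha hb hc c1 c2 c3 hab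
    by_contra hcon
    push Not at hcon
    have d1 := hd a b ha hb c1 c2 hab
    have d2 := hd c a hc ha c3 c1 hcon.1
    have d3 := hd c b hc hb c3 c2 hcon.2
    obtain ⟨x, y, rfl, hx, hy⟩ := c1
    rw [cr_mk] at c2 c3
    rw [Set.disjoint_left] at d1 d2 d3
    rcases c2 with c2 | c2
    · exact d1 hx c2.1
    · rcases c3 with c3 | c3
      · exact d2 c3.1 hx
      · exact d3 c3.1 c2.1
  have e1 := three g h g' hg hh hg' h1 h2 h3 hgh
  have e2 := three g h h' hg hh hh' h1 h2 h4 hgh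
  rw [Sym2.eq_iff]
  grind

end

/-- If every finite graph with no `K_{t-1}` minor has star-arboricity at most `ℓ`, then for
every finite graph `G` with no `K_t` minor and every spanning forest `T` of `G`, the
non-forest edges can be `(16ℓ+1)`-colored so that each non-bridge forest edge sees some
color an odd number of times on its fundamental cut (minus the edge itself). -/
theorem fundamental_cuts_coloring (t ℓ : ℕ) (ht : 3 ≤ t) (hℓ : 1 ≤ ℓ)
    (hstar : ∀ (W : Type) [Fintype W] (H : SimpleGraph W),
      ¬ HasCliqueMinor H (t - 1) → StarArboricityLE H ℓ) :
    ∀ (V : Type) [Fintype V] (G T : SimpleGraph V),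
      ¬ HasCliqueMinor G t → IsSpanningForest G T →
      ∃ φ : Sym2 V → Fin (16 * ℓ + 1),
        ∀ f ∈ T.edgeSet, ¬ G.IsBridge f →
          ∃ i : Fin (16 * ℓ + 1),
            Odd {e | e ∈ fundCut G T f \ {f} ∧ φ e = i}.ncard := by
  intro V _ G T hG hT
  classical
  obtain ⟨D, td⟩ := exists_TD G T hT
  obtain ⟨hle, hac, hre⟩ := hT
  obtain ⟨Ld, hLd⟩ := exists_Ld G T D
  obtain ⟨ψ, hψ⟩ := hstar T.edgeSet (HG G T D Ld) (by
    intro hm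
    apply hG
    have := noMinor td hle hre hLd (t - 1) (by omega) hm
    rwa [Nat.sub_add_cancel (by omega)] at this)
  -- two-colourings
  have hχ : ∀ i : Fin ℓ, ∃ χ : T.edgeSet → Fin 2, ∀ g h, (HG G T D Ld).Adj g h → ψ s(g, h) = i →
      χ g ≠ χ h := by
    intro i
    obtain ⟨c⟩ := (hψ i).1.colorable_two
    refine ⟨c, fun g h hadj hi => c.valid ?_⟩
    rw [SimpleGraph.fromEdgeSet_adj]
    exact ⟨⟨hadj, hi⟩, hadj.ne⟩
  choose χ hχ using hχ
  -- types
  have hty : ∀ e : Sym2 V, ∃ i : Fin ℓ, e ∈ G.edgeSet → e ∉ T.edgeSet → ∀ g h, Ld g → Ld h → g ≠ h →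
      cr e (D g) → cr e (D h) → ψ s(g, h) = i := by
    intro e
    by_cases hex : e ∈ G.edgeSet ∧ e ∉ T.edgeSet ∧ ∃ g h, Ld g ∧ Ld h ∧ g ≠ h ∧
      cr e (D g) ∧ cr e (D h)
    · obtain ⟨he, heT, g, h, hg, hh, hgh, c1, c2⟩ := hex
      refine ⟨ψ s(g, h), fun _ _ g' h' hg' hh' hgh' c3 c4 => ?_⟩
      rw [pair_unique td hLd hg hh hg' hh' hgh hgh' he heT c1 c2 c3 c4]
    · refine ⟨⟨0, by omega⟩, fun he heT g h hg hh hgh c1 c2 => ?_⟩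
      exact absurd ⟨he, heT, g, h, hg, hh, hgh, c1, c2⟩ hex
  choose ty hty using hty
  let pe : Sym2 V → Bool := fun e => decide (Even (levE D Ld e + 1))
  let SS : Bool → Fin ℓ → T.edgeSet → T.edgeSet → Finset (Sym2 V) := fun π i f g =>
    Finset.univ.filter (fun e => (e ∈ G.edgeSet ∧ e ∉ T.edgeSet) ∧ pe e = π ∧ ty e = i ∧
      cr e (D f) ∧ cr e (D g))
  have memSS : ∀ π i f g e, e ∈ SS π i f g ↔ ((e ∈ G.edgeSet ∧ e ∉ T.edgeSet) ∧ pe e = π ∧ ty e = i ∧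
      cr e (D f) ∧ cr e (D g)) := by
    intro π i f g e; simp [SS]
  let AA : Bool → Fin ℓ → Fin 2 → Finset (Finset (Sym2 V)) := fun π i b =>
    ((Finset.univ : Finset (T.edgeSet × T.edgeSet)).filter
      (fun p => Ld p.2 ∧ D p.1 ⊆ D p.2 ∧ χ i p.2 = b)).image (fun p => SS π i p.1 p.2)
  have lamAA : ∀ π i b, Lam (AA π i b) := by
    intro π i b X hX Y hY
    simp only [AA, Finset.mem_image, Finset.mem_filter, Finset.mem_univ, true_and, Prod.exists] at hX hY
    obtain ⟨f, g, ⟨hg, hfg, hb⟩, rfl⟩ := hX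
    obtain ⟨f', g', ⟨hg', hfg', hb'⟩, rfl⟩ := hY
    by_cases hdis : Disjoint (SS π i f g) (SS π i f' g')
    · exact Or.inr (Or.inr hdis)
    rw [Finset.not_disjoint_iff] at hdis
    obtain ⟨e, h1, h2⟩ := hdis
    rw [memSS] at h1 h2
    obtain ⟨⟨he, heT⟩, -, hi, cf, cg⟩ := h1
    obtain ⟨-, -, -, cf', cg'⟩ := h2
    have hgg : g = g' := by
      by_contra hne
      have hadj := hg_adj td hLd hg hg' hne he heT cg cg'
      exact hχ i g g' hadj ((hty e he heT g g' hg hg' hne cg cg').trans hi) (hb.trans hb'.symm)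
    subst hgg
    have mono : ∀ f f' : T.edgeSet, D f ⊆ D f' → D f' ⊆ D g → SS π i f g ⊆ SS π i f' g := by
      intro f f' h1 h2 e he
      rw [memSS] at he ⊢
      obtain ⟨ha, hb, hc, cf, cg⟩ := he
      refine ⟨ha, hb, hc, ?_, cg⟩
      obtain ⟨x, y, rfl, hx, hy⟩ := cf
      refine ⟨x, y, rfl, h1 hx, fun hy' => ?_⟩
      rw [cr_mk] at cg
      rcases cg with h | h
      · exact h.2 (h2 hy')
      · exact h.2 (h2 (h1 hx))
    rcases td.lam f f' with h | h | h
    · exact Or.inl (mono f f' h hfg')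
    · exact Or.inr (Or.inl (mono f' f h hfg))
    · exfalso
      obtain ⟨x, y, rfl, hx, hy⟩ := cf
      rw [cr_mk] at cf' cg
      rw [Set.disjoint_left] at h
      rcases cf' with h' | h'
      · exact h hx h'.1
      · rcases cg with h'' | h''
        · exact h''.2 (hfg' h'.1)
        · exact h''.2 (hfg hx)
  have hcore := fun π i => core (AA π i 0) (AA π i 1) (lamAA π i 0) (lamAA π i 1)
  choose c hc using hcore
  have cardP : Fintype.card (Bool × Fin ℓ × (Bool × ZMod 2 × ZMod 2)) = 16 * ℓ := by
    simp [Fintype.card_prod, ZMod.card]; ring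
  let ε := Fintype.equivFinOfCardEq cardP
  let φ : Sym2 V → Fin (16 * ℓ + 1) := fun e =>
    if e ∈ G.edgeSet ∧ e ∉ T.edgeSet then (ε (pe e, ty e, c (pe e) (ty e) e)).castSucc
    else Fin.last _
  refine ⟨φ, ?_⟩
  intro f0 hf0 hbr
  set f : T.edgeSet := ⟨f0, hf0⟩ with hf
  -- crossing non-tree edge
  have hcross : ∃ e, e ∈ G.edgeSet ∧ e ∉ T.edgeSet ∧ cr e (D f) := by
    obtain ⟨a, b, hab, ha, hb⟩ := td.self f
    have hab' : f0 = s(a, b) := hab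
    rw [hab', SimpleGraph.isBridge_iff, not_not] at hbr
    obtain ⟨p⟩ := hbr
    obtain ⟨d, -, hd1, hd2⟩ := p.exists_boundary_dart (D f) ha hb
    have hadj := d.adj
    rw [SimpleGraph.deleteEdges_adj] at hadj
    refine ⟨s(d.fst, d.snd), hadj.1, fun hdT => hadj.2 ?_, ⟨_, _, rfl, hd1, hd2⟩⟩
    have := td.tree f ⟨_, hdT⟩ ⟨_, _, rfl, hd1, hd2⟩
    have h2 : s(d.fst, d.snd) = f0 := congrArg Subtype.val this
    rw [h2, hab']; rfl
  have hlead : ∃ g e, Ld g ∧ D f ⊆ D g ∧ e ∈ G.edgeSet ∧ e ∉ T.edgeSet ∧ cr e (D f) ∧ cr e (D g) := by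
    by_cases hl : Ld f
    · obtain ⟨e, h1, h2, h3⟩ := hcross
      exact ⟨f, e, hl, subset_rfl, h1, h2, h3, h3⟩
    · rw [hLd f] at hl
      push Not at hl
      obtain ⟨g, hfg, hg, e, h1, h2, h3, h4⟩ := hl
      exact ⟨g, e, hg, hfg.1, h1, h2, h3, h4⟩
  obtain ⟨g, e, hg, hfg, he, heT, cf, cg⟩ := hlead
  have hlev := lev_of_ld td hLd he heT cf hg hfg cg
  have hmem : e ∈ SS (pe e) (ty e) f g := (memSS _ _ _ _ _).2 ⟨⟨he, heT⟩, rfl, rfl, cf, cg⟩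
  have hAA : SS (pe e) (ty e) f g ∈ AA (pe e) (ty e) (χ (ty e) g) :=
    Finset.mem_image.2 ⟨(f, g), Finset.mem_filter.2 ⟨Finset.mem_univ _, hg, hfg, rfl⟩, rfl⟩
  obtain ⟨k, hk⟩ := hc (pe e) (ty e) (SS (pe e) (ty e) f g) (by
    have h01 : ∀ z : Fin 2, z = 0 ∨ z = 1 := by decide
    rcases h01 (χ (ty e) g) with h | h <;> rw [h] at hAA
    · exact Or.inl hAA
    · exact Or.inr hAA) ⟨e, hmem⟩
  refine ⟨(ε (pe e, ty e, k)).castSucc, ?_⟩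
  rw [← Set.ncard_coe_finset] at hk
  convert hk using 2
  ext e'
  simp only [Set.mem_ofPred_eq, Finset.coe_filter, memSS, Set.mem_diff, Set.mem_singleton_iff]
  constructor
  · rintro ⟨⟨hcut, hne⟩, hφ⟩
    have hnt : e' ∈ G.edgeSet ∧ e' ∉ T.edgeSet := by
      by_contra hcon
      simp only [φ, if_neg hcon] at hφ
      exact absurd hφ.symm (Fin.castSucc_lt_last _).ne
    simp only [φ, if_pos hnt] at hφ
    have hφ2 := ε.injective (Fin.castSucc_injective _ hφ)
    simp only [Prod.mk.injEq] at hφ2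
    obtain ⟨hp, ht', hk'⟩ := hφ2
    have cf' : cr e' (D f) := (td.cut f e' hnt.1).1 hcut
    refine ⟨⟨hnt, hp, ht', cf', ?_⟩, ?_⟩
    · rcases lev_cases td hLd hnt.1 hnt.2 cf' with h | ⟨_, g', hg', hfg', cg'⟩
      · exfalso
        simp only [pe, decide_eq_decide] at hp
        rw [hlev] at h
        rw [← h] at hp
        rw [Nat.even_add_one] at hp
        tauto
      · rw [ld_unique td hLd he heT hnt.1 hnt.2 cf cf' hg hg' hfg hfg' cg cg']
        exact cg'
    · rw [hp, ht'] at hk'; exact hk'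
  · rintro ⟨⟨hnt, hp, ht', cf', cg'⟩, hk'⟩
    refine ⟨⟨(td.cut f e' hnt.1).2 cf', ?_⟩, ?_⟩
    · rintro rfl; exact hnt.2 hf0
    · simp only [φ, if_pos hnt, hp, ht', hk']
end

section
/- Every finite bipartite circle graph has odd chromatic number at most 98; that is, if G is a finite simple graph that is both bipartite and a circle graph, then χ_o(G) ≤ 98. -/
/-- `G` is a circle graph: vertices correspond to chords `(a v, b v)` of a circle with
`2n` points, all endpoints distinct, and adjacency is chord crossing. -/
def IsCircleGraph {V : Type} (G : SimpleGraph V) : Prop :=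
  ∃ (n : ℕ) (a b : V → ℕ),
    (∀ v, 1 ≤ a v ∧ a v < b v ∧ b v ≤ 2 * n) ∧
    Function.Injective (Sum.elim a b : V ⊕ V → ℕ) ∧
    ∀ u v : V, G.Adj u v ↔
      ((a u < a v ∧ a v < b u ∧ b u < b v) ∨ (a v < a u ∧ a u < b v ∧ b v < b u))

/-- `G` is bipartite: its vertex set splits into two parts with every edge across. -/
def IsBipartiteGraph {V : Type} (G : SimpleGraph V) : Prop :=
  ∃ X : Set V, ∀ u v : V, G.Adj u v → (u ∈ X ↔ v ∉ X)

open Classical in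
/-- A sequence without `abab` pattern has at most `2 |S|` runs, and points map to run starts. -/
theorem runs_exist {L : Type} (P : Finset ℕ) (w : ℕ → L) (S : Finset L)
    (hS : ∀ p ∈ P, w p ∈ S)
    (hw : ∀ p q s t, p < q → q < s → s < t → w p = w s → w q = w t → w p = w q) :
    ∃ (Q : Finset ℕ) (ρ : ℕ → ℕ), Q.card ≤ 2 * S.card ∧
      (∀ p ∈ P, ρ p ∈ Q ∧ w (ρ p) = w p) ∧
      (∀ p ∈ P, ∀ p' ∈ P, p ≤ p' → ρ p ≤ ρ p') := by
  -- predecessor characterisation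
  let R : ℕ → ℕ → Prop := fun m p => m ∈ P ∧ m < p ∧ ∀ s ∈ P, s < p → s ≤ m
  have hR : ∀ p, (∃ s ∈ P, s < p) → ∃ m, R m p := by
    rintro p ⟨s, hs, hsp⟩
    have hne : (P.filter (· < p)).Nonempty := ⟨s, by simp [hs, hsp]⟩
    refine ⟨(P.filter (· < p)).max' hne, ?_⟩
    have h1 := Finset.max'_mem _ hne
    rw [Finset.mem_filter] at h1
    refine ⟨h1.1, h1.2, fun s hs hsp => Finset.le_max' _ _ (by simp [hs, hsp])⟩
  let Q : Finset ℕ := P.filter (fun p => ∀ m, R m p → w m ≠ w p)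
  have hQ : ∀ p, p ∈ Q ↔ p ∈ P ∧ ∀ m, R m p → w m ≠ w p := fun p => by simp [Q]
  have hρ : ∀ p, p ∈ P → ∃ q, q ∈ Q ∧ q ≤ p ∧ ∀ s ∈ P, q ≤ s → s ≤ p → w s = w p := by
    intro p
    induction p using Nat.strong_induction_on with
    | _ p ih =>
      intro hp
      by_cases h : p ∈ Q
      · exact ⟨p, h, le_rfl, fun s _ h1 h2 => by rw [le_antisymm h2 h1]⟩
      · rw [hQ] at h
        push Not at h
        obtain ⟨m, hm, hmw⟩ := h hp
        obtain ⟨q, hq, hqm, hall⟩ := ih m hm.2.1 hm.1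
        refine ⟨q, hq, hqm.trans hm.2.1.le, fun s hs h1 h2 => ?_⟩
        rcases h2.eq_or_lt with h3 | h3
        · rw [h3]
        · rw [hall s hs h1 (hm.2.2 s hs h3), hmw]
  choose! ρ h1 h2 h3 using hρ
  have hQP : ∀ q ∈ Q, q ∈ P := fun q hq => ((hQ q).1 hq).1
  refine ⟨Q, ρ, ?_, fun p hp => ⟨h1 p hp, h3 p hp _ (hQP _ (h1 p hp)) le_rfl (h2 p hp)⟩, ?_⟩
  · -- counting
    choose! m hm using hR
    let f : ℕ → L × Bool := fun p =>
      if ∃ s ∈ P, s < p ∧ w s = w p then (w (m p), true) else (w p, false)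
    have hmaps : ∀ p ∈ Q, f p ∈ S ×ˢ (Finset.univ : Finset Bool) := by
      intro p hp
      by_cases h : ∃ s ∈ P, s < p ∧ w s = w p
      · obtain ⟨s, hs, hsp, _⟩ := id h
        have := hm p ⟨s, hs, hsp⟩
        simp only [f, if_pos h, Finset.mem_product, Finset.mem_univ, and_true]
        exact hS _ this.1
      · simp only [f, if_neg h, Finset.mem_product, Finset.mem_univ, and_true]
        exact hS _ (hQP p hp)
    have key : ∀ p ∈ Q, ∀ q ∈ Q, p < q → f p ≠ f q := by
      intro p hp q hq hpq hf
      by_cases h : ∃ s ∈ P, s < p ∧ w s = w p <;> by_cases h' : ∃ s ∈ P, s < q ∧ w s = w q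
      · simp only [f, if_pos h, if_pos h', Prod.mk.injEq, and_true] at hf
        obtain ⟨s, hs, hsp, hsw⟩ := h
        have hmp := hm p ⟨s, hs, hsp⟩
        have hmq := hm q ⟨p, hQP p hp, hpq⟩
        have hne := ((hQ p).1 hp).2 _ hmp
        have hle : p ≤ m q := hmq.2.2 p (hQP p hp) hpq
        have hlt : p < m q := lt_of_le_of_ne hle (fun h => hne (by rw [hf, ← h]))
        have hsm : s < m p := lt_of_le_of_ne (hmp.2.2 s hs hsp) (fun h => hne (by rw [← h, hsw]))
        exact hne ((hw s (m p) p (m q) hsm hmp.2.1 hlt hsw hf).symm.trans hsw)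
      · simp [f, if_pos h, if_neg h'] at hf
      · simp [f, if_neg h, if_pos h'] at hf
      · simp only [f, if_neg h, if_neg h', Prod.mk.injEq, and_true] at hf
        exact h' ⟨p, hQP p hp, hpq, hf⟩
    have hinj : Set.InjOn f Q := by
      intro p hp q hq hf
      rcases lt_trichotomy p q with h | h | h
      · exact absurd hf (key p hp q hq h)
      · exact h
      · exact absurd hf.symm (key q hq p hp h)
    have := Finset.card_le_card_of_injOn f hmaps hinj
    rw [Finset.card_product] at this
    simp at this
    omega
  · intro p hp p' hp' hpp
    by_contra hlt
    push Not at hlt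
    have hq := (hQ _).1 (h1 p hp)
    obtain ⟨m, hm⟩ := hR (ρ p) ⟨ρ p', hQP _ (h1 p' hp'), hlt⟩
    refine hq.2 m hm ?_
    have e1 := h3 p' hp' m hm.1 (hm.2.2 _ (hQP _ (h1 p' hp')) hlt)
      (hm.2.1.le.trans ((h2 p hp).trans hpp))
    have e2 := h3 p' hp' (ρ p) hq.1 hlt.le ((h2 p hp).trans hpp)
    rw [e1, e2]

open Classical in
/-- Euler-type bound: noncrossing chords, pairwise distinct label pairs. -/
theorem edge_bound {V L : Type} (a b : V → ℕ) (D : Finset V) (w : ℕ → L) (S : Finset L)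
    (hab : ∀ v ∈ D, a v < b v)
    (hnc : ∀ u ∈ D, ∀ v ∈ D, ¬ (a u < a v ∧ a v < b u ∧ b u < b v))
    (hS : ∀ v ∈ D, w (a v) ∈ S ∧ w (b v) ∈ S)
    (hne : ∀ v ∈ D, w (a v) ≠ w (b v))
    (hinj : ∀ u ∈ D, ∀ v ∈ D, w (a u) = w (a v) → w (b u) = w (b v) → u = v)
    (hw : ∀ p q s t, p < q → q < s → s < t → w p = w s → w q = w t → w p = w q) :
    D.card ≤ 4 * S.card := by
  let P : Finset ℕ := D.image a ∪ D.image b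
  have haP : ∀ v ∈ D, a v ∈ P := fun v hv =>
    Finset.mem_union_left _ (Finset.mem_image_of_mem a hv)
  have hbP : ∀ v ∈ D, b v ∈ P := fun v hv =>
    Finset.mem_union_right _ (Finset.mem_image_of_mem b hv)
  obtain ⟨Q, ρ, hcard, hρ, hmono⟩ := runs_exist P w S (by
    intro p hp
    rcases Finset.mem_union.1 hp with h | h
    · obtain ⟨v, hv, rfl⟩ := Finset.mem_image.1 h
      exact (hS v hv).1
    · obtain ⟨v, hv, rfl⟩ := Finset.mem_image.1 h
      exact (hS v hv).2) hw
  have hlt : ∀ p ∈ P, ∀ p' ∈ P, ρ p < ρ p' → p < p' := by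
    intro p hp p' hp' h
    by_contra h'
    exact absurd (hmono p' hp' p hp (not_lt.1 h')) (not_le.2 h)
  have hρab : ∀ v ∈ D, ρ (a v) < ρ (b v) := by
    intro v hv
    refine lt_of_le_of_ne (hmono _ (haP v hv) _ (hbP v hv) (hab v hv).le) (fun h => hne v hv ?_)
    rw [← (hρ _ (haP v hv)).2, ← (hρ _ (hbP v hv)).2, h]
  have hρinj : ∀ u ∈ D, ∀ v ∈ D, ρ (a u) = ρ (a v) → ρ (b u) = ρ (b v) → u = v := by
    intro u hu v hv h1 h2
    refine hinj u hu v hv ?_ ?_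
    · rw [← (hρ _ (haP u hu)).2, ← (hρ _ (haP v hv)).2, h1]
    · rw [← (hρ _ (hbP u hu)).2, ← (hρ _ (hbP v hv)).2, h2]
  let f : V → ℕ × Bool := fun v =>
    if ∃ u ∈ D, ρ (a u) = ρ (a v) ∧ ρ (b v) < ρ (b u) then (ρ (b v), true) else (ρ (a v), false)
  have hmaps : ∀ v ∈ D, f v ∈ Q ×ˢ (Finset.univ : Finset Bool) := by
    intro v hv
    simp only [f]
    split_ifs
    · simpa using (hρ _ (hbP v hv)).1
    · simpa using (hρ _ (haP v hv)).1
  have key : ∀ u ∈ D, ∀ v ∈ D, (∃ y ∈ D, ρ (a y) = ρ (a v) ∧ ρ (b v) < ρ (b y)) →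
      ρ (b u) = ρ (b v) → ¬ ρ (a u) < ρ (a v) := by
    rintro u hu v hv ⟨y, hy, h1, h2⟩ h3 h4
    refine hnc u hu y hy ⟨?_, ?_, ?_⟩
    · exact hlt _ (haP u hu) _ (haP y hy) (by omega)
    · exact hlt _ (haP y hy) _ (hbP u hu) (by have := hρab v hv; omega)
    · exact hlt _ (hbP u hu) _ (hbP y hy) (by omega)
  have hfinj : Set.InjOn f D := by
    intro u hu v hv hf
    by_cases h : ∃ y ∈ D, ρ (a y) = ρ (a u) ∧ ρ (b u) < ρ (b y) <;>
    by_cases h' : ∃ y ∈ D, ρ (a y) = ρ (a v) ∧ ρ (b v) < ρ (b y)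
    · simp only [f, if_pos h, if_pos h', Prod.mk.injEq, and_true] at hf
      have k1 := key u hu v hv h' hf
      have k2 := key v hv u hu h hf.symm
      exact hρinj u hu v hv (by omega) hf
    · simp only [f, if_pos h, if_neg h', Prod.mk.injEq] at hf
      simp at hf
    · simp only [f, if_neg h, if_pos h', Prod.mk.injEq] at hf
      simp at hf
    · simp only [f, if_neg h, if_neg h', Prod.mk.injEq, and_true] at hf
      have k1 : ¬ ρ (b u) < ρ (b v) := fun hh => h ⟨v, hv, hf.symm, hh⟩
      have k2 : ¬ ρ (b v) < ρ (b u) := fun hh => h' ⟨u, hu, hf, hh⟩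
      exact hρinj u hu v hv hf (by omega)
  have := Finset.card_le_card_of_injOn f hmaps hfinj
  rw [Finset.card_product] at this
  simp at this
  omega

open Classical in
/-- Degenerate relations are 9-colorable. -/
theorem degenerate_color {L : Type} (A : L → L → Prop) (hsym : ∀ x y, A x y → A y x)
    (hirr : ∀ x, ¬ A x x)
    (hdeg : ∀ S : Finset L, S.Nonempty → ∃ x ∈ S, (S.filter (A x)).card ≤ 8) (S : Finset L) :
    ∃ g : L → Fin 9, ∀ x ∈ S, ∀ y ∈ S, A x y → g x ≠ g y := by
  induction S using Finset.strongInduction with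
  | _ S ih =>
    rcases S.eq_empty_or_nonempty with rfl | hne
    · exact ⟨fun _ => 0, by simp⟩
    · obtain ⟨x, hx, hcard⟩ := hdeg S hne
      obtain ⟨g, hg⟩ := ih (S.erase x) (Finset.erase_ssubset hx)
      obtain ⟨i, hi⟩ : ∃ i : Fin 9, i ∉ (S.filter (A x)).image g := by
        by_contra h
        push Not at h
        have : (Finset.univ : Finset (Fin 9)).card ≤ ((S.filter (A x)).image g).card :=
          Finset.card_le_card (fun i _ => h i)
        have h2 := (Finset.card_image_le (s := S.filter (A x)) (f := g))
        simp only [Finset.card_univ, Fintype.card_fin] at this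
        omega
      have hi' : ∀ y ∈ S, A x y → g y ≠ i := fun y hy hA h =>
        hi (Finset.mem_image.2 ⟨y, by simp [hy, hA], h⟩)
      refine ⟨fun y => if y = x then i else g y, fun y hy z hz hA => ?_⟩
      by_cases h1 : y = x <;> by_cases h2 : z = x
      · subst h1; subst h2; exact absurd hA (hirr _)
      · subst h1
        simpa [h2] using (hi' z hz hA).symm
      · subst h2
        simpa [h1] using hi' y hy (hsym _ _ hA)
      · simpa [h1, h2] using hg y (by simp [h1, hy]) z (by simp [h2, hz]) hA

open Classical in
/-- Proper coloring of the labels with respect to a noncrossing set of chords. -/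
theorem label_color {V L : Type} [Fintype L] (a b : V → ℕ) (Y : Finset V) (w : ℕ → L)
    (hab : ∀ v, a v < b v)
    (hnc : ∀ u ∈ Y, ∀ v ∈ Y, ¬ (a u < a v ∧ a v < b u ∧ b u < b v))
    (hw : ∀ p q s t, p < q → q < s → s < t → w p = w s → w q = w t → w p = w q) :
    ∃ g : L → Fin 9, ∀ y ∈ Y, w (a y) ≠ w (b y) → g (w (a y)) ≠ g (w (b y)) := by
  let e : V → Sym2 L := fun v => s(w (a v), w (b v))
  let A : L → L → Prop := fun x y => x ≠ y ∧ ∃ v ∈ Y, e v = s(x, y)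
  obtain ⟨g, hg⟩ := degenerate_color A
    (fun x y ⟨h, v, hv, hve⟩ => ⟨h.symm, v, hv, by rw [hve, Sym2.eq_swap]⟩)
    (fun x h => h.1 rfl) (by
      intro S hSne
      let Y' := Y.filter (fun v => w (a v) ∈ S ∧ w (b v) ∈ S ∧ w (a v) ≠ w (b v))
      -- choose representatives
      have hrep : ∀ z ∈ Y'.image e, ∃ v, v ∈ Y' ∧ e v = z := fun z hz => by
        simpa using hz
      obtain ⟨D, hDY, hDim, hDinj⟩ : ∃ D : Finset V, D ⊆ Y' ∧ D.image e = Y'.image e ∧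
          Set.InjOn e D := by
        by_cases hV : Nonempty V
        · choose! r hr1 hr2 using hrep
          refine ⟨(Y'.image e).image r, ?_, ?_, ?_⟩
          · intro v hv
            obtain ⟨z, hz, rfl⟩ := Finset.mem_image.1 hv
            exact hr1 z hz
          · ext z
            constructor
            · intro h
              obtain ⟨v, hv, rfl⟩ := Finset.mem_image.1 h
              obtain ⟨z, hz, rfl⟩ := Finset.mem_image.1 hv
              rw [hr2 z hz]; exact hz
            · intro hz
              exact Finset.mem_image.2 ⟨r z, Finset.mem_image_of_mem r hz, hr2 z hz⟩
          · intro u hu v hv huv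
            obtain ⟨z, hz, rfl⟩ := Finset.mem_image.1 hu
            obtain ⟨z', hz', rfl⟩ := Finset.mem_image.1 hv
            rw [hr2 z hz, hr2 z' hz'] at huv
            rw [huv]
        · exact ⟨Y', subset_rfl, rfl, fun u => absurd ⟨u⟩ hV⟩
      have hD : ∀ v ∈ D, v ∈ Y ∧ w (a v) ∈ S ∧ w (b v) ∈ S ∧ w (a v) ≠ w (b v) :=
        fun v hv => by simpa [Y'] using hDY hv
      have hDcard : D.card ≤ 4 * S.card :=
        edge_bound a b D w S (fun v _ => hab v)
          (fun u hu v hv => hnc u (hD u hu).1 v (hD v hv).1)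
          (fun v hv => ⟨(hD v hv).2.1, (hD v hv).2.2.1⟩) (fun v hv => (hD v hv).2.2.2)
          (fun u hu v hv h1 h2 => hDinj hu hv (by simp only [e]; rw [h1, h2])) hw
      by_contra hcon
      push Not at hcon
      have hdegle : ∀ x ∈ S, (S.filter (A x)).card ≤
          (D.filter (fun v => w (a v) = x)).card + (D.filter (fun v => w (b v) = x)).card := by
        intro x hx
        have hsub : S.filter (A x) ⊆ (D.filter (fun v => w (a v) = x)).image (fun v => w (b v)) ∪
            (D.filter (fun v => w (b v) = x)).image (fun v => w (a v)) := by
          intro y hy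
          obtain ⟨hyS, hxy, v, hv, hve⟩ := Finset.mem_filter.1 hy
          have hvY' : v ∈ Y' := by
            simp only [Y', Finset.mem_filter]
            simp only [e, Sym2.eq_iff] at hve
            rcases hve with ⟨h1, h2⟩ | ⟨h1, h2⟩
            · rw [h1, h2]; exact ⟨hv, hx, hyS, hxy⟩
            · rw [h1, h2]; exact ⟨hv, hyS, hx, hxy.symm⟩
          have : e v ∈ D.image e := hDim ▸ Finset.mem_image_of_mem e hvY'
          obtain ⟨u, hu, hue⟩ := Finset.mem_image.1 this
          rw [hve] at hue
          simp only [e, Sym2.eq_iff] at hue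
          rcases hue with ⟨h1, h2⟩ | ⟨h1, h2⟩
          · exact Finset.mem_union_left _ (Finset.mem_image.2 ⟨u, by simp [hu, h1], h2⟩)
          · exact Finset.mem_union_right _ (Finset.mem_image.2 ⟨u, by simp [hu, h2], h1⟩)
        exact (Finset.card_le_card hsub).trans ((Finset.card_union_le _ _).trans
          (add_le_add Finset.card_image_le Finset.card_image_le))
      have s1 : D.card = ∑ x ∈ S, (D.filter (fun v => w (a v) = x)).card :=
        Finset.card_eq_sum_card_fiberwise (fun v hv => (hD v hv).2.1)
      have s2 : D.card = ∑ x ∈ S, (D.filter (fun v => w (b v) = x)).card :=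
        Finset.card_eq_sum_card_fiberwise (fun v hv => (hD v hv).2.2.1)
      have s3 : ∑ x ∈ S, 9 ≤ ∑ x ∈ S, ((D.filter (fun v => w (a v) = x)).card +
          (D.filter (fun v => w (b v) = x)).card) :=
        Finset.sum_le_sum (fun x hx => le_trans (Nat.succ_le_of_lt (hcon x hx)) ((le_of_eq (by congr)).trans (hdegle x hx)))
      rw [Finset.sum_add_distrib, ← s1, ← s2] at s3
      simp only [Finset.sum_const, smul_eq_mul] at s3
      have := hSne.card_pos
      omega) Finset.univ
  exact ⟨g, fun y hy hne => hg _ (Finset.mem_univ _) _ (Finset.mem_univ _) ⟨hne, y, hy, rfl⟩⟩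

open Classical in
/-- One side of the coloring. -/
theorem side_color {V : Type} [Fintype V] (a b : V → ℕ) (X Y : Finset V)
    (hab : ∀ v, a v < b v) (hainj : Function.Injective a)
    (hncX : ∀ u ∈ X, ∀ v ∈ X, ¬ (a u < a v ∧ a v < b u ∧ b u < b v))
    (hncY : ∀ u ∈ Y, ∀ v ∈ Y, ¬ (a u < a v ∧ a v < b u ∧ b u < b v)) :
    ∃ c : V → Sym2 (Fin 9), ∀ y ∈ Y,
      (∃ x ∈ X, ¬ ((a x < a y ∧ a y < b x) ↔ (a x < b y ∧ b y < b x))) →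
      ∃ i, Odd (X.filter (fun x =>
        ¬ ((a x < a y ∧ a y < b x) ↔ (a x < b y ∧ b y < b x)) ∧ c x = i)).card := by
  let r : ℕ → Finset V := fun p => X.filter (fun x => a x < p ∧ p < b x)
  have hr : ∀ p x, x ∈ r p ↔ x ∈ X ∧ a x < p ∧ p < b x := fun p x => by simp [r]
  obtain ⟨g, hg⟩ := label_color a b Y r hab hncY (by
    intro p q s t h1 h2 h3 e1 e2
    ext x
    constructor
    · intro hx
      have hx' := hx
      rw [e1] at hx'
      rw [hr] at *
      exact ⟨hx.1, by omega, by omega⟩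
    · intro hx
      have hx' := hx
      rw [e2] at hx'
      rw [e1]
      rw [hr] at *
      exact ⟨hx.1, by omega, by omega⟩)
  let E : Fin 9 → (Fin 9 → ZMod 2) := fun i => Pi.single i 1
  have hEinj : ∀ i j, E i + E j = 0 → i = j := by
    intro i j h
    by_contra hij
    have := congrFun h i
    simp [E, hij] at this
  have hEE : ∀ z : Fin 9 → ZMod 2, z + z = 0 := fun z => by
    ext i; exact CharTwo.add_self_eq_zero _
  let φ : Sym2 (Fin 9) → (Fin 9 → ZMod 2) :=
    Sym2.lift ⟨fun i j => E i + E j, fun i j => add_comm _ _⟩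
  let c : V → Sym2 (Fin 9) := fun x => s(g (r (a x)), g (insert x (r (a x))))
  have hφc : ∀ x, φ (c x) = E (g (r (a x))) + E (g (insert x (r (a x)))) := fun x => rfl
  have htel : ∀ p, ∑ x ∈ r p, φ (c x) = E (g (r p)) + E (g ∅) := by
    intro p
    induction p using Nat.strong_induction_on with
    | _ p ih =>
      rcases (r p).eq_empty_or_nonempty with h | h
      · rw [h, Finset.sum_empty, hEE]
      · obtain ⟨x, hx, hmax⟩ := Finset.exists_max_image (r p) a h
        have hx' := (hr _ _).1 hx
        have hins : r p = insert x (r (a x)) := by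
          ext z
          rw [Finset.mem_insert, hr, hr]
          constructor
          · intro hz
            have h1 := hmax z ((hr _ _).2 hz)
            rcases h1.eq_or_lt with h2 | h2
            · exact Or.inl (hainj h2)
            · exact Or.inr ⟨hz.1, h2, by omega⟩
          · rintro (rfl | hz)
            · exact hx'
            · have h1 := hncX z hz.1 x hx'.1
              refine ⟨hz.1, by omega, ?_⟩
              omega
        have hnot : x ∉ r (a x) := fun h => by
          have := (hr _ _).1 h
          omega
        rw [hins, Finset.sum_insert hnot, ih (a x) hx'.2.1, hφc]
        generalize E (g (r (a x))) = u1
        generalize E (g (insert x (r (a x)))) = u2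
        have := hEE u1
        calc u1 + u2 + (u1 + E (g ∅)) = (u1 + u1) + (u2 + E (g ∅)) := by abel
          _ = _ := by rw [this, zero_add]
  refine ⟨c, fun y hy hex => ?_⟩
  by_contra hcon
  rw [not_exists] at hcon
  let F : Finset V := X.filter (fun x =>
    ¬ ((a x < a y ∧ a y < b x) ↔ (a x < b y ∧ b y < b x)))
  have hF1 : ∑ x ∈ F, φ (c x) = E (g (r (a y))) + E (g (r (b y))) := by
    have : ∑ x ∈ F, φ (c x) = ∑ x ∈ r (a y), φ (c x) + ∑ x ∈ r (b y), φ (c x) := by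
      simp only [F, r, Finset.sum_filter]
      rw [← Finset.sum_add_distrib]
      refine Finset.sum_congr rfl (fun x _ => ?_)
      by_cases h1 : (a x < a y ∧ a y < b x) <;> by_cases h2 : (a x < b y ∧ b y < b x)
      · rw [if_neg (fun h => h ⟨fun _ => h2, fun _ => h1⟩), if_pos h1, if_pos h2, hEE]
      · rw [if_pos (fun h => h2 (h.1 h1)), if_pos h1, if_neg h2, add_zero]
      · rw [if_pos (fun h => h1 (h.2 h2)), if_neg h1, if_pos h2, zero_add]
      · rw [if_neg (fun h => h ⟨fun k => absurd k h1, fun k => absurd k h2⟩), if_neg h1, if_neg h2, add_zero]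
    rw [this, htel, htel]
    generalize E (g (r (a y))) = u1
    generalize E (g (r (b y))) = u2
    calc u1 + E (g ∅) + (u2 + E (g ∅)) = (u1 + u2) + (E (g ∅) + E (g ∅)) := by abel
      _ = _ := by rw [hEE (E (g ∅)), add_zero]
  have hF2 : ∑ x ∈ F, φ (c x) = 0 := by
    rw [← Finset.sum_fiberwise F c]
    refine Finset.sum_eq_zero (fun i _ => ?_)
    have h1 : ∑ x ∈ F with c x = i, φ (c x) = ∑ x ∈ F with c x = i, φ i :=
      Finset.sum_congr rfl (fun x hx => by rw [(Finset.mem_filter.1 hx).2])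
    rw [h1, Finset.sum_const]
    have h2 := hcon i
    rw [Nat.not_odd_iff_even, ← Finset.filter_filter] at h2
    obtain ⟨k, hk⟩ := h2
    rw [hk, add_smul, hEE]
  rw [hF2] at hF1
  refine hg y hy ?_ (hEinj _ _ hF1.symm)
  obtain ⟨x, hxX, hx⟩ := hex
  intro heq
  refine hx ?_
  have := Finset.ext_iff.1 heq x
  rw [hr, hr] at this
  exact ⟨fun h => (this.1 ⟨hxX, h⟩).2, fun h => (this.2 ⟨hxX, h⟩).2⟩

/-- Every bipartite circle graph has odd chromatic number at most 98. -/
theorem bipartite_circle_graph_odd_chromatic_le_98 {V : Type} [Fintype V]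
    (G : SimpleGraph V) (hbip : IsBipartiteGraph G) (hcirc : IsCircleGraph G) :
    ∃ c : V → Fin 98, (∀ u v : V, G.Adj u v → c u ≠ c v) ∧
      ∀ v : V, (G.neighborSet v).Nonempty →
        ∃ i : Fin 98, Odd {u | u ∈ G.neighborSet v ∧ c u = i}.ncard := by
  classical
  obtain ⟨X, hX⟩ := hbip
  obtain ⟨n, a, b, hv, hinj, hadj⟩ := hcirc
  have hab : ∀ v, a v < b v := fun v => (hv v).2.1
  have haa : Function.Injective a := fun u v h => by
    have := @hinj (Sum.inl u) (Sum.inl v) h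
    simpa using this
  have hbb : Function.Injective b := fun u v h => by
    have := @hinj (Sum.inr u) (Sum.inr v) h
    simpa using this
  have hba : ∀ u v, a u ≠ b v := fun u v h => by
    have := @hinj (Sum.inl u) (Sum.inr v) h
    simp at this
  have hcross : ∀ y x, G.Adj y x ↔
      ¬ ((a x < a y ∧ a y < b x) ↔ (a x < b y ∧ b y < b x)) := by
    intro y x
    rw [hadj]
    have h1 := hab x
    have h2 := hab y
    have h3 := hba x y
    have h4 := hba y x
    by_cases hxy : x = y
    · subst hxy; omega
    · have h5 : a x ≠ a y := fun h => hxy (haa h)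
      have h6 : b x ≠ b y := fun h => hxy (hbb h)
      omega
  let X1 : Finset V := Finset.univ.filter (· ∈ X)
  let X2 : Finset V := Finset.univ.filter (· ∉ X)
  have hX1 : ∀ v, v ∈ X1 ↔ v ∈ X := fun v => by simp [X1]
  have hX2 : ∀ v, v ∈ X2 ↔ v ∉ X := fun v => by simp [X2]
  have nc1 : ∀ u ∈ X1, ∀ v ∈ X1, ¬ (a u < a v ∧ a v < b u ∧ b u < b v) := by
    intro u hu v hv h
    have := hX u v ((hadj u v).2 (Or.inl h))
    rw [hX1] at hu hv
    tauto
  have nc2 : ∀ u ∈ X2, ∀ v ∈ X2, ¬ (a u < a v ∧ a v < b u ∧ b u < b v) := by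
    intro u hu v hv h
    have := hX u v ((hadj u v).2 (Or.inl h))
    rw [hX2] at hu hv
    tauto
  obtain ⟨c1, hc1⟩ := side_color a b X1 X2 hab haa nc1 nc2
  obtain ⟨c2, hc2⟩ := side_color a b X2 X1 hab haa nc2 nc1
  obtain ⟨ι⟩ : Nonempty (Sym2 (Fin 9) × Bool ↪ Fin 98) := by
    apply Function.Embedding.nonempty_of_card_le
    rw [Fintype.card_prod, Sym2.card]
    simp [Nat.choose]
  refine ⟨fun v => if v ∈ X then ι (c1 v, true) else ι (c2 v, false), ?_, ?_⟩
  · intro u v huv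
    have := hX u v huv
    by_cases hu : u ∈ X
    · have hv : v ∉ X := this.1 hu
      simp [hu, hv]
    · have hv : v ∈ X := by tauto
      simp [hu, hv]
  · rintro v ⟨x, hx⟩
    rw [SimpleGraph.mem_neighborSet] at hx
    by_cases hvX : v ∈ X
    · obtain ⟨i, hi⟩ := hc2 v ((hX1 v).2 hvX)
        ⟨x, (hX2 x).2 ((hX v x hx).1 hvX), (hcross v x).1 hx⟩
      refine ⟨ι (i, false), ?_⟩
      rw [← Set.ncard_coe_finset] at hi
      convert hi using 2
      ext u
      have h1 := hX v u
      simp only [Set.mem_ofPred_eq, SimpleGraph.mem_neighborSet, Finset.coe_filter, hX2,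
        ← hcross v u]
      by_cases hu : u ∈ X
      · simp only [hu, if_true]
        simp
      · simp [hu]
    · obtain ⟨i, hi⟩ := hc1 v ((hX2 v).2 hvX)
        ⟨x, (hX1 x).2 (by have := hX v x hx; tauto), (hcross v x).1 hx⟩
      refine ⟨ι (i, true), ?_⟩
      rw [← Set.ncard_coe_finset] at hi
      convert hi using 2
      ext u
      have h1 := hX v u
      simp only [Set.mem_ofPred_eq, SimpleGraph.mem_neighborSet, Finset.coe_filter, hX1,
        ← hcross v u]
      by_cases hu : u ∈ X
      · simp [hu]
      · simp [hu]
end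

section
/- The class of circle graphs is χ_o-bounded: there exists a function f : ℕ → ℕ such that every finite circle graph G with clique number ω(G) satisfies χ_o(G) ≤ f(ω(G)). -/
/-- The clique number of `G`: the largest size of a clique. -/
noncomputable def cliqueNum {V : Type} (G : SimpleGraph V) : ℕ :=
  sSup {n | ∃ s : Finset V, G.IsNClique n s}

/-- `G` has an odd coloring with `k` colors. -/
def HasOddColoring {V : Type} (G : SimpleGraph V) (k : ℕ) : Prop :=
  ∃ c : V → Fin k, (∀ u v : V, G.Adj u v → c u ≠ c v) ∧
    ∀ v : V, (G.neighborSet v).Nonempty →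
      ∃ i : Fin k, Odd {u | u ∈ G.neighborSet v ∧ c u = i}.ncard


theorem pl_count {ι L : Type*} (s t : ι → ℕ) (r : ℕ → L)
    (hst : ∀ i, s i < t i)
    (hnc : ∀ i j, s i < s j → s j < t i → t i < t j → False)
    (hr : ∀ p q p' q', p < q → q < p' → p' < q' → r p = r p' → r q = r q' → r p = r q)
    (L' : Finset L) (D : Finset (L × L))
    (hD : ∀ d ∈ D, d.1 ∈ L' ∧ d.2 ∈ L' ∧ d.1 ≠ d.2 ∧ ∃ i, r (s i) = d.1 ∧ r (t i) = d.2) :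
    D.card ≤ 4 * L'.card + 2 := by
  classical
  let β : ℕ → ℕ := fun p => (L'.filter (fun u => ∃ p' ≤ p, r p' = u)).card +
    (L'.filter (fun u => ∀ p', r p' = u → p' < p)).card
  have m1 : ∀ p q, p ≤ q → (L'.filter (fun u => ∃ p' ≤ p, r p' = u)) ⊆
      (L'.filter (fun u => ∃ p' ≤ q, r p' = u)) := by
    intro p q h u
    simp only [Finset.mem_filter]
    rintro ⟨h1, p', h2, h3⟩
    exact ⟨h1, p', h2.trans h, h3⟩
  have m2 : ∀ p q, p ≤ q → (L'.filter (fun u => ∀ p', r p' = u → p' < p)) ⊆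
      (L'.filter (fun u => ∀ p', r p' = u → p' < q)) := by
    intro p q h u
    simp only [Finset.mem_filter]
    rintro ⟨h1, h2⟩
    exact ⟨h1, fun p' h3 => (h2 p' h3).trans_le h⟩
  have mono : ∀ p q, p ≤ q → β p ≤ β q := fun p q h =>
    Nat.add_le_add (Finset.card_le_card (m1 p q h)) (Finset.card_le_card (m2 p q h))
  have mono' : ∀ p q, β p < β q → p < q := by
    intro p q h
    by_contra h'
    exact absurd (mono q p (by omega)) (by omega)
  have key : ∀ p q, p < q → r p ∈ L' → r q ∈ L' → r p ≠ r q → β p < β q := by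
    intro p q hpq hp hq hne
    by_contra hlt
    have c1 := Finset.card_le_card (m1 p q hpq.le)
    have c2 := Finset.card_le_card (m2 p q hpq.le)
    have e1 := Finset.eq_of_subset_of_card_le (m1 p q hpq.le) (by simp only [β] at hlt; omega)
    have e2 := Finset.eq_of_subset_of_card_le (m2 p q hpq.le) (by simp only [β] at hlt; omega)
    have h1 : r q ∈ L'.filter (fun u => ∃ p' ≤ q, r p' = u) := by
      simp only [Finset.mem_filter]; exact ⟨hq, q, le_rfl, rfl⟩
    rw [← e1] at h1
    have h2 : r p ∉ L'.filter (fun u => ∀ p', r p' = u → p' < p) := by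
      simp only [Finset.mem_filter, not_and]; exact fun _ h => absurd (h p rfl) (lt_irrefl _)
    rw [e2] at h2
    simp only [Finset.mem_filter] at h1
    simp only [Finset.mem_filter, not_and, not_forall] at h2
    obtain ⟨_, p1, hp1, hp1'⟩ := h1
    obtain ⟨q1, hq1, hq1'⟩ := h2 hp
    have a1 : p1 ≠ p := by rintro rfl; exact hne hp1'
    have a2 : q1 ≠ q := by rintro rfl; exact hne hq1.symm
    exact hne ((hr p1 p q q1 (by omega) hpq (by omega) hp1' hq1.symm).symm.trans hp1')
  have inj : ∀ p q, r p ∈ L' → r q ∈ L' → β p = β q → r p = r q := by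
    intro p q hp hq h
    by_contra hne
    rcases lt_trichotomy p q with h' | h' | h'
    · exact absurd (key p q h' hp hq hne) (by omega)
    · exact hne (by rw [h'])
    · exact absurd (key q p h' hq hp (Ne.symm hne)) (by omega)
  have bd : ∀ p, β p < 2 * L'.card + 1 := by
    intro p
    have h1 := Finset.card_filter_le L' (fun u => ∃ p' ≤ p, r p' = u)
    have h2 := Finset.card_filter_le L' (fun u => ∀ p', r p' = u → p' < p)
    simp only [β]; omega
  let val : ι → Prop := fun i => r (s i) ∈ L' ∧ r (t i) ∈ L' ∧ r (s i) ≠ r (t i)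
  let R : L × L → ℕ × Bool → Prop := fun d x => ∃ i, val i ∧ r (s i) = d.1 ∧ r (t i) = d.2 ∧
    ((x.2 = true ∧ β (s i) = x.1 ∧ ∀ j, val j → β (s j) = x.1 → β (t j) ≤ β (t i)) ∨
     (x.2 = false ∧ β (t i) = x.1 ∧ ∀ j, val j → β (t j) = x.1 → β (s i) ≤ β (s j)))
  have hc : D.card ≤ (Finset.range (2 * L'.card + 1) ×ˢ (Finset.univ : Finset Bool)).card := by
    apply Finset.card_le_card_of_forall_subsingleton R
    · intro d hd
      obtain ⟨h1, h2, h3, i, hi1, hi2⟩ := hD d hd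
      have vi : val i := by simp only [val, hi1, hi2]; exact ⟨h1, h2, h3⟩
      by_cases hA : ∀ j, val j → β (s j) = β (s i) → β (t j) ≤ β (t i)
      · exact ⟨(β (s i), true), by simpa using bd (s i), i, vi, hi1, hi2, Or.inl ⟨rfl, rfl, hA⟩⟩
      · refine ⟨(β (t i), false), by simpa using bd (t i), i, vi, hi1, hi2, Or.inr ⟨rfl, rfl, ?_⟩⟩
        intro k vk hk
        by_contra hlt
        push Not at hA
        obtain ⟨j, vj, hj1, hj2⟩ := hA
        have := key (s i) (t i) (hst i) vi.1 vi.2.1 vi.2.2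
        exact hnc k j (mono' _ _ (by omega)) (mono' _ _ (by omega)) (mono' _ _ (by omega))
    · rintro ⟨x, b⟩ _ d ⟨hd, i, vi, hi1, hi2, hi⟩ d' ⟨hd', j, vj, hj1, hj2, hj⟩
      have : β (s i) = β (s j) ∧ β (t i) = β (t j) := by
        rcases hi with ⟨b1, x1, m1⟩ | ⟨b1, x1, m1⟩ <;> rcases hj with ⟨b2, x2, m2⟩ | ⟨b2, x2, m2⟩
        · exact ⟨x1.trans x2.symm, le_antisymm (m2 i vi x1) (m1 j vj x2)⟩
        · simp at b1 b2; simp [b1] at b2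
        · simp at b1 b2; simp [b1] at b2
        · exact ⟨le_antisymm (m1 j vj x2) (m2 i vi x1), x1.trans x2.symm⟩
      apply Prod.ext
      · rw [← hi1, ← hj1]; exact inj _ _ vi.1 vj.1 this.1
      · rw [← hi2, ← hj2]; exact inj _ _ vi.2.1 vj.2.1 this.2
  simp at hc
  omega

theorem pl_color {ι L : Type*} [Finite ι] (s t : ι → ℕ) (r : ℕ → L)
    (hst : ∀ i, s i < t i)
    (hnc : ∀ i j, s i < s j → s j < t i → t i < t j → False)
    (hr : ∀ p q p' q', p < q → q < p' → p' < q' → r p = r p' → r q = r q' → r p = r q) :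
    ∃ κ : L → Fin 13, ∀ i, r (s i) ≠ r (t i) → κ (r (s i)) ≠ κ (r (t i)) := by
  classical
  have := Fintype.ofFinite ι
  let E : L → L → Prop := fun u w => u ≠ w ∧ ∃ i, r (s i) = u ∧ r (t i) = w
  have main : ∀ n, ∀ L' : Finset L, L'.card = n → ∃ κ : L → Fin 13, ∀ u ∈ L', ∀ w ∈ L',
      E u w → κ u ≠ κ w := by
    intro n
    induction n with
    | zero =>
      intro L' h
      refine ⟨fun _ => 0, fun u hu => ?_⟩
      rw [Finset.card_eq_zero] at h
      simp [h] at hu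
    | succ n ih =>
      intro L' hL
      let D := (L' ×ˢ L').filter (fun d => E d.1 d.2)
      have hDc : D.card ≤ 4 * L'.card + 2 := by
        apply pl_count s t r hst hnc hr L' D
        intro d hd
        simp only [D, Finset.mem_filter, Finset.mem_product] at hd
        exact ⟨hd.1.1, hd.1.2, hd.2.1, hd.2.2⟩
      have s1 : D.card = ∑ u ∈ L', (D.filter (fun d => d.1 = u)).card :=
        Finset.card_eq_sum_card_fiberwise (fun d hd => by
          simp only [D, Finset.coe_filter, Finset.mem_product, Set.mem_ofPred_eq] at hd
          exact hd.1.1)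
      have s2 : D.card = ∑ u ∈ L', (D.filter (fun d => d.2 = u)).card :=
        Finset.card_eq_sum_card_fiberwise (fun d hd => by
          simp only [D, Finset.coe_filter, Finset.mem_product, Set.mem_ofPred_eq] at hd
          exact hd.1.2)
      have ex : ∃ u ∈ L', (D.filter (fun d => d.1 = u)).card +
          (D.filter (fun d => d.2 = u)).card ≤ 12 := by
        by_contra hcon
        push Not at hcon
        have : ∑ u ∈ L', 13 ≤ ∑ u ∈ L', ((D.filter (fun d => d.1 = u)).card +
          (D.filter (fun d => d.2 = u)).card) := Finset.sum_le_sum (fun u hu => hcon u hu)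
        rw [Finset.sum_add_distrib, ← s1, ← s2] at this
        simp at this
        omega
      obtain ⟨u, hu, hdeg⟩ := ex
      obtain ⟨κ, hκ⟩ := ih (L'.erase u) (by rw [Finset.card_erase_of_mem hu]; omega)
      let Bad : Finset (Fin 13) := (D.filter (fun d => d.1 = u)).image (fun d => κ d.2) ∪
        (D.filter (fun d => d.2 = u)).image (fun d => κ d.1)
      have hb : Bad.card < (Finset.univ : Finset (Fin 13)).card := by
        have h1 := Finset.card_union_le ((D.filter (fun d => d.1 = u)).image (fun d => κ d.2))
          ((D.filter (fun d => d.2 = u)).image (fun d => κ d.1))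
        have h2 := Finset.card_image_le (s := D.filter (fun d => d.1 = u)) (f := fun d => κ d.2)
        have h3 := Finset.card_image_le (s := D.filter (fun d => d.2 = u)) (f := fun d => κ d.1)
        simp only [Finset.card_univ, Fintype.card_fin, Bad]
        omega
      obtain ⟨z, _, hz⟩ := Finset.exists_mem_notMem_of_card_lt_card hb
      simp only [Bad, Finset.mem_union, Finset.mem_image, Finset.mem_filter, not_or, not_exists,
        not_and, D, Finset.mem_product] at hz
      refine ⟨Function.update κ u z, fun x hx y hy hxy => ?_⟩
      by_cases hxu : x = u
      · subst hxu
        have : y ≠ x := hxy.1.symm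
        rw [Function.update_self, Function.update_of_ne this]
        exact fun h => hz.1 (x, y) ⟨⟨⟨hx, hy⟩, hxy⟩, rfl⟩ h.symm
      · by_cases hyu : y = u
        · subst hyu
          rw [Function.update_self, Function.update_of_ne hxu]
          exact fun h => hz.2 (x, y) ⟨⟨⟨hx, hy⟩, hxy⟩, rfl⟩ h
        · rw [Function.update_of_ne hxu, Function.update_of_ne hyu]
          exact hκ x (Finset.mem_erase.2 ⟨hxu, hx⟩) y (Finset.mem_erase.2 ⟨hyu, hy⟩) hxy
  obtain ⟨κ, hκ⟩ := main _ (Finset.univ.image (fun i => r (s i)) ∪ Finset.univ.image (fun i => r (t i))) rfl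
  refine ⟨κ, fun i hi => hκ _ ?_ _ ?_ ⟨hi, i, rfl, rfl⟩⟩
  · exact Finset.mem_union_left _ (Finset.mem_image_of_mem _ (Finset.mem_univ i))
  · exact Finset.mem_union_right _ (Finset.mem_image_of_mem _ (Finset.mem_univ i))

/-- Strict crossing of two intervals. -/
def CrI {V : Type} (a b : V → ℕ) (u v : V) : Prop :=
  (a u < a v ∧ a v < b u ∧ b u < b v) ∨ (a v < a u ∧ a u < b v ∧ b v < b u)

/-- Intervals indexed by `S` have distinct end points. -/
def GoodI {V : Type} (a b : V → ℕ) (S : Set V) : Prop :=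
  (∀ u ∈ S, a u < b u) ∧ (∀ u ∈ S, ∀ v ∈ S, a u ≠ b v) ∧
  (∀ u ∈ S, ∀ v ∈ S, a u = a v → u = v) ∧ (∀ u ∈ S, ∀ v ∈ S, b u = b v → u = v)

/-- Pairwise crossing families in `S` have size at most `k`. -/
def NoClq {V : Type} (a b : V → ℕ) (S : Set V) (k : ℕ) : Prop :=
  ∀ T : Finset V, (∀ u ∈ T, u ∈ S) → (∀ u ∈ T, ∀ v ∈ T, u ≠ v → CrI a b u v) → T.card ≤ k

/-- All families with clique number at most `k` are `N`-colorable. -/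
def ColB (k N : ℕ) : Prop :=
  ∀ (V : Type) [Finite V] (a b : V → ℕ) (S : Set V), GoodI a b S → NoClq a b S k →
    ∃ c : V → Fin N, ∀ u ∈ S, ∀ v ∈ S, CrI a b u v → c u ≠ c v

theorem CrI.symm {V : Type} {a b : V → ℕ} {u v : V} (h : CrI a b u v) : CrI a b v u :=
  Or.symm h

theorem GoodI.mono {V : Type} {a b : V → ℕ} {S T : Set V} (h : GoodI a b S)
    (hT : ∀ u ∈ T, u ∈ S) : GoodI a b T :=
  ⟨fun u hu => h.1 u (hT u hu), fun u hu v hv => h.2.1 u (hT u hu) v (hT v hv),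
   fun u hu v hv => h.2.2.1 u (hT u hu) v (hT v hv),
   fun u hu v hv => h.2.2.2 u (hT u hu) v (hT v hv)⟩

theorem layer_color {k N : ℕ} (hN : ColB k N) {V : Type} [Finite V] (a b : V → ℕ)
    (S Y Z : Set V) (hG : GoodI a b S) (hC : NoClq a b S (k + 1))
    (hY : ∀ y ∈ Y, y ∈ S) (hZ : ∀ z ∈ Z, z ∈ S)
    (hdis : ∀ z ∈ Z, z ∉ Y)
    (hcr : ∀ z ∈ Z, ∃ y ∈ Y, CrI a b y z)
    (hin : ∀ z ∈ Z, ∀ y ∈ Y, a z < a y → b y < b z → False) :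
    ∃ c : V → Fin N × (Fin 13 × Fin 13) × Fin N,
      ∀ u ∈ Z, ∀ v ∈ Z, CrI a b u v → c u ≠ c v := by
  classical
  let P : Set ℕ := {p | ∃ y ∈ Y, p = a y ∨ p = b y}
  have pincr : ∀ p ∈ P, ∃ y ∈ Y, (p = a y ∨ p = b y) ∧
      ∀ z ∈ Z, a z < p → p < b z → CrI a b y z := by
    rintro p ⟨y, hy, hp⟩
    refine ⟨y, hy, hp, fun z hz h1 h2 => ?_⟩
    have h3 := hin z hz y hy
    have hne : y ≠ z := by
      rintro rfl
      rcases hp with rfl | rfl <;> omega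
    have h4 : a y ≠ a z := fun h => hne (hG.2.2.1 y (hY y hy) z (hZ z hz) h)
    have h5 : b y ≠ b z := fun h => hne (hG.2.2.2 y (hY y hy) z (hZ z hz) h)
    unfold CrI
    rcases hp with rfl | rfl
    · right
      refine ⟨h1, h2, ?_⟩
      by_contra h
      exact h3 h1 (by omega)
    · left
      refine ⟨?_, h1, h2⟩
      by_contra h
      exact h3 (by omega) h2
  have haspin : ∀ z ∈ Z, ∃ p ∈ P, a z < p ∧ p < b z := by
    intro z hz
    obtain ⟨y, hy, h | h⟩ := hcr z hz
    · exact ⟨b y, ⟨y, hy, Or.inr rfl⟩, h.2.1, h.2.2⟩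
    · exact ⟨a y, ⟨y, hy, Or.inl rfl⟩, h.1, h.2.1⟩
  let r : V → ℕ := fun z => Nat.findGreatest (fun p => p ∈ P ∧ a z < p ∧ p < b z) (b z)
  have r1 : ∀ z ∈ Z, r z ∈ P ∧ a z < r z ∧ r z < b z := by
    intro z hz
    obtain ⟨p, hp, h1, h2⟩ := haspin z hz
    exact Nat.findGreatest_spec (P := fun p => p ∈ P ∧ a z < p ∧ p < b z) h2.le ⟨hp, h1, h2⟩
  have r2 : ∀ z, ∀ p ∈ P, a z < p → p < b z → p ≤ r z := by
    intro z p hp h1 h2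
    exact Nat.le_findGreatest (P := fun p => p ∈ P ∧ a z < p ∧ p < b z) h2.le ⟨hp, h1, h2⟩
  have common : ∀ T : Finset V, (∀ u ∈ T, u ∈ Z) →
      (∀ u ∈ T, ∀ v ∈ T, u ≠ v → CrI a b u v) →
      (T.Nonempty → ∃ p ∈ P, ∀ u ∈ T, a u < p ∧ p < b u) → T.card ≤ k := by
    intro T hT hcl hp
    rcases T.eq_empty_or_nonempty with rfl | hne
    · simp
    obtain ⟨p, hp, hpT⟩ := hp hne
    obtain ⟨y, hy, hpy, hyc⟩ := pincr p hp
    have hyT : y ∉ T := by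
      intro h
      have := hpT y h
      rcases hpy with rfl | rfl <;> omega
    have := hC (insert y T) (by
        intro u hu
        rcases Finset.mem_insert.1 hu with rfl | hu
        · exact hY _ hy
        · exact hZ _ (hT u hu)) (by
        intro u hu v hv huv
        rcases Finset.mem_insert.1 hu with h | hu' <;> rcases Finset.mem_insert.1 hv with h' | hv'
        · exact absurd (h.trans h'.symm) huv
        · rw [h]; exact hyc v (hT v hv') (hpT v hv').1 (hpT v hv').2
        · rw [h']; exact (hyc u (hT u hu') (hpT u hu').1 (hpT u hu').2).symm
        · exact hcl u hu' v hv' huv)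
    rw [Finset.card_insert_of_notMem hyT] at this
    omega
  obtain ⟨m, hm⟩ : ∃ m, ∀ v, a v ≤ m := by
    obtain ⟨m, hm⟩ := (Set.finite_range a).bddAbove
    exact ⟨m, fun v => hm ⟨v, rfl⟩⟩
  let M := m + 2
  let a' : V → ℕ := fun v => M * a v
  let e : V → ℕ := fun v => M * r v + (m + 1 - a v)
  have anep : ∀ z ∈ Z, ∀ w ∈ Z, a w ≠ r z := by
    intro z hz w hw h
    obtain ⟨⟨y, hy, h1⟩, h2, h3⟩ := r1 z hz
    obtain ⟨h4, h5, h6⟩ := r1 w hw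
    rw [← h] at h1
    rcases h1 with h1 | h1
    · have := hG.2.2.1 w (hZ w hw) y (hY y hy) h1
      subst this
      exact hdis _ hw hy
    · exact hG.2.1 _ (hZ w hw) _ (hY _ hy) h1
  have H2 : ∀ x y c c', c < M → c' < M → M * x + c < M * y + c' → x < y ∨ (x = y ∧ c < c') := by
    intro x y c c' hc hc' h
    rcases lt_trichotomy x y with h1 | h1 | h1
    · exact Or.inl h1
    · subst h1; right; exact ⟨rfl, by omega⟩
    · have := Nat.mul_le_mul_left M (show y + 1 ≤ x from h1)
      rw [Nat.mul_add] at this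
      omega
  have H3 : ∀ x y c c', c < M → x < y → M * x + c < M * y + c' := by
    intro x y c c' hc h
    have := Nat.mul_le_mul_left M (show x + 1 ≤ y from h)
    rw [Nat.mul_add] at this
    omega
  have H4 : ∀ x y c c', c < M → c' < M → M * x + c = M * y + c' → x = y ∧ c = c' := by
    intro x y c c' hc hc' h
    rcases lt_trichotomy x y with h1 | h1 | h1
    · have := H3 x y c c' hc h1; omega
    · subst h1; exact ⟨rfl, by omega⟩
    · have := H3 y x c' c hc' h1; omega
  have hcM : ∀ v, m + 1 - a v < M := fun v => by simp only [M]; omega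
  have h0M : 0 < M := by simp only [M]; omega
  have Ge : GoodI a' e Z := by
    refine ⟨fun u hu => ?_, fun u hu v hv h => ?_, fun u hu v hv h => ?_, fun u hu v hv h => ?_⟩
    · exact H3 (a u) (r u) 0 _ h0M (r1 u hu).2.1
    · have := H4 (a u) (r v) 0 _ h0M (hcM v) h
      have := hm v
      omega
    · exact hG.2.2.1 u (hZ u hu) v (hZ v hv) (H4 (a u) (a v) 0 0 h0M h0M h).1
    · have h1 := (H4 _ _ _ _ (hcM u) (hcM v) h).2
      have := hm u
      have := hm v
      exact hG.2.2.1 u (hZ u hu) v (hZ v hv) (by omega)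
  have crE : ∀ z ∈ Z, ∀ w ∈ Z, a' z < a' w → a' w < e z → e z < e w →
      a z < a w ∧ a w < r z ∧ r z < r w ∧ b z < b w := by
    intro z hz w hw h1 h2 h3
    have g1 : a z < a w := Nat.lt_of_mul_lt_mul_left h1
    have g2 : a w < r z := by
      have h4 := anep z hz w hw
      rcases H2 (a w) (r z) 0 _ h0M (hcM z) h2 with h | h
      · exact h
      · exact absurd h.1 h4
    have g3 : r z < r w := by
      rcases H2 (r z) (r w) _ _ (hcM z) (hcM w) h3 with h | h
      · exact h
      · have := hm z
        have := hm w
        omega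
    refine ⟨g1, g2, g3, ?_⟩
    by_contra hb
    have h5 := r1 w hw
    have := r2 z (r w) h5.1 (by omega) (by omega)
    omega
  have crE' : ∀ z ∈ Z, ∀ w ∈ Z, a z < a w → a w < r z → r z < r w → CrI a' e z w := by
    intro z hz w hw h1 h2 h3
    left
    exact ⟨H3 (a z) (a w) 0 0 h0M h1, H3 (a w) (r z) 0 _ h0M h2, H3 _ _ _ _ (hcM z) h3⟩
  have Ce : NoClq a' e Z k := by
    intro T hT hcl
    apply common T hT
    · intro u hu v hv huv
      rcases hcl u hu v hv huv with ⟨h1, h2, h3⟩ | ⟨h1, h2, h3⟩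
      · have h4 := crE u (hT u hu) v (hT v hv) h1 h2 h3
        have := r1 u (hT u hu)
        left; omega
      · have h4 := crE v (hT v hv) u (hT u hu) h1 h2 h3
        have := r1 v (hT v hv)
        right; omega
    · intro hne
      obtain ⟨z, hz, hmin⟩ := Finset.exists_min_image T e hne
      refine ⟨r z, (r1 z (hT z hz)).1, fun w hw => ?_⟩
      by_cases hzw : z = w
      · subst hzw; exact (r1 z (hT z hz)).2
      · rcases hcl z hz w hw hzw with ⟨h1, h2, h3⟩ | ⟨h1, h2, h3⟩
        · have h4 := crE z (hT z hz) w (hT w hw) h1 h2 h3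
          have := r1 w (hT w hw)
          omega
        · have := hmin w hw
          omega
  obtain ⟨ψ, hψ⟩ := hN V a' e Z Ge Ce
  let g : ℕ → Set ℕ := fun t => {p | p ∈ P ∧ p ≤ t}
  have gm : ∀ p q, p ≤ q → g p ⊆ g q := fun p q h x hx => ⟨hx.1, hx.2.trans h⟩
  have hκ : ∀ i : Fin N, ∃ κ : Set ℕ → Fin 13, ∀ z ∈ Z, ψ z = i → κ (g (a z)) ≠ κ (g (r z)) := by
    intro i
    obtain ⟨κ, hκ⟩ := pl_color (ι := {z : V // z ∈ Z ∧ ψ z = i}) (fun z => a z) (fun z => r z) g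
      (fun z => (r1 z z.2.1).2.1) (by
        rintro ⟨z, hz, hzi⟩ ⟨w, hw, hwi⟩ h1 h2 h3
        exact hψ z hz w hw (crE' z hz w hw h1 h2 h3) (hzi.trans hwi.symm)) (by
        intro p q p' q' h1 h2 h3 h4 h5
        apply Set.Subset.antisymm (gm _ _ h1.le)
        rw [h4]
        exact gm _ _ h2.le)
    refine ⟨κ, fun z hz hi => hκ ⟨z, hz, hi⟩ ?_⟩
    intro h
    have h1 : r z ∈ g (r z) := ⟨(r1 z hz).1, le_rfl⟩
    rw [← h] at h1
    have h2 : r z ≤ a z := h1.2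
    have := (r1 z hz).2.1
    omega
  choose κ hκ using hκ
  let φ : V → Fin 13 × Fin 13 := fun z => (κ (ψ z) (g (a z)), κ (ψ z) (g (r z)))
  have share : ∀ z ∈ Z, ∀ w ∈ Z, ψ z = ψ w → φ z = φ w → a z < a w → a w < b z →
      ∃ p ∈ P, a w < p ∧ p < b z := by
    intro z hz w hw h1 h2 h3 h4
    by_contra hcon
    push Not at hcon
    obtain ⟨q1, q2, q3⟩ := r1 z hz
    have hlt : r z < a w := by
      have := anep z hz w hw
      by_contra h
      have := hcon (r z) q1 (by omega)
      omega
    have hg : g (a w) = g (r z) := by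
      apply Set.Subset.antisymm _ (gm _ _ hlt.le)
      rintro p ⟨hp, hpl⟩
      refine ⟨hp, ?_⟩
      by_contra h
      have := r2 z p hp (by omega) (by omega)
      omega
    have e1 : κ (ψ z) (g (a z)) = κ (ψ w) (g (a w)) := congrArg Prod.fst h2
    rw [← h1, hg] at e1
    exact hκ (ψ z) z hz rfl e1
  have h3 : ∀ i : Fin N × (Fin 13 × Fin 13), ∃ c : V → Fin N, ∀ u ∈ Z, ∀ v ∈ Z,
      (ψ u, φ u) = i → (ψ v, φ v) = i → CrI a b u v → c u ≠ c v := by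
    intro i
    have hsub : ∀ u ∈ {u | u ∈ Z ∧ (ψ u, φ u) = i}, u ∈ S := fun u hu => hZ u hu.1
    obtain ⟨c, hc⟩ := hN V a b {u | u ∈ Z ∧ (ψ u, φ u) = i} (hG.mono hsub) (by
      intro T hT hcl
      apply common T (fun u hu => (hT u hu).1) hcl
      intro hne
      obtain ⟨z, hz, hmin⟩ := Finset.exists_min_image T b hne
      obtain ⟨w, hw, hmax⟩ := Finset.exists_max_image T a hne
      have : ∃ p ∈ P, a w < p ∧ p < b z := by
        by_cases hzw : z = w
        · subst hzw; exact haspin z (hT z hz).1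
        · have e0 := (hT z hz).2.trans (hT w hw).2.symm
          have e1 : ψ z = ψ w := congrArg Prod.fst e0
          have e2 : φ z = φ w := congrArg Prod.snd e0
          rcases hcl z hz w hw hzw with ⟨h1, h2, h3⟩ | ⟨h1, h2, h3⟩
          · exact share z (hT z hz).1 w (hT w hw).1 e1 e2 h1 h2
          · have := hmin w hw
            omega
      obtain ⟨p, hp, h1, h2⟩ := this
      exact ⟨p, hp, fun u hu => ⟨(hmax u hu).trans_lt h1, h2.trans_le (hmin u hu)⟩⟩)
    exact ⟨c, fun u hu v hv h1 h2 h => hc u ⟨hu, h1⟩ v ⟨hv, h2⟩ h⟩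
  choose c hc using h3
  refine ⟨fun v => (ψ v, φ v, c (ψ v, φ v) v), fun u hu v hv h heq => ?_⟩
  simp only [Prod.mk.injEq] at heq
  obtain ⟨e1, e2, e3⟩ := heq
  rw [← e1, ← e2] at e3
  exact hc (ψ u, φ u) u hu v hv rfl (by rw [e1, e2]) h e3

theorem dist_pred {V : Type} (G : SimpleGraph V) (x v : V) (h : G.Reachable v x)
    (h0 : G.dist v x ≠ 0) : ∃ w, G.Adj v w ∧ G.dist w x + 1 = G.dist v x := by
  obtain ⟨p, hp⟩ := h.exists_walk_length_eq_dist
  cases p with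
  | nil => simp at h0
  | cons h q =>
    rename_i w
    refine ⟨w, h, ?_⟩
    simp only [SimpleGraph.Walk.length_cons] at hp
    have h1 := SimpleGraph.dist_le q
    have h2 := h.diff_dist_adj (u := x)
    rw [SimpleGraph.dist_comm (u := x), SimpleGraph.dist_comm (u := x)] at h2
    omega

theorem layering {V : Type} [Finite V] (G : SimpleGraph V) (a : V → ℕ) :
    ∃ (ρ : V → V) (d : V → ℕ), (∀ u v, G.Adj u v → ρ u = ρ v) ∧
      (∀ u v, G.Adj u v → d u ≤ d v + 1) ∧
      (∀ v, d v ≠ 0 → ∃ u, G.Adj u v ∧ d u + 1 = d v) ∧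
      (∀ v, d v = 0 → v = ρ v) ∧ (∀ v, a (ρ v) ≤ a v) := by
  classical
  have h1 : ∀ C : G.ConnectedComponent, ∃ x ∈ C.supp, ∀ y ∈ C.supp, a x ≤ a y := by
    intro C
    exact Set.exists_min_image C.supp a (Set.toFinite _) C.nonempty_supp
  choose f hf1 hf2 using h1
  let ρ : V → V := fun v => f (G.connectedComponentMk v)
  have hre : ∀ v, G.Reachable (ρ v) v := fun v =>
    SimpleGraph.ConnectedComponent.exact (hf1 (G.connectedComponentMk v))
  have hρ : ∀ u v, G.Adj u v → ρ u = ρ v := by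
    intro u v h
    simp only [ρ]
    rw [SimpleGraph.ConnectedComponent.sound h.reachable]
  refine ⟨ρ, fun v => G.dist (ρ v) v, hρ, ?_, ?_, ?_, ?_⟩
  · intro u v h
    have := hρ u v h
    simp only [this]
    have h2 := h.diff_dist_adj (u := ρ v)
    omega
  · intro v hv
    obtain ⟨w, hw, hd⟩ := dist_pred G (ρ v) v (hre v).symm (by rwa [SimpleGraph.dist_comm])
    refine ⟨w, hw.symm, ?_⟩
    change G.dist (ρ w) w + 1 = G.dist (ρ v) v
    rw [← hρ v w hw, SimpleGraph.dist_comm, hd, SimpleGraph.dist_comm]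
  · intro v hv
    exact ((hre v).dist_eq_zero_iff.1 hv).symm
  · intro v
    exact hf2 _ v rfl

theorem colB_step {k N : ℕ} (hN : ColB k N) : ∃ N', ColB (k + 1) N' := by
  classical
  refine ⟨Fintype.card (Bool × (Fin N × (Fin 13 × Fin 13) × Fin N)), ?_⟩
  intro V _ a b S hG hC
  let G : SimpleGraph V :=
    { Adj := fun u v => u ∈ S ∧ v ∈ S ∧ CrI a b u v
      symm := ⟨fun u v h => ⟨h.2.1, h.1, h.2.2.symm⟩⟩
      loopless := ⟨fun u h => by rcases h.2.2 with h | h <;> omega⟩ }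
  obtain ⟨ρ, d, d1, d2, d3, d4, d5⟩ := layering G a
  have nin : ∀ n, ∀ w ∈ S, ∀ y ∈ S, ρ y = ρ w → d y = n → n < d w →
      a w < a y → b y < b w → False := by
    intro n
    induction n with
    | zero =>
      intro w hw y hy e1 e2 _ h1 h2
      have h3 := d5 w
      rw [← e1, ← d4 y e2] at h3
      omega
    | succ n ih =>
      intro w hw y hy e1 e2 hlt h1 h2
      obtain ⟨u, hu, hud⟩ := d3 y (by omega)
      have hu' := hu
      obtain ⟨huS, _, hc⟩ := hu
      have hwu : ¬ CrI a b w u := by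
        intro h
        have := d2 w u ⟨hw, huS, h⟩
        omega
      have hin := ih w hw u huS ((d1 u y hu').trans e1) (by omega) (by omega)
      have hne : u ≠ w := by rintro rfl; omega
      have n1 : a u ≠ a w := fun h => hne (hG.2.2.1 u huS w hw h)
      have n2 : b u ≠ b w := fun h => hne (hG.2.2.2 u huS w hw h)
      have l1 := hG.1 u huS
      have l2 := hG.1 w hw
      have l3 := hG.1 y hy
      have hwu' : ¬ ((a w < a u ∧ a u < b w ∧ b w < b u) ∨ (a u < a w ∧ a w < b u ∧ b u < b w)) := hwu
      have hin' : ¬ (a w < a u ∧ b u < b w) := fun h => hin h.1 h.2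
      rcases hc with hc | hc <;> omega
  have hL : ∀ (x : V) (j : ℕ), ∃ c : V → Fin N × (Fin 13 × Fin 13) × Fin N,
      ∀ u v, G.Adj u v → ρ u = x → ρ v = x → d u = j + 1 → d v = j + 1 → c u ≠ c v := by
    intro x j
    obtain ⟨c, hc⟩ := layer_color hN a b S {y | y ∈ S ∧ ρ y = x ∧ d y = j}
      {z | z ∈ S ∧ ρ z = x ∧ d z = j + 1} hG hC (fun y hy => hy.1) (fun y hy => hy.1)
      (by
        intro z hz hz'
        have h1 := hz.2.2
        have h2 := hz'.2.2
        omega)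
      (by
        rintro z ⟨hz, e1, e2⟩
        obtain ⟨u, hu, hud⟩ := d3 z (by omega)
        exact ⟨u, ⟨hu.1, (d1 u z hu).trans e1, by omega⟩, hu.2.2⟩)
      (by
        rintro z ⟨hz, e1, e2⟩ y ⟨hy, e3, e4⟩
        exact nin j z hz y hy (e3.trans e1.symm) e4 (by omega))
    exact ⟨c, fun u v h h1 h2 h3 h4 => hc u ⟨h.1, h1, h3⟩ v ⟨h.2.1, h2, h4⟩ h.2.2⟩
  choose c hc using hL
  let C : V → Bool × (Fin N × (Fin 13 × Fin 13) × Fin N) :=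
    fun v => (decide (d v % 2 = 0), c (ρ v) (d v - 1) v)
  refine ⟨fun v => Fintype.equivFin _ (C v), fun u hu v hv h heq => ?_⟩
  have heq := (Fintype.equivFin _).injective heq
  have hadj : G.Adj u v := ⟨hu, hv, h⟩
  simp only [C, Prod.mk.injEq, decide_eq_decide] at heq
  have g1 := d1 u v hadj
  have g2 := d2 u v hadj
  have g3 := d2 v u hadj.symm
  have g4 : d u = d v := by omega
  have g5 : d v ≠ 0 := by
    intro h0
    have e1 := d4 u (by omega)
    have e2 := d4 v h0
    exact hadj.ne (by rw [e1, e2, g1])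
  have e3 := heq.2
  rw [g1, g4] at e3
  exact hc (ρ v) (d v - 1) u v hadj g1 rfl (by omega) (by omega) e3

theorem colB_all (k : ℕ) : ∃ N, ColB k N := by
  induction k with
  | zero =>
    refine ⟨1, ?_⟩
    intro V _ a b S _ hC
    refine ⟨fun _ => 0, fun u hu v hv h => ?_⟩
    have := hC {u} (by simpa using hu) (by simp)
    simp at this
  | succ k ih =>
    obtain ⟨N, hN⟩ := ih
    exact colB_step hN

/-- The set of members of `J` whose interval contains `t`. -/
noncomputable def regI {V : Type} (a b : V → ℕ) (J : Finset V) (t : ℕ) : Finset V :=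
  open Classical in J.filter (fun u => a u < t ∧ t < b u)

theorem mem_regI {V : Type} {a b : V → ℕ} {J : Finset V} {t : ℕ} {u : V} :
    u ∈ regI a b J t ↔ u ∈ J ∧ a u < t ∧ t < b u := by
  classical
  simp [regI]

theorem regI_nc {V : Type} (a b : V → ℕ) (J : Finset V) (p q p' q' : ℕ)
    (h1 : p < q) (h2 : q < p') (h3 : p' < q') (e1 : regI a b J p = regI a b J p')
    (e2 : regI a b J q = regI a b J q') : regI a b J p = regI a b J q := by
  ext u
  constructor
  · intro h
    have h' := h
    rw [e1] at h'
    rw [mem_regI] at *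
    exact ⟨h.1, by omega, by omega⟩
  · intro h
    have h' := h
    rw [e2] at h'
    rw [e1]
    rw [mem_regI] at *
    exact ⟨h.1, by omega, by omega⟩

theorem zmod2_self (x : ZMod 2) : x + x = 0 := CharTwo.add_self_eq_zero x

open Classical in
theorem regI_tele {V : Type} (a b : V → ℕ) (J : Finset V) (hinj : ∀ u v, a u = a v → u = v)
    (hJ : ∀ u ∈ J, ∀ v ∈ J, ¬ CrI a b u v) (hne : ∀ u v, b u = b v → u = v)
    (h : Finset V → ZMod 2) : ∀ n t, (regI a b J t).card = n →
    h (regI a b J t) = h ∅ + ∑ u ∈ regI a b J t,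
      (h (regI a b J (a u)) + h (insert u (regI a b J (a u)))) := by
  intro n
  induction n with
  | zero =>
    intro t ht
    rw [Finset.card_eq_zero] at ht
    simp [ht]
  | succ n ih =>
    intro t ht
    obtain ⟨u, hu, hmax⟩ := Finset.exists_max_image (regI a b J t) a
      (Finset.card_pos.1 (by omega))
    have hn : u ∉ regI a b J (a u) := by rw [mem_regI]; omega
    have hr : regI a b J t = insert u (regI a b J (a u)) := by
      ext w
      rw [Finset.mem_insert]
      constructor
      · intro hw
        by_cases hwu : w = u
        · exact Or.inl hwu
        · right
          have h1 := hmax w hw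
          have h2 : a w ≠ a u := fun h => hwu (hinj _ _ h)
          rw [mem_regI] at *
          exact ⟨hw.1, by omega, by omega⟩
      · rintro (rfl | hw)
        · exact hu
        · rw [mem_regI] at *
          refine ⟨hw.1, by omega, ?_⟩
          by_contra hb
          exact hJ w hw.1 u hu.1 (Or.inl ⟨by omega, by omega, by omega⟩)
    have hc : (regI a b J (a u)).card = n := by
      rw [hr, Finset.card_insert_of_notMem hn] at ht
      omega
    have := ih (a u) hc
    rw [hr, Finset.sum_insert hn]
    have h2 : h ∅ + (h (regI a b J (a u)) + h (insert u (regI a b J (a u))) +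
        ∑ u ∈ regI a b J (a u), (h (regI a b J (a u)) + h (insert u (regI a b J (a u))))) =
        h (insert u (regI a b J (a u))) + (h (regI a b J (a u)) + (h ∅ +
        ∑ u ∈ regI a b J (a u), (h (regI a b J (a u)) + h (insert u (regI a b J (a u)))))) := by
      ring
    rw [h2, ← this, zmod2_self, add_zero]

open Classical in
theorem regI_sum {V : Type} (a b : V → ℕ) (J : Finset V)
    (hinj : ∀ u v, a u = a v → u = v)
    (hne : ∀ u v, b u = b v → u = v) (hab : ∀ u v, a u ≠ b v) (hlt : ∀ u, a u < b u)
    (hJ : ∀ u ∈ J, ∀ v ∈ J, ¬ CrI a b u v)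
    (h : Finset V → ZMod 2) (v : V) (hv : v ∉ J) :
    ∑ u ∈ J.filter (fun u => CrI a b v u),
      (h (regI a b J (a u)) + h (insert u (regI a b J (a u)))) =
    h (regI a b J (a v)) + h (regI a b J (b v)) := by
  rw [regI_tele a b J hinj hJ hne h _ (a v) rfl, regI_tele a b J hinj hJ hne h _ (b v) rfl]
  set x : V → ZMod 2 := fun u => h (regI a b J (a u)) + h (insert u (regI a b J (a u))) with hx
  have e : ∀ t, regI a b J t = J.filter (fun u => a u < t ∧ t < b u) := fun t => by
    ext u; simp [mem_regI]
  have key : ∑ u ∈ J.filter (fun u => CrI a b v u), x u =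
      ∑ u ∈ regI a b J (a v), x u + ∑ u ∈ regI a b J (b v), x u := by
    rw [e, e, Finset.sum_filter, Finset.sum_filter, Finset.sum_filter, ← Finset.sum_add_distrib]
    apply Finset.sum_congr rfl
    intro u hu
    have huv : u ≠ v := by rintro rfl; exact hv hu
    have n1 : a u ≠ a v := fun h => huv (hinj _ _ h)
    have n2 : b u ≠ b v := fun h => huv (hne _ _ h)
    have n3 := hab u v
    have n4 := hab v u
    have n5 := hlt u
    have n6 := hlt v
    by_cases h1 : a u < a v ∧ a v < b u <;> by_cases h2 : a u < b v ∧ b v < b u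
    · rw [if_pos h1, if_pos h2, zmod2_self, if_neg]
      unfold CrI; omega
    · rw [if_pos h1, if_neg h2, if_pos, add_zero]
      unfold CrI; omega
    · rw [if_neg h1, if_pos h2, if_pos, zero_add]
      unfold CrI; omega
    · rw [if_neg h1, if_neg h2, if_neg, add_zero]
      unfold CrI; omega
  change ∑ u ∈ J.filter (fun u => CrI a b v u), x u =
    h ∅ + ∑ u ∈ regI a b J (a v), x u + (h ∅ + ∑ u ∈ regI a b J (b v), x u)
  rw [key]
  have := zmod2_self (h ∅)
  linear_combination -this

theorem odd_of_sum {V K : Type} [Fintype V] [Fintype K] [DecidableEq K] (N : Finset V) (d : V → K)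
    (g : K → ZMod 2) (hs : ∑ u ∈ N, g (d u) ≠ 0) :
    ∃ i, Odd (N.filter (fun u => d u = i)).card := by
  by_contra hcon
  push Not at hcon
  apply hs
  rw [← Finset.sum_fiberwise_of_maps_to (s := N) (t := Finset.univ) (g := d)
    (fun _ _ => Finset.mem_univ _)]
  apply Finset.sum_eq_zero
  intro i _
  rw [Finset.sum_congr rfl (g := fun _ => g i)
    (fun u hu => by rw [(Finset.mem_filter.1 hu).2]), Finset.sum_const, nsmul_eq_mul]
  have h := hcon i
  rw [Nat.not_odd_iff_even] at h
  rw [(ZMod.natCast_eq_zero_iff_even).2 h, zero_mul]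

theorem odd_main {V : Type} [Fintype V] (a b : V → ℕ)
    (hinj : ∀ u v, a u = a v → u = v)
    (hne : ∀ u v, b u = b v → u = v) (hab : ∀ u v, a u ≠ b v) (hlt : ∀ u, a u < b u)
    {N : ℕ} (c : V → Fin N) (hc : ∀ u v, CrI a b u v → c u ≠ c v) :
    ∃ D : V → Fin N × (Fin N → Fin 13 × Fin 13), (∀ u v, CrI a b u v → D u ≠ D v) ∧
      ∀ v, (∃ u, CrI a b v u) → ∃ i, Odd {u | CrI a b v u ∧ D u = i}.ncard := by
  classical
  let J : Fin N → Finset V := fun j => Finset.univ.filter (fun u => c u = j)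
  have hJ : ∀ j, ∀ u ∈ J j, ∀ v ∈ J j, ¬ CrI a b u v := by
    intro j u hu v hv h
    simp only [J, Finset.mem_filter, Finset.mem_univ, true_and] at hu hv
    exact hc u v h (hu.trans hv.symm)
  have hq : ∀ i j, ∃ q : Finset V → Fin 13, ∀ v, c v = i →
      regI a b (J j) (a v) ≠ regI a b (J j) (b v) →
      q (regI a b (J j) (a v)) ≠ q (regI a b (J j) (b v)) := by
    intro i j
    obtain ⟨q, hq⟩ := pl_color (ι := {v : V // c v = i}) (fun v => a v) (fun v => b v)
      (regI a b (J j)) (fun v => hlt v)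
      (fun u v h1 h2 h3 => hc u v (Or.inl ⟨h1, h2, h3⟩) (u.2.trans v.2.symm))
      (regI_nc a b (J j))
    exact ⟨q, fun v hv => hq ⟨v, hv⟩⟩
  choose q hq using hq
  let D : V → Fin N × (Fin N → Fin 13 × Fin 13) := fun u =>
    (c u, fun i => (q i (c u) (regI a b (J (c u)) (a u)),
      q i (c u) (insert u (regI a b (J (c u)) (a u)))))
  refine ⟨D, fun u v h he => hc u v h (congrArg Prod.fst he), ?_⟩
  rintro v ⟨u0, hu0⟩
  let i := c v
  let j := c u0
  have hvJ : v ∉ J j := by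
    simp only [J, Finset.mem_filter, Finset.mem_univ, true_and]
    exact hc v u0 hu0
  have huJ : u0 ∈ J j := by simp [J, j]
  let h0 : Fin 13 → ZMod 2 := fun x => if x = q i j (regI a b (J j) (a v)) then 1 else 0
  let g : Fin N × (Fin N → Fin 13 × Fin 13) → ZMod 2 := fun e =>
    if e.1 = j then h0 (e.2 i).1 + h0 (e.2 i).2 else 0
  have hr : regI a b (J j) (a v) ≠ regI a b (J j) (b v) := by
    intro h
    have h1 : u0 ∈ regI a b (J j) (a v) ↔ u0 ∈ regI a b (J j) (b v) := by rw [h]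
    rw [mem_regI, mem_regI] at h1
    simp only [huJ, true_and] at h1
    have := hlt v
    rcases hu0 with hu0 | hu0 <;> omega
  have hs : ∑ u ∈ Finset.univ.filter (fun u => CrI a b v u), g (D u) = 1 := by
    have e1 := regI_sum a b (J j) hinj hne hab hlt (hJ j) (fun s => h0 (q i j s)) v hvJ
    have e2 : h0 (q i j (regI a b (J j) (a v))) + h0 (q i j (regI a b (J j) (b v))) = 1 := by
      have := hq i j v rfl hr
      simp only [h0]
      rw [if_pos trivial, if_neg (Ne.symm this), add_zero]
    rw [← e2, ← e1]
    simp only [J]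
    rw [Finset.sum_filter, Finset.sum_filter, Finset.sum_filter]
    apply Finset.sum_congr rfl
    intro u _
    by_cases hu : c u = j
    · simp only [g, D, hu, if_true, J]
    · simp only [g, D, hu, if_false, ite_self]
  obtain ⟨k, hk⟩ := odd_of_sum _ D g (by rw [hs]; exact one_ne_zero)
  refine ⟨k, ?_⟩
  rw [Finset.filter_filter] at hk
  rw [← Set.ncard_coe_finset] at hk
  simpa using hk

/-- The class of circle graphs is `χ_o`-bounded. -/
theorem circle_graphs_odd_chi_bounded :
    ∃ f : ℕ → ℕ, ∀ (V : Type) [Fintype V] (G : SimpleGraph V),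
      IsCircleGraph G → HasOddColoring G (f (cliqueNum G)) := by
  classical
  choose N hN using colB_all
  refine ⟨fun k => Fintype.card (Fin (N k) × (Fin (N k) → Fin 13 × Fin 13)), ?_⟩
  intro V _ G hG
  obtain ⟨n, a, b, h1, h2, h3⟩ := hG
  have hinj : ∀ u v, a u = a v → u = v := fun u v h =>
    Sum.inl_injective (@h2 (Sum.inl u) (Sum.inl v) h)
  have hne : ∀ u v, b u = b v → u = v := fun u v h =>
    Sum.inr_injective (@h2 (Sum.inr u) (Sum.inr v) h)
  have hab : ∀ u v, a u ≠ b v := fun u v h => by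
    have := @h2 (Sum.inl u) (Sum.inr v) h
    simp at this
  have hlt : ∀ u, a u < b u := fun u => (h1 u).2.1
  have hcl : NoClq a b Set.univ (cliqueNum G) := by
    intro T _ hT
    apply le_csSup
    · refine ⟨Fintype.card V, ?_⟩
      rintro m ⟨s, hs⟩
      rw [← hs.card_eq]
      exact Finset.card_le_univ s
    · refine ⟨T, ?_, rfl⟩
      intro u hu v hv huv
      exact (h3 u v).2 (hT u hu v hv huv)
  obtain ⟨c, hc⟩ := hN (cliqueNum G) V a b Set.univ
    ⟨fun u _ => hlt u, fun u _ v _ => hab u v, fun u _ v _ => hinj u v, fun u _ v _ => hne u v⟩ hcl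
  obtain ⟨D, hD1, hD2⟩ := odd_main a b hinj hne hab hlt c
    (fun u v h => hc u trivial v trivial h)
  refine ⟨fun v => Fintype.equivFin _ (D v), fun u v h he => ?_, ?_⟩
  · exact hD1 u v ((h3 u v).1 h) ((Fintype.equivFin _).injective he)
  · rintro v ⟨u, hu⟩
    obtain ⟨i, hi⟩ := hD2 v ⟨u, (h3 v u).1 hu⟩
    refine ⟨Fintype.equivFin _ i, ?_⟩
    have : {u | u ∈ G.neighborSet v ∧ Fintype.equivFin _ (D u) = Fintype.equivFin _ i} =
        {u | CrI a b v u ∧ D u = i} := by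
      ext w
      simp only [Set.mem_ofPred_eq, SimpleGraph.mem_neighborSet, EmbeddingLike.apply_eq_iff_eq]
      rw [h3]
      rfl
    rw [this]
    exact hi
end
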